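/- arXiv:2602.04671 — 3 statements merged into one kernel-verified Lean document; each statement's English description precedes it below -/
import Mathlib

section
/- Homogeneous Frobenius theorem (even case, at a zero of ∇): let ∇(x) = (w₁x₁,…,wₙxₙ) on ℝⁿ, let U ⊆ ℝⁿ be open, and let V₁,…,V_k be smooth vector fields on U, linearly independent at every point, each homogeneous with respect to ∇ (i.e., [∇, Vᵢ] = cᵢ·Vᵢ with cᵢ ∈ ℝ), and spanning an involutive distribution: [Vᵢ, Vⱼ](y) ∈ span{V₁(y),…,V_k(y)} for all y ∈ U and all i,j. Let x₀ ∈ U with ∇(x₀) = 0. Then there exist an open neighbourhood V of x₀, reals λ₁,…,λₙ, and smooth functions x¹,…,xⁿ on V with everywhere linearly independent differentials, each homogeneous (Σⱼ wⱼ yⱼ ∂ⱼxᵃ = λₐ·xᵃ on V), such that Dxʲ(y)(Vᵢ(y)) = 0 for all y ∈ V, 1 ≤ i ≤ k and k < j ≤ n, and the k×k matrix (Dxʲ(y)(Vᵢ(y)))_{1≤i,j≤k} is invertible for every y ∈ V; that is, in the homogeneous coordinates (xᵃ) the distribution spanned by V₁,…,V_k equals the span of ∂/∂x¹,…,∂/∂x^k.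 -/
/-! Let `X(p)` be the projection onto the distribution at `p` along a fixed `∇`-invariant complement
of the distribution at `x₀`, spanned by eigenvectors of `∇`. Involutivity becomes the symmetry of
`(v, w) ↦ DX(p)(X(p) v) w`, and homogeneity becomes the vanishing of the Lie derivative of `X`
along `∇`. Following for unit time the field `z ↦ -X(z)(y - x₀)` from `z = y` slides `y` along its
leaf to a point `π(y)` of the transversal through `x₀`. Both symmetries of `X` provide explicit
solutions of the linearized equation, which show that `Dπ(y)` kills the distribution and that `π`
commutes with `∇`. The map `Φ(y) = X(x₀) y + (1 - X(x₀)) π(y)` then straightens the distribution,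
and its components in a basis of eigenvectors of `∇` are the coordinates.

The smooth dependence of `π(y)` on `y`, with its linearized equation, comes from the implicit
function theorem for the integral equation in the Banach space of curves. -/

open Set Filter Topology

section ContinuousMapEvaluation

variable {K : Type*} [TopologicalSpace K] [CompactSpace K]

theorem eventually_forall_prodMk_apply_mem [LocallyCompactSpace K] {P E : Type*}
    [TopologicalSpace P] [TopologicalSpace E] {Γ : P → C(K, E)} {p₀ : P} (hΓ : ContinuousAt Γ p₀)
    {N : Set (P × E)} (hN : ∀ s, N ∈ 𝓝 (p₀, Γ p₀ s)) : ∀ᶠ p in 𝓝 p₀, ∀ s, (p, Γ p s) ∈ N := by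
  have hcont (s : K) : ContinuousAt (fun z : P × K ↦ (z.1, Γ z.1 z.2)) (p₀, s) :=
    continuousAt_fst.prodMk ((ContinuousAt.comp (x := (p₀, s)) hΓ continuousAt_fst).eval
      continuousAt_snd)
  have hall := isCompact_univ.eventually_forall_of_forall_eventually (x₀ := p₀)
    (P := fun p s ↦ (p, Γ p s) ∈ N) fun s _ ↦ (hcont s).preimage_mem_nhds (hN s)
  simpa using hall

variable {P E : Type*} [NormedAddCommGroup P] [NormedSpace ℝ P]
  [NormedAddCommGroup E] [NormedSpace ℝ E] {Γ : P → C(K, E)} {p : P}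

theorem contDiffAt_continuousMap_apply {m : WithTop ℕ∞} (hΓ : ContDiffAt ℝ m Γ p) (s : K) :
    ContDiffAt ℝ m (fun p ↦ Γ p s) p := by
  have heval : ContDiff ℝ m (ContinuousMap.evalCLM ℝ s : C(K, E) → E) := by fun_prop
  exact heval.contDiffAt.comp p hΓ

theorem fderiv_continuousMap_apply (hΓ : DifferentiableAt ℝ Γ p) (s : K) (v : P) :
    fderiv ℝ (fun p ↦ Γ p s) p v = fderiv ℝ Γ p v s := by
  have heval : HasFDerivAt (ContinuousMap.evalCLM ℝ s : C(K, E) → E)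
      (ContinuousMap.evalCLM ℝ s) (Γ p) := ContinuousLinearMap.hasFDerivAt _
  exact congr($((heval.comp p hΓ.hasFDerivAt).fderiv) v)

end ContinuousMapEvaluation

section Superposition

theorem norm_comp_const_sub_le {K : Type*} [TopologicalSpace K] [CompactSpace K]
    {E F : Type*} [NormedAddCommGroup E] [NormedAddCommGroup F] (f : C(E, F)) {u : C(K, E)}
    {δ c : ℝ} (h : ∀ v, dist v u < δ → dist (f.comp v) (f.comp u) < c) (s : K) {z : E}
    (hz : z ∈ Metric.ball (u s) δ) : ‖f z - f (u s)‖ ≤ c := by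
  have hshift : dist (u + ContinuousMap.const K (z - u s)) u < δ := by
    rw [dist_self_add_left]
    refine ((ContinuousMap.norm_le _ (norm_nonneg (z - u s))).2 fun t ↦ le_rfl).trans_lt ?_
    rwa [← dist_eq_norm]
  simpa [dist_eq_norm] using (ContinuousMap.dist_apply_le_dist s).trans (h _ hshift).le

variable {K : Type*} [TopologicalSpace K] [CompactSpace K]

section Derivative

variable {E F : Type*} [NormedAddCommGroup E] [NormedSpace ℝ E] [NormedAddCommGroup F]
  [NormedSpace ℝ F]

/-- The application of a continuous family of operators to a continuous family of vectors, as a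
bounded bilinear map; it expresses the derivative of a superposition operator `u ↦ f ∘ u`. -/
noncomputable def pointwiseApply :
    C(K, E →L[ℝ] F) →L[ℝ] C(K, E) →L[ℝ] C(K, F) :=
  LinearMap.mkContinuous₂
    (LinearMap.mk₂ ℝ (fun (a : C(K, E →L[ℝ] F)) (b : C(K, E)) ↦
        (⟨fun s ↦ a s (b s), by fun_prop⟩ : C(K, F)))
      (fun _ _ _ ↦ rfl) (fun _ _ _ ↦ rfl)
      (fun _ _ _ ↦ by ext; simp) (fun _ _ _ ↦ by ext; simp))
    1 fun a b ↦ by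
      rw [one_mul]
      exact (ContinuousMap.norm_le _ (by positivity)).2 fun s ↦
        (a s).le_of_opNorm_le_of_le (a.norm_coe_le_norm s) (b.norm_coe_le_norm s)

theorem hasFDerivAt_continuousMap_comp {f : C(E, F)} {f' : C(E, E →L[ℝ] F)}
    (hf : ∀ x, HasFDerivAt f (f' x) x) (u : C(K, E)) :
    HasFDerivAt (fun v : C(K, E) ↦ f.comp v) (pointwiseApply (f'.comp u)) u := by
  rw [hasFDerivAt_iff_isLittleO_nhds_zero, Asymptotics.isLittleO_iff]
  intro c hc
  obtain ⟨δ, hδ, hclose⟩ : ∃ δ > 0, ∀ v, dist v u < δ → dist (f'.comp v) (f'.comp u) < c :=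
    Metric.continuous_iff.1 f'.continuous_postcomp u c hc
  filter_upwards [Metric.ball_mem_nhds 0 hδ] with g hg
  refine (ContinuousMap.norm_le _ (by positivity)).2 fun s ↦ ?_
  have hgs : u s + g s ∈ Metric.ball (u s) δ := by
    rw [mem_ball_iff_norm, add_sub_cancel_left]
    exact (g.norm_coe_le_norm s).trans_lt (mem_ball_zero_iff.1 hg)
  have hmean := (convex_ball (u s) δ).norm_image_sub_le_of_norm_hasFDerivWithin_le'
    (φ := f' (u s)) (fun z _ ↦ (hf z).hasFDerivWithinAt)
    (fun z hz ↦ norm_comp_const_sub_le f' hclose s hz)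
    (Metric.mem_ball_self hδ) hgs
  calc ‖f (u s + g s) - f (u s) - f' (u s) (g s)‖ ≤ c * ‖g s‖ := by
        simpa only [add_sub_cancel_left] using hmean
    _ ≤ c * ‖g‖ := by gcongr; exact g.norm_coe_le_norm s

end Derivative

universe u

variable {E F : Type u} [NormedAddCommGroup E] [NormedSpace ℝ E] [NormedAddCommGroup F]
  [NormedSpace ℝ F]

theorem contDiff_nat_continuousMap_comp {m : ℕ} {f : C(E, F)} (hf : ContDiff ℝ m f) :
    ContDiff ℝ m (fun u : C(K, E) ↦ f.comp u) := by
  induction m generalizing F with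
  | zero => exact contDiff_zero.2 f.continuous_postcomp
  | succ m ih =>
    push_cast at hf ⊢
    obtain ⟨f', hf'm, hf'⟩ := contDiff_succ_iff_hasFDerivAt.1 hf
    let f'c : C(E, E →L[ℝ] F) := ⟨f', hf'm.continuous⟩
    have happly : ContDiff ℝ m (pointwiseApply : C(K, E →L[ℝ] F) → C(K, E) →L[ℝ] C(K, F)) := by
      fun_prop
    exact contDiff_succ_iff_hasFDerivAt.2 ⟨fun u ↦ pointwiseApply (f'c.comp u),
      happly.comp (ih (f := f'c) hf'm),
      hasFDerivAt_continuousMap_comp (f' := f'c) hf'⟩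

theorem contDiff_continuousMap_comp {m : ℕ∞} {f : C(E, F)} (hf : ContDiff ℝ m f) :
    ContDiff ℝ m (fun u : C(K, E) ↦ f.comp u) :=
  contDiff_iff_forall_nat_le.2 fun _ hj ↦
    contDiff_nat_continuousMap_comp (hf.of_le (by exact_mod_cast hj))

end Superposition

section Primitive

variable {E : Type*} [NormedAddCommGroup E] [NormedSpace ℝ E]

/-- The integration operator `g ↦ (s ↦ ∫₀ˢ g)` on curves parametrized by `[0, 1]`; the integrand is
extended to `ℝ` by its values at the end points. -/
noncomputable def curvePrimitive : C(unitInterval, E) →L[ℝ] C(unitInterval, E) :=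
  LinearMap.mkContinuous
    { toFun := fun g ↦ ⟨fun s ↦ ∫ t in (0 : ℝ)..s, IccExtend zero_le_one g t,
        (intervalIntegral.continuous_primitive
          (fun a b ↦ (g.continuous.Icc_extend' (h := zero_le_one)).intervalIntegrable a b)
          0).comp continuous_subtype_val⟩
      map_add' := fun g₁ g₂ ↦ by
        ext s
        exact intervalIntegral.integral_add
          ((g₁.continuous.Icc_extend' (h := zero_le_one)).intervalIntegrable 0 s)
          ((g₂.continuous.Icc_extend' (h := zero_le_one)).intervalIntegrable 0 s)
      map_smul' := fun c g ↦ by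
        ext s
        exact intervalIntegral.integral_smul c _ }
    1 fun g ↦ by
      rw [one_mul]
      refine (ContinuousMap.norm_le _ (norm_nonneg g)).2 fun s ↦ ?_
      calc ‖∫ t in (0 : ℝ)..s, IccExtend zero_le_one g t‖ ≤ ‖g‖ * |(s : ℝ) - 0| :=
            intervalIntegral.norm_integral_le_of_norm_le_const fun t _ ↦ g.norm_coe_le_norm _
        _ ≤ ‖g‖ := by
            rw [sub_zero, abs_of_nonneg s.2.1]
            exact mul_le_of_le_one_right (norm_nonneg g) s.2.2

variable [CompleteSpace E]

theorem curvePrimitive_eq_sub_of_hasDerivAt {g : C(unitInterval, E)} {c : ℝ → E}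
    (hc : ∀ s : unitInterval, HasDerivAt c (g s) s) (s : unitInterval) :
    curvePrimitive g s = c s - c 0 := by
  refine intervalIntegral.integral_eq_sub_of_hasDerivAt (fun t ht ↦ ?_)
    (g.continuous.Icc_extend'.intervalIntegrable 0 s)
  rw [uIcc_of_le s.2.1] at ht
  have ht' : t ∈ Icc (0 : ℝ) 1 := ⟨ht.1, ht.2.trans s.2.2⟩
  rw [IccExtend_of_mem _ _ ht']
  exact hc ⟨t, ht'⟩

theorem hasDerivAt_integral_IccExtend (g : C(unitInterval, E)) (s : unitInterval) :
    HasDerivAt (fun t : ℝ ↦ ∫ τ in (0 : ℝ)..t, IccExtend zero_le_one g τ) (g s) s := by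
  have hg : Continuous (IccExtend (zero_le_one' ℝ) g) := g.continuous.Icc_extend'
  simpa using intervalIntegral.integral_hasDerivAt_right (hg.intervalIntegrable 0 (s : ℝ))
    hg.stronglyMeasurable.stronglyMeasurableAtFilter hg.continuousAt

end Primitive

section ImplicitFunction

variable {𝕜 : Type*} [RCLike 𝕜]
  {E₁ E₂ F : Type*} [NormedAddCommGroup E₁] [NormedSpace 𝕜 E₁]
  [NormedAddCommGroup E₂] [NormedSpace 𝕜 E₂] [NormedAddCommGroup F] [NormedSpace 𝕜 F]
  {m : WithTop ℕ∞} {f : E₁ × E₂ → F}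

theorem fderiv_eq_of_eventually_apply_eq {ψ : E₁ → E₂} {x : E₁} {c : F}
    (hf : DifferentiableAt 𝕜 f (x, ψ x)) (hψ : DifferentiableAt 𝕜 ψ x)
    (hc : ∀ᶠ y in 𝓝 x, f (y, ψ y) = c)
    (hinj : Function.Injective (fderiv 𝕜 f (x, ψ x) ∘L .inr 𝕜 E₁ E₂))
    {v : E₁} {w : E₂} (hvw : fderiv 𝕜 f (x, ψ x) (v, w) = 0) : fderiv 𝕜 ψ x v = w := by
  have hgraph : HasFDerivAt (fun y ↦ f (y, ψ y))
      (fderiv 𝕜 f (x, ψ x) ∘L (.prod (.id 𝕜 E₁) (fderiv 𝕜 ψ x))) x :=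
    hf.hasFDerivAt.comp x ((hasFDerivAt_id x).prodMk hψ.hasFDerivAt)
  have hzero := (hgraph.congr_of_eventuallyEq (EventuallyEq.symm hc)).unique (hasFDerivAt_const c x)
  have hψv : fderiv 𝕜 f (x, ψ x) (v, fderiv 𝕜 ψ x v) = 0 := by simpa using congr($hzero v)
  have hdiff : fderiv 𝕜 f (x, ψ x) (0, fderiv 𝕜 ψ x v - w) = 0 := by
    rw [← sub_self v, ← Prod.mk_sub_mk, map_sub, hψv, hvw, sub_zero]
  exact sub_eq_zero.1 ((map_eq_zero_iff _ hinj).1 hdiff)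

variable [CompleteSpace E₁] [CompleteSpace E₂] [CompleteSpace F]

theorem exists_implicitFunction_eventually_contDiffAt (hf : ContDiff 𝕜 m f) (hm : m ≠ 0)
    {u : E₁ × E₂} (hu : (fderiv 𝕜 f u ∘L .inr 𝕜 E₁ E₂).IsInvertible) :
    ∃ ψ : E₁ → E₂, ψ u.1 = u.2 ∧ ∀ᶠ x in 𝓝 u.1, f (x, ψ x) = f u ∧ ContDiffAt 𝕜 m ψ x ∧
      (fderiv 𝕜 f (x, ψ x) ∘L .inr 𝕜 E₁ E₂).IsInvertible := by
  let ψ := hf.contDiffAt.implicitFunction hm hu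
  have hψu : ψ u.1 = u.2 := hf.contDiffAt.implicitFunction_apply_self hm hu
  have hψ_cont : ∀ᶠ x in 𝓝 u.1, ContinuousAt ψ x := by
    have hψ₁ : ContDiffAt 𝕜 1 ψ u.1 := (hf.contDiffAt.contDiffAt_implicitFunction hm hu).of_le
      (ENat.one_le_iff_ne_zero_withTop.2 hm)
    filter_upwards [hψ₁.eventually (by simp)] with x hx using hx.continuousAt
  have hinvertible : ∀ᶠ x in 𝓝 u.1, (fderiv 𝕜 f (x, ψ x) ∘L .inr 𝕜 E₁ E₂).IsInvertible := by
    have hcont : ContinuousAt (fun x ↦ fderiv 𝕜 f (x, ψ x) ∘L .inr 𝕜 E₁ E₂) u.1 := by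
      have hfd : Continuous (fderiv 𝕜 f) := hf.continuous_fderiv hm
      have hψ : ContinuousAt ψ u.1 := hψ_cont.self_of_nhds
      fun_prop
    have hopen : IsOpen {T : E₂ →L[𝕜] F | T.IsInvertible} := ContinuousLinearEquiv.isOpen
    refine hcont.eventually (hopen.mem_nhds ?_)
    simpa only [hψu, Prod.mk.eta, mem_ofPred_eq] using hu
  have hfψ : ∀ᶠ x in 𝓝 u.1, f (x, ψ x) = f u :=
    hf.contDiffAt.eventually_apply_implicitFunction hm hu
  refine ⟨ψ, hψu, ?_⟩
  filter_upwards [hψ_cont, hinvertible, hfψ, hfψ.eventually_nhds] with x hx_cont hx hfx hfx'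
  have hunique : ∀ᶠ y in 𝓝 x, hf.contDiffAt.implicitFunction hm hx y = ψ y := by
    filter_upwards [hfx', (continuousAt_id.prodMk hx_cont).eventually
      (hf.contDiffAt.eventually_apply_eq_iff_implicitFunction hm hx)] with y hfy hy
    exact hy.1 (hfy.trans hfx.symm)
  exact ⟨hfx, (hf.contDiffAt.contDiffAt_implicitFunction hm hx).congr_of_eventuallyEq
    (EventuallyEq.symm hunique), hx⟩

end ImplicitFunction

section IntegralDefect

universe u

variable {P E : Type u} [NormedAddCommGroup P] [NormedSpace ℝ P]
  [NormedAddCommGroup E] [NormedSpace ℝ E]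

/-- The pairing of a parameter with a curve, as a linear map into curves in the product. -/
noncomputable def constProdMk : P × C(unitInterval, E) →L[ℝ] C(unitInterval, P × E) where
  toFun q := (ContinuousMap.const _ q.1).prodMk q.2
  map_add' _ _ := rfl
  map_smul' _ _ := rfl
  cont := ContinuousMap.continuous_of_continuous_uncurry _ <| by
    simp only [Function.uncurry_def, ContinuousMap.prod_eval, ContinuousMap.const_apply]
    fun_prop

@[simp]
theorem constProdMk_apply (q : P × C(unitInterval, E)) (s : unitInterval) :
    constProdMk q s = (q.1, q.2 s) :=
  rfl

/-- The failure of a curve `u` to satisfy the integral form `u(t) = ∫₀ᵗ f(p, u(s)) ds` of the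
initial value problem `u' = f(p, u)`, `u(0) = 0`. -/
noncomputable def integralDefect (f : C(P × E, E)) (q : P × C(unitInterval, E)) :
    C(unitInterval, E) :=
  q.2 - curvePrimitive (f.comp (constProdMk q))

theorem contDiff_integralDefect {m : ℕ∞} {f : C(P × E, E)} (hf : ContDiff ℝ m f) :
    ContDiff ℝ m (integralDefect f) := by
  have hpair : ContDiff ℝ m (constProdMk : P × C(unitInterval, E) → C(unitInterval, P × E)) := by
    fun_prop
  have hprim : ContDiff ℝ m (curvePrimitive : C(unitInterval, E) → C(unitInterval, E)) := by
    fun_prop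
  exact contDiff_snd.sub (hprim.comp ((contDiff_continuousMap_comp hf).comp hpair))

theorem hasFDerivAt_integralDefect {f : C(P × E, E)} {f' : C(P × E, P × E →L[ℝ] E)}
    (hf : ∀ x, HasFDerivAt f (f' x) x) (q : P × C(unitInterval, E)) :
    HasFDerivAt (integralDefect f) (.snd ℝ P C(unitInterval, E) -
      curvePrimitive ∘L pointwiseApply (f'.comp (constProdMk q)) ∘L constProdMk) q := by
  have hpair : HasFDerivAt (constProdMk : P × C(unitInterval, E) → C(unitInterval, P × E))
      constProdMk q := ContinuousLinearMap.hasFDerivAt _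
  have hprim (g : C(unitInterval, E)) : HasFDerivAt
      (curvePrimitive : C(unitInterval, E) → C(unitInterval, E)) curvePrimitive g :=
    ContinuousLinearMap.hasFDerivAt _
  exact hasFDerivAt_snd.sub
    ((hprim _).comp q ((hasFDerivAt_continuousMap_comp hf (constProdMk q)).comp q hpair))

theorem fderiv_integralDefect_apply {f : C(P × E, E)} (hf : ContDiff ℝ 1 f)
    {q r : P × C(unitInterval, E)} {g : C(unitInterval, E)}
    (hg : ∀ s, g s = fderiv ℝ f (q.1, q.2 s) (r.1, r.2 s)) :
    fderiv ℝ (integralDefect f) q r = r.2 - curvePrimitive g := by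
  let f' : C(P × E, P × E →L[ℝ] E) := ⟨fderiv ℝ f, hf.continuous_fderiv one_ne_zero⟩
  have hf' : ∀ x, HasFDerivAt f (f' x) x := fun x ↦
    (hf.differentiable one_ne_zero x).hasFDerivAt
  have hg' : g = pointwiseApply (f'.comp (constProdMk q)) (constProdMk r) := ContinuousMap.ext hg
  rw [(hasFDerivAt_integralDefect hf' q).fderiv, hg']
  rfl

end IntegralDefect

section ParametricODE

universe u

variable {P E : Type u} [NormedAddCommGroup P] [NormedSpace ℝ P]
  [NormedAddCommGroup E] [NormedSpace ℝ E] {m : ℕ∞} {f : C(P × E, E)} {p₀ : P}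

/-- The curve `γ` solves the initial value problem `γ'(t) = g(t, γ(t))`, `γ(0) = 0` on `[0, 1]`. -/
def IsUnitTimeSolution (g : ℝ → E → E) (γ : ℝ → E) : Prop :=
  γ 0 = 0 ∧ ∀ t ∈ Icc (0 : ℝ) 1, HasDerivAt γ (g t (γ t)) t

/-- Smallness of the vector field for parameters near `p₀` replaces the usual smallness of the time
interval, so that solutions exist up to time `1`. -/
theorem fderiv_integralDefect_comp_inr (hf : ContDiff ℝ 1 f) (h₀ : ∀ z, f (p₀, z) = 0) :
    fderiv ℝ (integralDefect f) (p₀, 0) ∘L .inr ℝ P C(unitInterval, E) =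
      .id ℝ C(unitInterval, E) := by
  have hpartial (z w : E) : fderiv ℝ f (p₀, z) (0, w) = 0 := by
    have hconst : HasFDerivAt (fun z ↦ f (p₀, z)) (fderiv ℝ f (p₀, z) ∘L .inr ℝ P E) z :=
      (hf.differentiable one_ne_zero _).hasFDerivAt.comp z (hasFDerivAt_prodMk_right p₀ z)
    simp only [h₀] at hconst
    exact congr($(hconst.unique (hasFDerivAt_const 0 z)) w)
  refine ContinuousLinearMap.ext fun δ ↦ ?_
  simpa using fderiv_integralDefect_apply hf (q := (p₀, 0)) (r := (0, δ)) (g := 0)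
    fun s ↦ (hpartial _ _).symm

variable [CompleteSpace E]

theorem exists_curve_integralDefect_eq_zero [CompleteSpace P] (hf : ContDiff ℝ m f) (hm : m ≠ 0)
    (h₀ : ∀ z, f (p₀, z) = 0) :
    ∃ Γ : P → C(unitInterval, E), Γ p₀ = 0 ∧ ∀ᶠ p in 𝓝 p₀, integralDefect f (p, Γ p) = 0 ∧
      ContDiffAt ℝ m Γ p ∧
      ∀ v δ, fderiv ℝ (integralDefect f) (p, Γ p) (v, δ) = 0 → fderiv ℝ Γ p v = δ := by
  have hm' : (m : WithTop ℕ∞) ≠ 0 := by exact_mod_cast hm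
  have hdefect : ContDiff ℝ m (integralDefect f) := contDiff_integralDefect hf
  have hinv : (fderiv ℝ (integralDefect f) (p₀, 0) ∘L
      .inr ℝ P C(unitInterval, E)).IsInvertible := by
    rw [fderiv_integralDefect_comp_inr (hf.of_le (ENat.one_le_iff_ne_zero_withTop.2 hm')) h₀]
    exact ⟨.refl ℝ _, rfl⟩
  have hdefect₀ : integralDefect f (p₀, 0) = 0 := by
    have hf₀ : f.comp (constProdMk (p₀, (0 : C(unitInterval, E)))) = 0 :=
      ContinuousMap.ext fun s ↦ h₀ _
    rw [integralDefect, hf₀, map_zero, sub_zero]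
  obtain ⟨Γ, hΓ₀, hΓ⟩ := exists_implicitFunction_eventually_contDiffAt hdefect hm' hinv
  rw [hdefect₀] at hΓ
  refine ⟨Γ, hΓ₀, ?_⟩
  filter_upwards [hΓ, hΓ.eventually_nhds] with p hp hp'
  exact ⟨hp.1, hp.2.1, fun v δ hvδ ↦ fderiv_eq_of_eventually_apply_eq
    (hdefect.differentiable hm' _) (hp.2.1.differentiableAt hm') (hp'.mono fun _ h ↦ h.1)
    hp.2.2.injective hvδ⟩

theorem fderiv_integralDefect_eq_zero (hf : ContDiff ℝ 1 f) {q : P × C(unitInterval, E)}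
    {v : P} {δ : C(unitInterval, E)} {c γ : ℝ → E} (hδ : ∀ s : unitInterval, δ s = c s)
    (hγ : ∀ s : unitInterval, q.2 s = γ s)
    (hc : IsUnitTimeSolution (fun t z ↦ fderiv ℝ f (q.1, γ t) (v, z)) c) :
    fderiv ℝ (integralDefect f) q (v, δ) = 0 := by
  have : Continuous (fderiv ℝ f) := hf.continuous_fderiv one_ne_zero
  let g : C(unitInterval, E) := ⟨fun s ↦ fderiv ℝ f (q.1, q.2 s) (v, δ s), by fun_prop⟩
  rw [fderiv_integralDefect_apply hf (g := g) fun _ ↦ rfl, sub_eq_zero]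
  ext s
  rw [curvePrimitive_eq_sub_of_hasDerivAt (c := c) fun t ↦ ?_, hc.1, sub_zero, hδ]
  simpa only [g, ContinuousMap.coe_mk, hγ, hδ] using hc.2 t t.2

theorem exists_isUnitTimeSolution_of_apply_eq_zero [CompleteSpace P] (hf : ContDiff ℝ m f)
    (hm : m ≠ 0) (h₀ : ∀ z, f (p₀, z) = 0) :
    ∃ γ : P → ℝ → E, (∀ t, γ p₀ t = 0) ∧
      (∀ N ∈ 𝓝 (p₀, (0 : E)), ∀ᶠ p in 𝓝 p₀, ∀ t ∈ Icc (0 : ℝ) 1, (p, γ p t) ∈ N) ∧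
      ∀ᶠ p in 𝓝 p₀, IsUnitTimeSolution (fun _ z ↦ f (p, z)) (γ p) ∧
        ContDiffAt ℝ m (fun p ↦ γ p 1) p ∧
        ∀ v δ, IsUnitTimeSolution (fun t z ↦ fderiv ℝ f (p, γ p t) (v, z)) δ →
          fderiv ℝ (fun p ↦ γ p 1) p v = δ 1 := by
  have hm' : (m : WithTop ℕ∞) ≠ 0 := by exact_mod_cast hm
  have hf₁ : ContDiff ℝ 1 f := hf.of_le (ENat.one_le_iff_ne_zero_withTop.2 hm')
  obtain ⟨Γ, hΓ₀, hΓ⟩ := exists_curve_integralDefect_eq_zero hf hm h₀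
  let γ (p : P) (t : ℝ) : E := ∫ τ in (0 : ℝ)..t,
    IccExtend zero_le_one (f.comp (constProdMk (p, Γ p))) τ
  have hγΓ : ∀ᶠ p in 𝓝 p₀, ∀ s : unitInterval, Γ p s = γ p s := by
    filter_upwards [hΓ] with p hp s
    exact congr($(sub_eq_zero.1 hp.1) s)
  have hend : ∀ᶠ p in 𝓝 p₀, (fun p ↦ γ p 1) =ᶠ[𝓝 p] fun p ↦ Γ p 1 := by
    filter_upwards [hγΓ.eventually_nhds] with p hp
    filter_upwards [hp] with p' hp' using (hp' 1).symm
  refine ⟨γ, fun t ↦ by simp [γ, IccExtend, Function.comp_def, h₀], fun N hN ↦ ?_, ?_⟩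
  · have hmem : ∀ᶠ p in 𝓝 p₀, ∀ s, (p, Γ p s) ∈ N :=
      eventually_forall_prodMk_apply_mem hΓ.self_of_nhds.2.1.continuousAt fun s ↦ by
        rwa [hΓ₀, ContinuousMap.zero_apply]
    filter_upwards [hmem, hγΓ] with p hp hγp t ht
    simpa only [hγp] using hp ⟨t, ht⟩
  · filter_upwards [hΓ, hγΓ, hend] with p ⟨_, hΓp, hlin⟩ hγp hendp
    refine ⟨⟨intervalIntegral.integral_same, fun t ht ↦ ?_⟩,
      (contDiffAt_continuousMap_apply hΓp 1).congr_of_eventuallyEq hendp, fun v δ hδ ↦ ?_⟩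
    · rw [← hγp ⟨t, ht⟩]
      exact hasDerivAt_integral_IccExtend (f.comp (constProdMk (p, Γ p))) ⟨t, ht⟩
    · let δc : C(unitInterval, E) := ⟨fun s ↦ δ s, continuous_iff_continuousAt.2 fun s ↦
        (hδ.2 s s.2).continuousAt.comp continuousAt_subtype_val⟩
      have hδc := hlin v δc (fderiv_integralDefect_eq_zero hf₁ (fun _ ↦ rfl) hγp hδ)
      rw [hendp.fderiv_eq, fderiv_continuousMap_apply (hΓp.differentiableAt hm'), hδc]
      simp [δc]

end ParametricODE

section TransverseMap

universe u

variable {E : Type u} [NormedAddCommGroup E] [NormedSpace ℝ E] {X : E → E →L[ℝ] E} {x₀ : E}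

/-- The vector field `z ↦ -X(y + z)(y - x₀)` with parameter `y`. When `X(p)` is a projection onto
a distribution at `p`, its integral curve from `0`, translated by `y`, runs in the leaf of `y`
towards the transversal through `x₀`, which it reaches at time `1`. -/
def descentField (X : E → E →L[ℝ] E) (x₀ : E) (q : E × E) : E :=
  -X (q.1 + q.2) (q.1 - x₀)

/-- Infinitesimal form of the involutivity at `p` of the distribution spanned by a field `X` of
projections with constant kernel: the curvature of `X` vanishes. -/
def IsInvolutiveAt (X : E → E →L[ℝ] E) (p : E) : Prop :=
  ∀ v w, fderiv ℝ X p (X p v) w = fderiv ℝ X p (X p w) v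

/-- The Lie derivative at `p` of the operator field `X` along the linear vector field `A`
vanishes. -/
def IsInvariantAt (A : E →L[ℝ] E) (X : E → E →L[ℝ] E) (p : E) : Prop :=
  ∀ v, fderiv ℝ X p (A p) v = A (X p v) - X p (A v)

theorem contDiff_descentField {m : WithTop ℕ∞} (hX : ContDiff ℝ m X) :
    ContDiff ℝ m (descentField X x₀) := by
  unfold descentField
  fun_prop

theorem fderiv_descentField_apply {y z : E} (hX : DifferentiableAt ℝ X (y + z)) (v w : E) :
    fderiv ℝ (descentField X x₀) (y, z) (v, w) =
      -(fderiv ℝ X (y + z) (v + w) (y - x₀) + X (y + z) v) := by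
  have hsum : HasFDerivAt (fun q : E × E ↦ q.1 + q.2) (.fst ℝ E E + .snd ℝ E E) (y, z) :=
    hasFDerivAt_fst.add hasFDerivAt_snd
  have hXsum : HasFDerivAt (fun q : E × E ↦ X (q.1 + q.2))
      (fderiv ℝ X (y + z) ∘L (.fst ℝ E E + .snd ℝ E E)) (y, z) :=
    HasFDerivAt.comp (y, z) hX.hasFDerivAt hsum
  have hfield := (hXsum.clm_apply (hasFDerivAt_fst.sub_const x₀)).neg
  rw [show descentField X x₀ = -fun q ↦ X (q.1 + q.2) (q.1 - x₀) from rfl, hfield.fderiv]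
  simp [add_comm]

theorem isUnitTimeSolution_fderiv_descentField_of_apply_self {y v : E} {γ : ℝ → E}
    (hX : Differentiable ℝ X) (hγ : IsUnitTimeSolution (fun _ z ↦ descentField X x₀ (y, z)) γ)
    (hinv : ∀ t ∈ Icc (0 : ℝ) 1, IsInvolutiveAt X (y + γ t)) (hv : X y v = v) :
    IsUnitTimeSolution (fun t z ↦ fderiv ℝ (descentField X x₀) (y, γ t) (v, z))
      fun t ↦ (1 - t) • X (y + γ t) v - v := by
  refine ⟨by simp [hγ.1, hv], fun t ht ↦ ?_⟩
  have hXγ : HasDerivAt (fun t ↦ X (y + γ t) v)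
      (fderiv ℝ X (y + γ t) (descentField X x₀ (y, γ t)) v) t := by
    have hcomp := (hX (y + γ t)).hasFDerivAt.comp_hasDerivAt t ((hγ.2 t ht).const_add y)
    simpa using hcomp.clm_apply (hasDerivAt_const t v)
  have hδ := (((hasDerivAt_id t).const_sub 1).smul hXγ).sub_const v
  refine hδ.congr_deriv ?_
  simp only [fderiv_descentField_apply (hX _)]
  rw [add_sub_cancel, map_smul, smul_apply, hinv t ht v, descentField, map_neg, neg_apply, id_eq]
  module

theorem isUnitTimeSolution_fderiv_descentField_of_homogeneous {y : E} {γ : ℝ → E} {A : E →L[ℝ] E}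
    (hX : Differentiable ℝ X) (hγ : IsUnitTimeSolution (fun _ z ↦ descentField X x₀ (y, z)) γ)
    (hA : A x₀ = 0) (hhom : ∀ t ∈ Icc (0 : ℝ) 1, IsInvariantAt A X (y + γ t)) :
    IsUnitTimeSolution (fun t z ↦ fderiv ℝ (descentField X x₀) (y, γ t) (A y, z))
      fun t ↦ A (γ t) := by
  refine ⟨by simp [hγ.1], fun t ht ↦ ?_⟩
  have hAy : A (y - x₀) = A y := by rw [map_sub, hA, sub_zero]
  refine (A.hasFDerivAt.comp_hasDerivAt t (hγ.2 t ht)).congr_deriv ?_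
  simp only [fderiv_descentField_apply (hX _)]
  rw [← map_add, hhom t ht, hAy, sub_add_cancel, descentField, map_neg]

theorem isUnitTimeSolution_fderiv_descentField_zero (hX : Differentiable ℝ X) (v : E) :
    IsUnitTimeSolution (fun _ z ↦ fderiv ℝ (descentField X x₀) (x₀, 0) (v, z))
      fun t ↦ -(t • X x₀ v) := by
  refine ⟨by simp, fun t _ ↦ ?_⟩
  refine ((hasDerivAt_id t).smul_const (X x₀ v)).neg.congr_deriv ?_
  simp [fderiv_descentField_apply (hX _)]

theorem exists_transverseMap_of_contDiff [CompleteSpace E] {m : ℕ∞} (hX : ContDiff ℝ m X)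
    (hm : m ≠ 0) (hinv : ∀ᶠ p in 𝓝 x₀, IsInvolutiveAt X p)
    {A : E →L[ℝ] E} (hA : A x₀ = 0) (hhom : ∀ᶠ p in 𝓝 x₀, IsInvariantAt A X p) :
    ∃ π : E → E, fderiv ℝ π x₀ = .id ℝ E - X x₀ ∧ ∀ᶠ y in 𝓝 x₀, ContDiffAt ℝ m π y ∧
      (∀ v, X y v = v → fderiv ℝ π y v = 0) ∧ fderiv ℝ π y (A y) = A (π y) := by
  have hm' : (m : WithTop ℕ∞) ≠ 0 := by exact_mod_cast hm
  have hXd : Differentiable ℝ X := hX.differentiable hm'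
  have hfield : ContDiff ℝ m (descentField X x₀) := contDiff_descentField hX
  obtain ⟨γ, hγ₀, hγ_near, hγ⟩ := exists_isUnitTimeSolution_of_apply_eq_zero
    (f := ⟨descentField X x₀, hfield.continuous⟩) (p₀ := x₀) hfield hm
    fun z ↦ by simp [descentField]
  have hγ_good : ∀ᶠ y in 𝓝 x₀, ∀ t ∈ Icc (0 : ℝ) 1,
      IsInvolutiveAt X (y + γ y t) ∧ IsInvariantAt A X (y + γ y t) := by
    have hadd : Tendsto (fun q : E × E ↦ q.1 + q.2) (𝓝 (x₀, 0)) (𝓝 x₀) :=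
      continuous_add.tendsto' _ _ (add_zero x₀)
    exact hγ_near _ (hadd.eventually (hinv.and hhom))
  have hπ {y : E} (hy : ContDiffAt ℝ m (fun y ↦ γ y 1) y) (v : E) :
      fderiv ℝ (fun y ↦ y + γ y 1) y v = v + fderiv ℝ (fun y ↦ γ y 1) y v := by
    rw [fderiv_fun_add differentiableAt_fun_id (hy.differentiableAt hm')]
    simp
  refine ⟨fun y ↦ y + γ y 1, ContinuousLinearMap.ext fun v ↦ ?_, ?_⟩
  · obtain ⟨-, hsmooth, hlin⟩ := hγ.self_of_nhds
    have hδ := isUnitTimeSolution_fderiv_descentField_zero (x₀ := x₀) hXd v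
    rw [hπ hsmooth, hlin v _ (by simpa only [hγ₀, ContinuousMap.coe_mk] using hδ)]
    simp [sub_eq_add_neg]
  · filter_upwards [hγ, hγ_good] with y ⟨hsol, hsmooth, hlin⟩ hgood
    refine ⟨contDiffAt_id.add hsmooth, fun v hv ↦ ?_, ?_⟩
    · rw [hπ hsmooth, hlin v _ (isUnitTimeSolution_fderiv_descentField_of_apply_self hXd hsol
        (fun t ht ↦ (hgood t ht).1) hv)]
      simp
    · rw [hπ hsmooth, hlin _ _ (isUnitTimeSolution_fderiv_descentField_of_homogeneous hXd hsol hA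
        fun t ht ↦ (hgood t ht).2), map_add]

end TransverseMap

section Localization

variable {E F : Type*} [NormedAddCommGroup E] [NormedSpace ℝ E] [NormedAddCommGroup F]
  [NormedSpace ℝ F] {m : ℕ∞} {x₀ : E}

theorem exists_contDiff_eventuallyEq [HasContDiffBump E] {f : E → F}
    (hf : ∀ᶠ p in 𝓝 x₀, ContDiffAt ℝ m f p) :
    ∃ g : E → F, ContDiff ℝ m g ∧ g =ᶠ[𝓝 x₀] f := by
  obtain ⟨r, hr, hfr⟩ := Metric.nhds_basis_closedBall.mem_iff.1 hf
  let χ : ContDiffBump x₀ := ⟨r / 2, r, half_pos hr, half_lt_self hr⟩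
  refine ⟨fun p ↦ χ p • f p, contDiff_iff_contDiffAt.2 fun p ↦ ?_, ?_⟩
  · by_cases hp : p ∈ tsupport χ
    · exact χ.contDiff.contDiffAt.smul (hfr (χ.tsupport_eq ▸ hp))
    · refine (contDiffAt_const (c := (0 : F))).congr_of_eventuallyEq ?_
      filter_upwards [notMem_tsupport_iff_eventuallyEq.1 hp] with q hq
      rw [hq, Pi.zero_apply, zero_smul]
  · filter_upwards [χ.eventuallyEq_one] with p hp
    rw [hp, Pi.one_apply, one_smul]

theorem exists_transverseMap [CompleteSpace E] [HasContDiffBump E] {X : E → E →L[ℝ] E}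
    (hX : ∀ᶠ p in 𝓝 x₀, ContDiffAt ℝ m X p) (hm : m ≠ 0)
    (hinv : ∀ᶠ p in 𝓝 x₀, IsInvolutiveAt X p) {A : E →L[ℝ] E} (hA : A x₀ = 0)
    (hhom : ∀ᶠ p in 𝓝 x₀, IsInvariantAt A X p) :
    ∃ π : E → E, fderiv ℝ π x₀ = .id ℝ E - X x₀ ∧ ∀ᶠ y in 𝓝 x₀, ContDiffAt ℝ m π y ∧
      (∀ v, X y v = v → fderiv ℝ π y v = 0) ∧ fderiv ℝ π y (A y) = A (π y) := by
  obtain ⟨X', hX', heq⟩ := exists_contDiff_eventuallyEq hX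
  have hinv' : ∀ᶠ p in 𝓝 x₀, IsInvolutiveAt X' p := by
    filter_upwards [hinv, heq, heq.fderiv (𝕜 := ℝ)] with p hp hXp hDXp
    rwa [IsInvolutiveAt, hXp, hDXp]
  have hhom' : ∀ᶠ p in 𝓝 x₀, IsInvariantAt A X' p := by
    filter_upwards [hhom, heq, heq.fderiv (𝕜 := ℝ)] with p hp hXp hDXp
    rwa [IsInvariantAt, hXp, hDXp]
  obtain ⟨π, hπ₀, hπ⟩ := exists_transverseMap_of_contDiff hX' hm hinv' hA hhom'
  refine ⟨π, by rw [hπ₀, heq.self_of_nhds], ?_⟩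
  filter_upwards [hπ, heq] with y hy hXy
  rwa [← hXy]

end Localization

section Straightening

variable {E : Type*} [NormedAddCommGroup E] [NormedSpace ℝ E] [CompleteSpace E]
  {m : ℕ∞} {x₀ : E} {X : E → E →L[ℝ] E} {A : E →L[ℝ] E}

theorem eventually_isInvertible_fderiv {F : Type*} [NormedAddCommGroup F] [NormedSpace ℝ F]
    {f : E → F} {n : WithTop ℕ∞} (hf : ContDiffAt ℝ n f x₀) (hn : n ≠ 0)
    (hinv : (fderiv ℝ f x₀).IsInvertible) : ∀ᶠ y in 𝓝 x₀, (fderiv ℝ f y).IsInvertible :=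
  (hf.continuousAt_fderiv hn).eventually (ContinuousLinearEquiv.isOpen.mem_nhds hinv)

theorem exists_straighteningMap [HasContDiffBump E]
    (hX : ∀ᶠ p in 𝓝 x₀, ContDiffAt ℝ m X p) (hm : m ≠ 0) (hidem : IsIdempotentElem (X x₀))
    (hinv : ∀ᶠ p in 𝓝 x₀, IsInvolutiveAt X p) (hA : A x₀ = 0)
    (hhom : ∀ᶠ p in 𝓝 x₀, IsInvariantAt A X p) :
    ∃ Φ : E → E, ∀ᶠ y in 𝓝 x₀, ContDiffAt ℝ m Φ y ∧ (fderiv ℝ Φ y).IsInvertible ∧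
      fderiv ℝ Φ y (A y) = A (Φ y) ∧ ∀ v, X y v = v → fderiv ℝ Φ y v = X x₀ v := by
  have hm' : (m : WithTop ℕ∞) ≠ 0 := by exact_mod_cast hm
  obtain ⟨π, hπ₀, hπ⟩ := exists_transverseMap hX hm hinv hA hhom
  set P : E →L[ℝ] E := X x₀
  let Φ : E → E := fun y ↦ P y + (1 - P) (π y)
  have hΦ_smooth : ∀ᶠ y in 𝓝 x₀, ContDiffAt ℝ m Φ y := by
    filter_upwards [hπ] with y hy
    exact P.contDiff.contDiffAt.add ((1 - P).contDiff.contDiffAt.comp y hy.1)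
  have hΦ' : ∀ᶠ y in 𝓝 x₀, fderiv ℝ Φ y = P + (1 - P) ∘L fderiv ℝ π y := by
    filter_upwards [hπ] with y hy
    exact (P.hasFDerivAt.add ((1 - P).hasFDerivAt.comp y
      (hy.1.differentiableAt hm').hasFDerivAt)).fderiv
  have hΦ₀ : fderiv ℝ Φ x₀ = 1 := by
    rw [hΦ'.self_of_nhds, hπ₀]
    exact (congrArg (P + ·) hidem.one_sub.eq).trans (add_sub_cancel P 1)
  have hcomm (v : E) : P (A v) = A (P v) := by
    have := hhom.self_of_nhds v
    rw [hA, map_zero, zero_apply, eq_comm, sub_eq_zero] at this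
    exact this.symm
  have hΦ_inv := eventually_isInvertible_fderiv hΦ_smooth.self_of_nhds hm'
    (hΦ₀ ▸ ⟨.refl ℝ E, rfl⟩)
  refine ⟨Φ, ?_⟩
  filter_upwards [hΦ_smooth, hΦ_inv, hΦ', hπ] with y hsmooth hiso hΦy ⟨_, hker, hAπ⟩
  refine ⟨hsmooth, hiso, ?_, fun v hv ↦ ?_⟩
  · rw [hΦy]
    simp [hAπ, Φ, hcomm]
  · simp [hΦy, hker v hv]

end Straightening

section ProjectionField

variable {κ E : Type*} [Fintype κ] [NormedAddCommGroup E] [NormedSpace ℝ E]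
  {V : κ → E → E} {Q : E →L[ℝ] κ → ℝ} {p : E}

/-- The linear combination map `c ↦ ∑ i, cᵢ Vᵢ(p)` of a family of vector fields. -/
noncomputable def frameMap (V : κ → E → E) (p : E) : (κ → ℝ) →L[ℝ] E :=
  ∑ i, (ContinuousLinearMap.proj i : (κ → ℝ) →L[ℝ] ℝ).smulRight (V i p)

theorem frameMap_apply (c : κ → ℝ) : frameMap V p c = ∑ i, c i • V i p := by
  simp [frameMap]

theorem frameMap_mem_span (c : κ → ℝ) :
    frameMap V p c ∈ Submodule.span ℝ (range fun i ↦ V i p) := by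
  rw [frameMap_apply]
  exact Submodule.sum_mem _ fun i _ ↦ Submodule.smul_mem _ _ (Submodule.subset_span ⟨i, rfl⟩)

theorem isUnit_comp_frameMap_iff :
    IsUnit (Q ∘L frameMap V p) ↔ LinearIndependent ℝ fun i ↦ Q (V i p) := by
  have hcomb : (Q ∘L frameMap V p : (κ → ℝ) →ₗ[ℝ] κ → ℝ) =
      Fintype.linearCombination ℝ fun i ↦ Q (V i p) := by
    ext
    simp [frameMap_apply, Fintype.linearCombination_apply]
  rw [ContinuousLinearMap.isUnit_iff_isUnit_toLinearMap, hcomb, LinearMap.isUnit_iff_ker_eq_bot,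
    LinearMap.ker_eq_bot, linearIndependent_iff_injective_fintypeLinearCombination]

theorem contDiffAt_frameMap {m : WithTop ℕ∞} (hV : ∀ i, ContDiffAt ℝ m (V i) p) :
    ContDiffAt ℝ m (frameMap V) p := by
  unfold frameMap
  fun_prop

/-- The field of projections onto the span of `V` along the kernel of `Q`. It is meaningful where
`Q` restricts to an isomorphism from that span, i.e. where `Q ∘L frameMap V p` is a unit. -/
noncomputable def projectionField (V : κ → E → E) (Q : E →L[ℝ] κ → ℝ) (p : E) : E →L[ℝ] E :=
  frameMap V p ∘L Ring.inverse (Q ∘L frameMap V p) ∘L Q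

theorem projectionField_apply_mem_span (v : E) :
    projectionField V Q p v ∈ Submodule.span ℝ (range fun i ↦ V i p) :=
  frameMap_mem_span _

theorem projectionField_apply_of_map_eq_zero {v : E} (hv : Q v = 0) :
    projectionField V Q p v = 0 := by
  simp [projectionField, hv]

theorem map_projectionField_apply (hunit : IsUnit (Q ∘L frameMap V p)) (v : E) :
    Q (projectionField V Q p v) = Q v :=
  congr($(Ring.mul_inverse_cancel _ hunit) (Q v))

theorem projectionField_apply_of_mem_span (hunit : IsUnit (Q ∘L frameMap V p)) {v : E}
    (hv : v ∈ Submodule.span ℝ (range fun i ↦ V i p)) : projectionField V Q p v = v := by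
  obtain ⟨c, rfl⟩ := (Submodule.mem_span_range_iff_exists_fun ℝ).1 hv
  rw [← frameMap_apply]
  exact congrArg (frameMap V p) congr($(Ring.inverse_mul_cancel _ hunit) c)

theorem isIdempotentElem_projectionField (hunit : IsUnit (Q ∘L frameMap V p)) :
    IsIdempotentElem (projectionField V Q p) :=
  ContinuousLinearMap.ext fun _ ↦
    projectionField_apply_of_mem_span hunit (projectionField_apply_mem_span _)

theorem contDiffAt_projectionField {m : WithTop ℕ∞} (hV : ∀ i, ContDiffAt ℝ m (V i) p)
    (hunit : IsUnit (Q ∘L frameMap V p)) : ContDiffAt ℝ m (projectionField V Q) p := by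
  have hframe : ContDiffAt ℝ m (frameMap V) p := contDiffAt_frameMap hV
  have hinverse : ContDiffAt ℝ m (fun p ↦ Ring.inverse (Q ∘L frameMap V p)) p := by
    obtain ⟨T, hT⟩ := hunit
    refine ContDiffAt.comp p (g := Ring.inverse) ?_ (contDiffAt_const.clm_comp hframe)
    rw [← hT]
    exact contDiffAt_ringInverse ℝ T
  exact hframe.clm_comp (hinverse.clm_comp contDiffAt_const)

theorem eventually_isUnit_comp_frameMap (hV : ∀ i, ContinuousAt (V i) p)
    (hunit : IsUnit (Q ∘L frameMap V p)) : ∀ᶠ q in 𝓝 p, IsUnit (Q ∘L frameMap V q) := by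
  have hframe : ContinuousAt (frameMap V) p := by
    unfold frameMap
    exact tendsto_finsetSum _ fun i _ ↦
      ((ContinuousLinearMap.smulRightL ℝ (κ → ℝ) E (.proj i)).continuous.tendsto _).comp (hV i)
  exact (continuousAt_const.clm_comp hframe).eventually (Units.isOpen.mem_nhds hunit)

theorem fderiv_projectionField_apply_of_map_eq_zero
    (hX : DifferentiableAt ℝ (projectionField V Q) p) (u : E) {v : E} (hv : Q v = 0) :
    fderiv ℝ (projectionField V Q) p u v = 0 := by
  have heval := hX.hasFDerivAt.clm_apply (hasFDerivAt_const v p)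
  simp only [projectionField_apply_of_map_eq_zero hv] at heval
  simpa using congr($(heval.unique (hasFDerivAt_const 0 p)) u)

theorem fderiv_projectionField_apply_self (hV : ∀ i, ContDiffAt ℝ 1 (V i) p)
    (hunit : IsUnit (Q ∘L frameMap V p)) (u : E) (i : κ) :
    fderiv ℝ (projectionField V Q) p u (V i p) =
      fderiv ℝ (V i) p u - projectionField V Q p (fderiv ℝ (V i) p u) := by
  have hX := (contDiffAt_projectionField hV hunit).differentiableAt one_ne_zero
  have hVi := ((hV i).differentiableAt one_ne_zero).hasFDerivAt
  have hfix : (fun q ↦ projectionField V Q q (V i q)) =ᶠ[𝓝 p] V i := by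
    filter_upwards [eventually_isUnit_comp_frameMap (fun i ↦ (hV i).continuousAt) hunit] with q hq
    exact projectionField_apply_of_mem_span hq (Submodule.subset_span ⟨i, rfl⟩)
  have hderiv := congr($((hX.hasFDerivAt.clm_apply hVi).unique
    (hVi.congr_of_eventuallyEq hfix)) u)
  rw [eq_sub_iff_add_eq']
  simpa using hderiv

theorem fderiv_projectionField_apply_projectionField
    (hX : DifferentiableAt ℝ (projectionField V Q) p) (hunit : IsUnit (Q ∘L frameMap V p))
    (u v : E) : fderiv ℝ (projectionField V Q) p u (projectionField V Q p v) =
      fderiv ℝ (projectionField V Q) p u v := by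
  rw [← sub_eq_zero, ← map_sub]
  refine fderiv_projectionField_apply_of_map_eq_zero hX u ?_
  rw [map_sub, map_projectionField_apply hunit, sub_self]

theorem isInvolutiveAt_projectionField (hV : ∀ i, ContDiffAt ℝ 1 (V i) p)
    (hunit : IsUnit (Q ∘L frameMap V p))
    (hinv : ∀ i j, VectorField.lieBracket ℝ (V i) (V j) p ∈
      Submodule.span ℝ (range fun l ↦ V l p)) :
    IsInvolutiveAt (projectionField V Q) p := by
  have hX := (contDiffAt_projectionField hV hunit).differentiableAt one_ne_zero
  set D := fderiv ℝ (projectionField V Q) p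
  have hframe (i j : κ) : D (V i p) (V j p) = D (V j p) (V i p) := by
    have hfix := projectionField_apply_of_mem_span hunit (hinv i j)
    rw [VectorField.lieBracket, map_sub] at hfix
    rw [fderiv_projectionField_apply_self hV hunit, fderiv_projectionField_apply_self hV hunit]
    rw [sub_eq_sub_iff_sub_eq_sub]
    exact hfix.symm
  have hspan : ∀ v ∈ Submodule.span ℝ (range fun l ↦ V l p),
      ∀ w ∈ Submodule.span ℝ (range fun l ↦ V l p), D v w = D w v := by
    intro v hv w hw
    induction hv, hw using Submodule.span_induction₂ with
    | mem_mem _ _ hv hw => obtain ⟨⟨i, rfl⟩, ⟨j, rfl⟩⟩ := And.intro hv hw; exact hframe i j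
    | zero_left => simp
    | zero_right => simp
    | add_left _ _ _ _ _ _ h₁ h₂ => simp [h₁, h₂]
    | add_right _ _ _ _ _ _ h₁ h₂ => simp [h₁, h₂]
    | smul_left _ _ _ _ _ h => simp [h]
    | smul_right _ _ _ _ _ h => simp [h]
  intro v w
  rw [← fderiv_projectionField_apply_projectionField hX hunit _ w,
    ← fderiv_projectionField_apply_projectionField hX hunit _ v]
  exact hspan _ (projectionField_apply_mem_span v) _ (projectionField_apply_mem_span w)

theorem isInvariantAt_projectionField {A : E →L[ℝ] E} (hV : ∀ i, ContDiffAt ℝ 1 (V i) p)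
    (hunit : IsUnit (Q ∘L frameMap V p)) (hQ : ∀ v, Q v = 0 → Q (A v) = 0)
    (hhom : ∀ i, VectorField.lieBracket ℝ A (V i) p ∈ Submodule.span ℝ (range fun l ↦ V l p)) :
    IsInvariantAt A (projectionField V Q) p := by
  have hX := (contDiffAt_projectionField hV hunit).differentiableAt one_ne_zero
  set X := projectionField V Q p
  have hspan : ∀ v ∈ Submodule.span ℝ (range fun l ↦ V l p),
      fderiv ℝ (projectionField V Q) p (A p) v = A v - X (A v) := by
    refine LinearMap.eqOn_span (f := (fderiv ℝ (projectionField V Q) p (A p)).toLinearMap)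
      (g := (A - X ∘L A).toLinearMap) ?_
    rintro _ ⟨i, rfl⟩
    have hfix := projectionField_apply_of_mem_span hunit (hhom i)
    rw [VectorField.lieBracket, map_sub, A.fderiv] at hfix
    refine (fderiv_projectionField_apply_self hV hunit (A p) i).trans ?_
    exact sub_eq_sub_iff_sub_eq_sub.2 hfix.symm
  intro v
  have hker : X (A (v - X v)) = 0 := projectionField_apply_of_map_eq_zero <| hQ _ <| by
    rw [map_sub, map_projectionField_apply hunit, sub_self]
  rw [← fderiv_projectionField_apply_projectionField hX hunit,
    hspan _ (projectionField_apply_mem_span v)]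
  rw [map_sub, map_sub, sub_eq_zero] at hker
  rw [hker]

end ProjectionField

section AdaptedEigenbasis

open Module

variable {K E ι κ : Type*} [Field K] [AddCommGroup E] [Module K E]

theorem exists_basis_extending_of_span_eq_top [FiniteDimensional K E] [Fintype ι] {t : Set E}
    (ht : Submodule.span K t = ⊤) (hcard : finrank K E = Fintype.card ι) (e : κ ↪ ι) {v : κ → E}
    (hv : LinearIndependent K v) (hvt : ∀ i, v i ∈ t) :
    ∃ b : Basis ι K E, (∀ a, b a ∈ t) ∧ ∀ i, b (e i) = v i := by
  have hsub : range v ⊆ t := range_subset_iff.2 hvt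
  let B := Basis.extendLe hv.linearIndepOn_id hsub ht.ge
  have hfin : (hv.linearIndepOn_id.extend hsub).Finite := Module.Finite.finite_basis B
  have hcard' : Fintype.card ι = hfin.toFinset.card := by
    rw [← hcard, finrank_eq_nat_card_basis B, Nat.card_coe_set_eq, ncard_eq_toFinset_card _ hfin]
  have hextend (i : κ) : Function.extend e v 0 (e i) = v i := e.injective.extend_apply v 0 i
  obtain ⟨g, hg⟩ := MapsTo.exists_equiv_extend_of_card_eq hcard' (s := range e)
    (f := Function.extend e v 0)
    (by
      rintro _ ⟨i, rfl⟩
      rw [hextend]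
      exact hfin.mem_toFinset.2 (hv.linearIndepOn_id.subset_extend hsub ⟨i, rfl⟩))
    (by
      rintro _ ⟨i, rfl⟩ _ ⟨j, rfl⟩ hij
      rw [hextend, hextend] at hij
      rw [hv.injective hij])
  let b := B.reindex (g.trans (Equiv.subtypeEquivRight fun _ ↦ hfin.mem_toFinset)).symm
  have hb (a : ι) : b a = g a := by simp [b, B]
  refine ⟨b, fun a ↦ ?_, fun i ↦ ?_⟩
  · rw [hb]
    exact hv.linearIndepOn_id.extend_subset hsub (hfin.mem_toFinset.1 (g a).2)
  · rw [hb, hg _ (mem_range_self i), hextend]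

theorem span_eigenvectors_eq_top {A : End K E} (hA : ⨆ μ, A.eigenspace μ = ⊤) :
    Submodule.span K {u | ∃ μ : K, A u = μ • u} = ⊤ :=
  top_unique <| hA.ge.trans <| iSup_le fun μ _ hu ↦
    Submodule.subset_span ⟨μ, End.mem_eigenspace_iff.1 hu⟩

theorem exists_eigenbasis_span_eq [FiniteDimensional K E] [Fintype ι] [Fintype κ]
    {A : End K E} (hA : ⨆ μ, A.eigenspace μ = ⊤) (hcard : finrank K E = Fintype.card ι)
    (e : κ ↪ ι) {S : Submodule K E} (hS : ∀ u ∈ S, A u ∈ S)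
    (hScard : finrank K S = Fintype.card κ) :
    ∃ (b : Basis ι K E) (μ : ι → K), (∀ a, A (b a) = μ a • b a) ∧
      Submodule.span K (range fun i ↦ b (e i)) = S := by
  have hrestrict := span_eigenvectors_eq_top (End.genEigenspace_restrict_eq_top hS hA)
  obtain ⟨bS, hbS, -⟩ := exists_basis_extending_of_span_eq_top hrestrict hScard
    (.ofIsEmpty : Empty ↪ κ) (v := Empty.elim) linearIndependent_empty_type isEmptyElim
  obtain ⟨b, hb, hbe⟩ := exists_basis_extending_of_span_eq_top (span_eigenvectors_eq_top hA)
    hcard e (v := fun i ↦ (bS i : E)) (bS.linearIndependent.map' S.subtype S.ker_subtype)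
    fun i ↦ (hbS i).imp fun _ hμ ↦ congrArg Subtype.val hμ
  choose μ hμ using hb
  refine ⟨b, μ, hμ, ?_⟩
  simp only [hbe]
  rw [range_comp', ← S.coe_subtype, ← Submodule.map_span, bS.span_eq, Submodule.map_top,
    S.range_subtype]

theorem coord_apply_of_eigenbasis {A : End K E} {b : Basis ι K E} {μ : ι → K}
    (hb : ∀ a, A (b a) = μ a • b a) (a : ι) (v : E) : b.coord a (A v) = μ a * b.coord a v := by
  classical
  suffices b.coord a ∘ₗ A = μ a • b.coord a from congr($this v)
  refine b.ext fun l ↦ ?_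
  obtain rfl | hla := eq_or_ne l a
  · simp [hb]
  · simp [hb, hla]

theorem coord_apply_eq_zero_of_mem_span {b : Basis ι K E} {s : Set ι} {u : E}
    (hu : u ∈ Submodule.span K (b '' s)) {a : ι} (ha : a ∉ s) : b.coord a u = 0 := by
  rw [b.coord_apply]
  exact Finsupp.notMem_support_iff.1 fun h ↦ ha (b.mem_span_image.1 hu h)

theorem linearIndependent_coord_of_mem_span [Finite ι] {b : Basis ι K E} {e : κ → ι}
    {v : κ → E} (hv : LinearIndependent K v)
    (hmem : ∀ i, v i ∈ Submodule.span K (range fun i ↦ b (e i))) :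
    LinearIndependent K fun i j ↦ b.coord (e j) (v i) := by
  have hmem' : Submodule.span K (range v) ≤ Submodule.span K (b '' range e) := by
    rw [← range_comp]
    exact Submodule.span_le.2 (range_subset_iff.2 hmem)
  refine hv.map (f := LinearMap.pi fun j ↦ b.coord (e j)) ?_
  refine Submodule.disjoint_def.2 fun u hu h ↦ ?_
  refine b.ext_elem fun a ↦ ?_
  by_cases ha : a ∈ range e
  · obtain ⟨j, rfl⟩ := ha
    simpa using congrFun h j
  · simpa using coord_apply_eq_zero_of_mem_span (hmem' hu) ha

end AdaptedEigenbasis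

section HomogeneousFrobenius

variable {E ι κ : Type*} [NormedAddCommGroup E] [NormedSpace ℝ E]
  {m : ℕ∞} {A : E →L[ℝ] E} {x₀ : E}

theorem exists_straighteningMap_of_frame [CompleteSpace E] [HasContDiffBump E] [Finite κ]
    {V : κ → E → E} {Q : E →L[ℝ] κ → ℝ}
    (hV : ∀ᶠ y in 𝓝 x₀, ∀ i, ContDiffAt ℝ m (V i) y) (hm : m ≠ 0)
    (hind : LinearIndependent ℝ fun i ↦ Q (V i x₀)) (hQ : ∀ v, Q v = 0 → Q (A v) = 0)
    (hA : A x₀ = 0)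
    (hhom : ∀ᶠ y in 𝓝 x₀, ∀ i,
      VectorField.lieBracket ℝ A (V i) y ∈ Submodule.span ℝ (range fun l ↦ V l y))
    (hinv : ∀ᶠ y in 𝓝 x₀, ∀ i j,
      VectorField.lieBracket ℝ (V i) (V j) y ∈ Submodule.span ℝ (range fun l ↦ V l y)) :
    ∃ Φ : E → E, ∀ᶠ y in 𝓝 x₀, ContDiffAt ℝ m Φ y ∧ (fderiv ℝ Φ y).IsInvertible ∧
      fderiv ℝ Φ y (A y) = A (Φ y) ∧
      (∀ i, fderiv ℝ Φ y (V i y) ∈ Submodule.span ℝ (range fun l ↦ V l x₀)) ∧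
      LinearIndependent ℝ fun i ↦ Q (fderiv ℝ Φ y (V i y)) := by
  cases nonempty_fintype κ
  have hone : (1 : WithTop ℕ∞) ≤ m := by exact_mod_cast Order.one_le_iff_pos.2 (pos_of_ne_zero hm)
  have hunit₀ : IsUnit (Q ∘L frameMap V x₀) := isUnit_comp_frameMap_iff.2 hind
  have hunit : ∀ᶠ y in 𝓝 x₀, IsUnit (Q ∘L frameMap V y) :=
    eventually_isUnit_comp_frameMap (fun i ↦ (hV.self_of_nhds i).continuousAt) hunit₀
  obtain ⟨Φ, hΦ⟩ := exists_straighteningMap (A := A) (x₀ := x₀) (X := projectionField V Q)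
    ((hV.and hunit).mono fun _ h ↦ contDiffAt_projectionField h.1 h.2) hm
    (isIdempotentElem_projectionField hunit₀)
    ((hV.and (hunit.and hinv)).mono fun _ h ↦
      isInvolutiveAt_projectionField (fun i ↦ (h.1 i).of_le hone) h.2.1 h.2.2)
    hA
    ((hV.and (hunit.and hhom)).mono fun _ h ↦
      isInvariantAt_projectionField (fun i ↦ (h.1 i).of_le hone) h.2.1 hQ h.2.2)
  refine ⟨Φ, ?_⟩
  filter_upwards [hΦ, hunit] with y ⟨hsmooth, hiso, hAΦ, hΦX⟩ hy
  have hΦV (i : κ) : fderiv ℝ Φ y (V i y) = projectionField V Q x₀ (V i y) :=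
    hΦX _ (projectionField_apply_of_mem_span hy (Submodule.subset_span ⟨i, rfl⟩))
  refine ⟨hsmooth, hiso, hAΦ, fun i ↦ ?_, ?_⟩
  · rw [hΦV]
    exact projectionField_apply_mem_span _
  · simp only [hΦV, map_projectionField_apply hunit₀]
    exact isUnit_comp_frameMap_iff.1 hy

theorem map_mem_span_of_lieBracket_mem_span {V : κ → E → E} (hA : A x₀ = 0)
    (hhom : ∀ i,
      VectorField.lieBracket ℝ A (V i) x₀ ∈ Submodule.span ℝ (range fun l ↦ V l x₀)) :
    ∀ u ∈ Submodule.span ℝ (range fun l ↦ V l x₀),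
      A u ∈ Submodule.span ℝ (range fun l ↦ V l x₀) := by
  change Submodule.span ℝ _ ≤ (Submodule.span ℝ _).comap A.toLinearMap
  refine Submodule.span_le.2 (range_subset_iff.2 fun i ↦ ?_)
  simpa [VectorField.lieBracket, hA] using hhom i

theorem linearIndependent_comp_of_isInvertible {f : ι → E →L[ℝ] ℝ} {T : E →L[ℝ] E}
    (hf : LinearIndependent ℝ f) (hT : T.IsInvertible) :
    LinearIndependent ℝ fun a ↦ f a ∘L T := by
  obtain ⟨T, rfl⟩ := hT
  refine hf.map' (T.symm.arrowCongr (.refl ℝ ℝ)).toLinearMap ?_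
  exact LinearMap.ker_eq_bot.2 (T.symm.arrowCongr (.refl ℝ ℝ)).injective

theorem exists_straighteningMap_of_eigenspaces [FiniteDimensional ℝ E] [Fintype ι] [Finite κ]
    (e : κ ↪ ι) (hcard : Module.finrank ℝ E = Fintype.card ι) (hm : m ≠ 0)
    (hA : ⨆ μ, Module.End.eigenspace A.toLinearMap μ = ⊤) {V : κ → E → E}
    (hV : ∀ᶠ y in 𝓝 x₀, ∀ i, ContDiffAt ℝ m (V i) y)
    (hind : LinearIndependent ℝ fun i ↦ V i x₀) (hAx₀ : A x₀ = 0)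
    (hhom : ∀ᶠ y in 𝓝 x₀, ∀ i,
      VectorField.lieBracket ℝ A (V i) y ∈ Submodule.span ℝ (range fun l ↦ V l y))
    (hinv : ∀ᶠ y in 𝓝 x₀, ∀ i j,
      VectorField.lieBracket ℝ (V i) (V j) y ∈ Submodule.span ℝ (range fun l ↦ V l y)) :
    ∃ (b : Module.Basis ι ℝ E) (lam : ι → ℝ) (Φ : E → E), (∀ a, A (b a) = lam a • b a) ∧
      ∀ᶠ y in 𝓝 x₀, ContDiffAt ℝ m Φ y ∧ (fderiv ℝ Φ y).IsInvertible ∧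
        fderiv ℝ Φ y (A y) = A (Φ y) ∧
        (∀ i, fderiv ℝ Φ y (V i y) ∈ Submodule.span ℝ (b '' range e)) ∧
        LinearIndependent ℝ fun i j ↦ b.coord (e j) (fderiv ℝ Φ y (V i y)) := by
  cases nonempty_fintype κ
  obtain ⟨b, lam, hb, hspan⟩ := exists_eigenbasis_span_eq hA hcard e
    (map_mem_span_of_lieBracket_mem_span hAx₀ hhom.self_of_nhds) (finrank_span_eq_card hind)
  let Q : E →L[ℝ] κ → ℝ := .pi fun i ↦ (b.coord (e i)).toContinuousLinearMap
  have hQ_ind : LinearIndependent ℝ fun i ↦ Q (V i x₀) :=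
    linearIndependent_coord_of_mem_span hind fun i ↦ hspan.ge (Submodule.subset_span ⟨i, rfl⟩)
  have hQ_ker (v : E) (hv : Q v = 0) : Q (A v) = 0 := funext fun i ↦
    (coord_apply_of_eigenbasis hb (e i) v).trans (mul_eq_zero_of_right _ (congrFun hv i))
  obtain ⟨Φ, hΦ⟩ := exists_straighteningMap_of_frame hV hm hQ_ind hQ_ker hAx₀ hhom hinv
  rw [← hspan, range_comp' b e] at hΦ
  exact ⟨b, lam, Φ, hb, hΦ⟩

theorem stmt_7_general [FiniteDimensional ℝ E] [Fintype ι] [Fintype κ] [DecidableEq κ] (e : κ ↪ ι)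
    (hcard : Module.finrank ℝ E = Fintype.card ι) (hm : m ≠ 0)
    (hA : ⨆ μ, Module.End.eigenspace A.toLinearMap μ = ⊤) {U : Set E} (hU : IsOpen U)
    {V : κ → E → E} (hV : ∀ i, ContDiffOn ℝ m (V i) U)
    (hhom : ∀ i, ∀ y ∈ U,
      VectorField.lieBracket ℝ A (V i) y ∈ Submodule.span ℝ (range fun l ↦ V l y))
    (hinv : ∀ i j, ∀ y ∈ U,
      VectorField.lieBracket ℝ (V i) (V j) y ∈ Submodule.span ℝ (range fun l ↦ V l y))
    (hx₀ : x₀ ∈ U) (hAx₀ : A x₀ = 0) (hind : LinearIndependent ℝ fun i ↦ V i x₀) :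
    ∃ (W : Set E) (lam : ι → ℝ) (x : ι → E → ℝ), IsOpen W ∧ x₀ ∈ W ∧ W ⊆ U ∧
      (∀ a, ContDiffOn ℝ m (x a) W) ∧
      (∀ y ∈ W, LinearIndependent ℝ fun a ↦ fderiv ℝ (x a) y) ∧
      (∀ a, ∀ y ∈ W, fderiv ℝ (x a) y (A y) = lam a * x a y) ∧
      (∀ a ∉ range e, ∀ i, ∀ y ∈ W, fderiv ℝ (x a) y (V i y) = 0) ∧
      (∀ y ∈ W, (Matrix.of fun i j ↦ fderiv ℝ (x (e j)) y (V i y)).det ≠ 0) := by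
  have hm' : (m : WithTop ℕ∞) ≠ 0 := by exact_mod_cast hm
  have hnear : ∀ᶠ y in 𝓝 x₀, y ∈ U := hU.mem_nhds hx₀
  obtain ⟨b, lam, Φ, hb, hΦ⟩ := exists_straighteningMap_of_eigenspaces e hcard hm hA
    (hnear.mono fun y hy i ↦ (hV i).contDiffAt (hU.mem_nhds hy)) hind hAx₀
    (hnear.mono fun y hy i ↦ hhom i y hy) (hnear.mono fun y hy i j ↦ hinv i j y hy)
  obtain ⟨W, hW, hW_open, hx₀W⟩ := eventually_nhds_iff.1 (hΦ.and hnear)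
  choose hW hWU using hW
  choose hsmooth hiso hAΦ hspan hmatrix using hW
  let coord (a : ι) : E →L[ℝ] ℝ := (b.coord a).toContinuousLinearMap
  have hcoord : LinearIndependent ℝ coord :=
    b.linearIndependent_coord.map' _ LinearMap.toContinuousLinearMap.ker
  have hfderiv (a : ι) {y : E} (hy : y ∈ W) :
      fderiv ℝ (coord a ∘ Φ) y = coord a ∘L fderiv ℝ Φ y :=
    ((coord a).hasFDerivAt.comp y ((hsmooth y hy).differentiableAt hm').hasFDerivAt).fderiv
  refine ⟨W, lam, fun a ↦ coord a ∘ Φ, hW_open, hx₀W, hWU, fun a y hy ↦ ?_, fun y hy ↦ ?_,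
    fun a y hy ↦ ?_, fun a ha i y hy ↦ ?_, fun y hy ↦ ?_⟩
  · exact ((coord a).contDiff.contDiffAt.comp y (hsmooth y hy)).contDiffWithinAt
  · simp only [hfderiv _ hy]
    exact linearIndependent_comp_of_isInvertible hcoord (hiso y hy)
  · rw [hfderiv a hy]
    exact (congrArg (coord a) (hAΦ y hy)).trans (coord_apply_of_eigenbasis hb a (Φ y))
  · rw [hfderiv a hy]
    exact coord_apply_eq_zero_of_mem_span (hspan y hy i) ha
  · simp only [hfderiv _ hy]
    exact ((Matrix.isUnit_iff_isUnit_det _).1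
      (Matrix.linearIndependent_rows_iff_isUnit.1 (hmatrix y hy))).ne_zero

end HomogeneousFrobenius

/-- Homogeneous Frobenius theorem (even case, at a zero of `∇`): an
involutive distribution spanned by pointwise linearly independent homogeneous vector
fields `V₁, …, V_k` is, around any point `x₀` with `∇(x₀) = 0`, the span of
`∂/∂x¹, …, ∂/∂x^k` in a system of homogeneous coordinates `(xᵃ)`. -/
theorem stmt_7 (n k : ℕ) (hkn : k ≤ n) (w : Fin n → ℝ)
    (U : Set (Fin n → ℝ)) (hU : IsOpen U)
    (Vf : Fin k → (Fin n → ℝ) → (Fin n → ℝ))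
    (hV : ∀ i, ContDiffOn ℝ (⊤ : ℕ∞) (Vf i) U)
    (hind : ∀ y ∈ U, LinearIndependent ℝ (fun i => Vf i y))
    (hhom : ∀ i, ∃ c : ℝ, ∀ y ∈ U,
      fderiv ℝ (Vf i) y (fun j => w j * y j) - (fun j => w j * Vf i y j) = c • Vf i y)
    (hinv : ∀ i j, ∀ y ∈ U,
      fderiv ℝ (Vf j) y (Vf i y) - fderiv ℝ (Vf i) y (Vf j y)
        ∈ Submodule.span ℝ (Set.range fun l => Vf l y))
    (x₀ : Fin n → ℝ) (hx₀ : x₀ ∈ U) (h0 : (fun j => w j * x₀ j) = 0) :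
    ∃ (W : Set (Fin n → ℝ)) (lam : Fin n → ℝ) (x : Fin n → (Fin n → ℝ) → ℝ),
      IsOpen W ∧ x₀ ∈ W ∧ W ⊆ U ∧
      (∀ a, ContDiffOn ℝ (⊤ : ℕ∞) (x a) W) ∧
      (∀ y ∈ W, LinearIndependent ℝ (fun a => fderiv ℝ (x a) y)) ∧
      (∀ a, ∀ y ∈ W, fderiv ℝ (x a) y (fun j => w j * y j) = lam a * x a y) ∧
      (∀ j : Fin n, k ≤ (j : ℕ) → ∀ i : Fin k, ∀ y ∈ W,
        fderiv ℝ (x j) y (Vf i y) = 0) ∧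
      (∀ y ∈ W,
        (Matrix.of fun i j : Fin k =>
          fderiv ℝ (x (Fin.castLE hkn j)) y (Vf i y)).det ≠ 0) := by
  let A : (Fin n → ℝ) →L[ℝ] (Fin n → ℝ) := .pi fun j ↦ w j • .proj j
  have hA_eigen : ⨆ μ, Module.End.eigenspace A.toLinearMap μ = ⊤ := by
    have hA_diag : A.toLinearMap = (Matrix.diagonal w).toLin' := by
      ext; simp [A, Matrix.mulVec_diagonal]
    rw [hA_diag, Matrix.iSup_eigenspace_toLin'_diagonal_eq_top]
  obtain ⟨W, lam, x, hW, hx₀W, hWU, hx, hind', hhom', hvanish, hdet⟩ :=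
    stmt_7_general (A := A) (Fin.castLEEmb hkn) (by simp) (by simp) hA_eigen hU hV
      (fun i y hy ↦ by
        obtain ⟨c, hc⟩ := hhom i
        rw [VectorField.lieBracket, A.fderiv]
        exact (hc y hy).symm ▸ Submodule.smul_mem _ c (Submodule.subset_span ⟨i, rfl⟩))
      hinv hx₀ h0 (hind x₀ hx₀)
  refine ⟨W, lam, x, hW, hx₀W, hWU, hx, hind', hhom', fun j hj i ↦ hvanish j ?_ i, hdet⟩
  rintro ⟨l, rfl⟩
  exact absurd l.2 hj.not_gt
end

section
/- Homogeneous Poincaré lemma, weight-0 case at a non-zero of ∇: let n ≥ 1, let U = (0,∞) × ℝ^{n−1} with coordinates (x, y¹, …, y^{n−1}), and let ∇ = x∂ₓ (the diagonal weight vector field with weights (1, 0, …, 0)). Let ω be a smooth closed 1-form on U which is homogeneous of weight 0 with respect to ∇, i.e., x·∂ₓω₁ + ω₁ = 0 and x·∂ₓωᵢ = 0 for i = 2,…,n. Then there exist a constant c ∈ ℝ and a smooth function g : ℝ^{n−1} → ℝ such that ω₁(x, y) = c/x and ωᵢ(x, y) = ∂g/∂y^{i−1}(y) for i = 2,…,n;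 equivalently, ω = df with f(x,y) = c·log(x) + g(y). -/
/-!
Closedness and Cartan's formula give `d (ω(∇)) = L_∇ ω = 0`, so the function `ω(∇) = x ω(∂ₓ)` is a
constant `c`. If `f` is a primitive of `ω`, then `f - c log x` is therefore constant along the
`x`-lines, i.e. equal to its value `g(y) = f(1, y)` on the slice `x = 1`.
-/

open Set

section Intrinsic

variable {E F : Type*} [NormedAddCommGroup E] [NormedSpace ℝ E]
  [NormedAddCommGroup F] [NormedSpace ℝ F]

theorem eq_of_forall_segment_fderiv_apply_sub_eq_zero {f : E → F} {x y : E}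
    (hf : ∀ z ∈ segment ℝ x y, DifferentiableAt ℝ f z)
    (hf' : ∀ z ∈ segment ℝ x y, fderiv ℝ f z (y - x) = 0) : f x = f y := by
  have hmem : ∀ t ∈ Icc (0 : ℝ) 1, AffineMap.lineMap x y t ∈ segment ℝ x y := fun t ht =>
    segment_eq_image_lineMap ℝ x y ▸ mem_image_of_mem _ ht
  have hderiv : ∀ t ∈ Icc (0 : ℝ) 1,
      HasDerivWithinAt (fun t : ℝ => f (AffineMap.lineMap x y t)) 0 (Icc 0 1) t := fun t ht => by
    have hcomp := (hf _ (hmem t ht)).hasFDerivAt.comp_hasDerivAt t AffineMap.hasDerivAt_lineMap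
    rw [hf' _ (hmem t ht)] at hcomp
    exact hcomp.hasDerivWithinAt
  have hbound := norm_image_sub_le_of_norm_deriv_le_segment_01' hderiv fun _ _ => norm_zero.le
  simpa [sub_eq_zero, eq_comm] using hbound

theorem exists_contDiffOn_hasFDerivAt_of_fderiv_symmetric [CompleteSpace F] {U : Set E}
    {ω : E → E →L[ℝ] F} {k : ℕ∞} (hk : k ≠ 0) (hU : IsOpen U) (hUc : Convex ℝ U)
    (hω : ContDiffOn ℝ k ω U) (hclosed : ∀ y ∈ U, ∀ u v, fderiv ℝ ω y u v = fderiv ℝ ω y v u) :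
    ∃ f : E → F, ContDiffOn ℝ (k + 1) f U ∧ ∀ y ∈ U, HasFDerivAt f (ω y) y := by
  obtain ⟨f, hf⟩ := hUc.exists_forall_hasFDerivAt_of_fderiv_symmetric hU
    (hω.differentiableOn (by simpa using hk)) hclosed
  refine ⟨f, (contDiffOn_succ_iff_fderiv_of_isOpen hU).2 ⟨?_, by simp, ?_⟩, hf⟩
  · exact fun y hy => (hf y hy).differentiableAt.differentiableWithinAt
  · exact hω.congr fun y hy => (hf y hy).fderiv

/-- The Lie derivative `L_X ω` of the 1-form `ω` along the vector field `X`: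
`(L_X ω)(v) = X(ω(v)) + ω(D_v X)` for constant fields `v`.
Its vanishing is the weight-`0` homogeneity of `ω` with respect to `X`. -/
noncomputable def lieDerivOneForm (X : E → E) (ω : E → E →L[ℝ] F) (y : E) : E →L[ℝ] F :=
  fderiv ℝ ω y (X y) + (ω y).comp (fderiv ℝ X y)

theorem hasFDerivAt_apply_lieDerivOneForm {X : E → E} {ω : E → E →L[ℝ] F} {y : E}
    (hX : DifferentiableAt ℝ X y) (hω : DifferentiableAt ℝ ω y)
    (hclosed : ∀ u v, fderiv ℝ ω y u v = fderiv ℝ ω y v u) :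
    HasFDerivAt (fun z => ω z (X z)) (lieDerivOneForm X ω y) y := by
  convert hω.hasFDerivAt.clm_apply hX.hasFDerivAt using 1
  ext v
  simp [lieDerivOneForm, hclosed (X y) v, add_comm]

theorem exists_apply_eq_const_of_lieDerivOneForm_eq_zero {U : Set E} {X : E → E}
    {ω : E → E →L[ℝ] F} (hU : IsOpen U) (hUc : IsPreconnected U) (hX : DifferentiableOn ℝ X U)
    (hω : DifferentiableOn ℝ ω U) (hclosed : ∀ y ∈ U, ∀ u v, fderiv ℝ ω y u v = fderiv ℝ ω y v u)
    (hhom : ∀ y ∈ U, lieDerivOneForm X ω y = 0) :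
    ∃ c, ∀ y ∈ U, ω y (X y) = c := by
  have hderiv : ∀ y ∈ U, HasFDerivAt (fun z => ω z (X z)) 0 y := fun y hy => by
    have hy' := hU.mem_nhds hy
    exact hhom y hy ▸ hasFDerivAt_apply_lieDerivOneForm (hX.differentiableAt hy')
      (hω.differentiableAt hy') (hclosed y hy)
  exact hU.exists_is_const_of_fderiv_eq_zero hUc
    (fun y hy => (hderiv y hy).differentiableAt.differentiableWithinAt)
    (fun y hy => (hderiv y hy).fderiv)

theorem fderiv_apply_eq_zero_of_add_smul_eq {g : E → F} {e y : E} (hg : DifferentiableAt ℝ g y)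
    (hinv : ∀ t : ℝ, g (y + t • e) = g y) : fderiv ℝ g y e = 0 := by
  simp [← hg.lineDeriv_eq_fderiv, lineDeriv, hinv]

section HalfSpace

variable {φ : E →L[ℝ] ℝ} {e : E}

theorem isOpen_setOf_pos (φ : E →L[ℝ] ℝ) : IsOpen {y | 0 < φ y} :=
  isOpen_lt continuous_const φ.continuous

theorem convex_setOf_pos (φ : E →L[ℝ] ℝ) : Convex ℝ {y | 0 < φ y} :=
  convex_halfSpace_gt φ.toLinearMap.isLinear 0

theorem hasFDerivAt_log_smul (φ : E →L[ℝ] ℝ) (c : F) {y : E} (hy : φ y ≠ 0) :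
    HasFDerivAt (fun z => Real.log (φ z) • c) (((φ y)⁻¹ • φ).smulRight c) y :=
  (φ.hasFDerivAt.log hy).smul_const c

theorem eq_log_smul_add_of_fderiv_apply {f : E → F} {c : F} (he : φ e = 1)
    (hf : ∀ y, 0 < φ y → DifferentiableAt ℝ f y)
    (hfe : ∀ y, 0 < φ y → φ y • fderiv ℝ f y e = c) {y : E} (hy : 0 < φ y) :
    f y = Real.log (φ y) • c + f (y + (1 - φ y) • e) := by
  have hderiv : ∀ z, 0 < φ z → HasFDerivAt (fun z => f z - Real.log (φ z) • c)
      (fderiv ℝ f z - ((φ z)⁻¹ • φ).smulRight c) z := fun z hz =>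
    (hf z hz).hasFDerivAt.sub (hasFDerivAt_log_smul φ c hz.ne')
  have hslice : φ (y + (1 - φ y) • e) = 1 := by simp [he]
  have hpos : ∀ z ∈ segment ℝ y (y + (1 - φ y) • e), 0 < φ z := fun z hz =>
    (convex_setOf_pos φ).segment_subset hy (by simp [hslice]) hz
  have hconst := eq_of_forall_segment_fderiv_apply_sub_eq_zero
    (fun z hz => (hderiv z (hpos z hz)).differentiableAt) fun z hz => by
      have hz' := hpos z hz
      simp [(hderiv z hz').fderiv, he, sub_eq_zero, eq_inv_smul_iff₀ hz'.ne', hfe z hz']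
  rw [hslice] at hconst
  simpa [sub_eq_iff_eq_add'] using hconst

theorem exists_eq_inv_smul_add_fderiv_of_closed_of_homogeneous [CompleteSpace F]
    {ω : E → E →L[ℝ] F} {k : ℕ∞} (hk : k ≠ 0) (he : φ e = 1)
    (hω : ContDiffOn ℝ k ω {y | 0 < φ y})
    (hclosed : ∀ y, 0 < φ y → ∀ u v, fderiv ℝ ω y u v = fderiv ℝ ω y v u)
    (hhom : ∀ y, 0 < φ y → lieDerivOneForm (φ.smulRight e) ω y = 0) :
    ∃ (c : F) (g : E → F), ContDiff ℝ (k + 1) g ∧ (∀ y (t : ℝ), g (y + t • e) = g y) ∧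
      ∀ y, 0 < φ y → ω y = ((φ y)⁻¹ • φ).smulRight c + fderiv ℝ g y := by
  have hU := isOpen_setOf_pos φ
  have hUc := convex_setOf_pos φ
  obtain ⟨c, hc⟩ := exists_apply_eq_const_of_lieDerivOneForm_eq_zero hU hUc.isPreconnected
    (φ.smulRight e).differentiableOn (hω.differentiableOn (by simpa using hk)) hclosed hhom
  obtain ⟨f, hf, hfω⟩ :=
    exists_contDiffOn_hasFDerivAt_of_fderiv_symmetric hk hU hUc hω hclosed
  let g : E → F := fun z => f (z + (1 - φ z) • e)
  have hg : ContDiff ℝ (k + 1) g := hf.comp_contDiff (by fun_prop) fun z => by simp [he]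
  have hfg : ∀ y, 0 < φ y → f y = Real.log (φ y) • c + g y := fun y hy =>
    eq_log_smul_add_of_fderiv_apply he (fun z hz => (hfω z hz).differentiableAt)
      (fun z hz => by simpa [(hfω z hz).fderiv] using hc z hz) hy
  refine ⟨c, g, hg, fun y t => ?_, fun y hy => ?_⟩
  · have hslice : y + t • e + (1 - φ (y + t • e)) • e = y + (1 - φ y) • e := by
      rw [map_add, map_smul, he, smul_eq_mul, mul_one]
      module
    exact congrArg f hslice
  · have hderiv := (hasFDerivAt_log_smul φ c hy.ne').fun_add
      (hg.differentiable (by simp) y).hasFDerivAt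
    exact (hfω y hy).unique
      (hderiv.congr_of_eventuallyEq (Filter.eventually_of_mem (hU.mem_nhds hy) hfg))

end HalfSpace

end Intrinsic

section Coordinates

variable {ι F : Type*} [DecidableEq ι] [NormedAddCommGroup F] [NormedSpace ℝ F]

theorem continuousLinearMap_ext_single [Finite ι] {A B : (ι → ℝ) →L[ℝ] F}
    (h : ∀ i, A (Pi.single i 1) = B (Pi.single i 1)) : A = B :=
  ContinuousLinearMap.coe_injective <| LinearMap.pi_ext' fun i =>
    LinearMap.ext_ring <| by simpa using h i

variable [Fintype ι]

/-- The `F`-valued 1-form `∑ i, ω i dyⁱ`, passing from components to a field of linear maps. -/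
noncomputable def oneFormOfComponents (ω : (ι → ℝ) → ι → F) (y : ι → ℝ) : (ι → ℝ) →L[ℝ] F :=
  (ContinuousLinearEquiv.piRing (𝕜 := ℝ) ι).symm (ω y)

variable {ω : (ι → ℝ) → ι → F} {y : ι → ℝ}

@[simp]
theorem oneFormOfComponents_apply_single (i : ι) :
    oneFormOfComponents ω y (Pi.single i 1) = ω y i :=
  congrFun ((ContinuousLinearEquiv.piRing (𝕜 := ℝ) ι).apply_symm_apply (ω y)) i

theorem contDiffOn_oneFormOfComponents {U : Set (ι → ℝ)} {k : WithTop ℕ∞}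
    (hω : ∀ i, ContDiffOn ℝ k (fun z => ω z i) U) : ContDiffOn ℝ k (oneFormOfComponents ω) U :=
  (ContinuousLinearEquiv.piRing (𝕜 := ℝ) (E := F) ι).symm.contDiff.comp_contDiffOn
    (contDiffOn_pi.2 hω)

theorem fderiv_oneFormOfComponents_apply_single (hω : ∀ i, DifferentiableAt ℝ (fun z => ω z i) y)
    (u : ι → ℝ) (i : ι) :
    fderiv ℝ (oneFormOfComponents ω) y u (Pi.single i 1) = fderiv ℝ (fun z => ω z i) y u := by
  have hderiv : HasFDerivAt (oneFormOfComponents ω)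
      ((ContinuousLinearEquiv.piRing (𝕜 := ℝ) ι).symm.toContinuousLinearMap.comp
        (ContinuousLinearMap.pi fun i => fderiv ℝ (fun z => ω z i) y)) y :=
    (ContinuousLinearEquiv.piRing (𝕜 := ℝ) (E := F) ι).symm.hasFDerivAt.comp y
      (hasFDerivAt_pi.2 fun i => (hω i).hasFDerivAt)
  rw [hderiv.fderiv]
  exact oneFormOfComponents_apply_single (ω := fun _ i => fderiv ℝ (fun z => ω z i) y u) (y := y) i

theorem fderiv_oneFormOfComponents_symmetric (hω : ∀ i, DifferentiableAt ℝ (fun z => ω z i) y)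
    (hclosed : ∀ i j, fderiv ℝ (fun z => ω z i) y (Pi.single j 1) =
      fderiv ℝ (fun z => ω z j) y (Pi.single i 1)) (u v : ι → ℝ) :
    fderiv ℝ (oneFormOfComponents ω) y u v = fderiv ℝ (oneFormOfComponents ω) y v u := by
  set A := fderiv ℝ (oneFormOfComponents ω) y with hA
  have hflip : A = A.flip :=
    continuousLinearMap_ext_single fun j => continuousLinearMap_ext_single fun i => by
      simpa [hA, fderiv_oneFormOfComponents_apply_single hω] using hclosed i j
  exact DFunLike.congr_fun (DFunLike.congr_fun hflip u) v

theorem lieDerivOneForm_oneFormOfComponents_apply_single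
    (hω : ∀ i, DifferentiableAt ℝ (fun z => ω z i) y) (i₀ i : ι) :
    lieDerivOneForm ((ContinuousLinearMap.proj i₀ : (ι → ℝ) →L[ℝ] ℝ).smulRight (Pi.single i₀ 1))
        (oneFormOfComponents ω) y (Pi.single i 1) =
      y i₀ • fderiv ℝ (fun z => ω z i) y (Pi.single i₀ 1) +
        (Pi.single i 1 : ι → ℝ) i₀ • ω y i₀ := by
  simp [lieDerivOneForm, fderiv_oneFormOfComponents_apply_single hω]

theorem lieDerivOneForm_oneFormOfComponents_eq_zero {m : ℕ}
    {ω : (Fin (m + 1) → ℝ) → Fin (m + 1) → F} {y : Fin (m + 1) → ℝ}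
    (hω : ∀ i, DifferentiableAt ℝ (fun z => ω z i) y)
    (hhom0 : y 0 • fderiv ℝ (fun z => ω z 0) y (Pi.single 0 1) + ω y 0 = 0)
    (hhomi : ∀ i : Fin m, y 0 • fderiv ℝ (fun z => ω z i.succ) y (Pi.single 0 1) = 0) :
    lieDerivOneForm
      ((ContinuousLinearMap.proj 0 : (Fin (m + 1) → ℝ) →L[ℝ] ℝ).smulRight (Pi.single 0 1))
      (oneFormOfComponents ω) y = 0 := by
  refine continuousLinearMap_ext_single fun i => ?_
  rw [lieDerivOneForm_oneFormOfComponents_apply_single hω]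
  cases i using Fin.cases with
  | zero => simpa using hhom0
  | succ i => simpa using hhomi i

end Coordinates

section HyperplaneEmbedding

/-- The embedding of `ℝᵐ` into `ℝᵐ⁺¹` as the coordinate hyperplane `y 0 = 0`, used to
restrict functions that do not depend on `y 0`. -/
def hyperplaneEmbedding (m : ℕ) : (Fin m → ℝ) →L[ℝ] (Fin (m + 1) → ℝ) :=
  ContinuousLinearMap.finCons (M := fun _ => ℝ) 0 (.id ℝ _)

variable {m : ℕ}

theorem hyperplaneEmbedding_single (i : Fin m) :
    hyperplaneEmbedding m (Pi.single i 1) = Pi.single i.succ 1 := by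
  ext j
  cases j using Fin.cases <;> simp [hyperplaneEmbedding, Pi.single_apply, eq_comm]

theorem hyperplaneEmbedding_tail_add (y : Fin (m + 1) → ℝ) :
    hyperplaneEmbedding m (fun j => y j.succ) + y 0 • Pi.single 0 1 = y := by
  ext j
  cases j using Fin.cases <;> simp [hyperplaneEmbedding]

theorem fderiv_comp_hyperplaneEmbedding_apply_single {F : Type*} [NormedAddCommGroup F]
    [NormedSpace ℝ F] {g : (Fin (m + 1) → ℝ) → F} (hg : Differentiable ℝ g)
    (hinv : ∀ y (t : ℝ), g (y + t • Pi.single 0 1) = g y) (y : Fin (m + 1) → ℝ) (i : Fin m) :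
    fderiv ℝ (g ∘ hyperplaneEmbedding m) (fun j => y j.succ) (Pi.single i 1) =
      fderiv ℝ g y (Pi.single i.succ 1) := by
  have htranslate : fderiv ℝ g (hyperplaneEmbedding m fun j => y j.succ) = fderiv ℝ g y := by
    conv_rhs => rw [← hyperplaneEmbedding_tail_add y, ← fderiv_comp_add_right]
    simp only [hinv]
  rw [fderiv_comp _ (hg _) (hyperplaneEmbedding m).differentiableAt,
    ContinuousLinearMap.fderiv, ContinuousLinearMap.comp_apply, htranslate,
    hyperplaneEmbedding_single]

end HyperplaneEmbedding

theorem stmt_9_general {F : Type*} [NormedAddCommGroup F] [NormedSpace ℝ F] [CompleteSpace F]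
    {m : ℕ} {k : ℕ∞} (hk : k ≠ 0) (ω : (Fin (m + 1) → ℝ) → Fin (m + 1) → F)
    (hω : ∀ i, ContDiffOn ℝ k (fun y => ω y i) {y | 0 < y 0})
    (hclosed : ∀ y, 0 < y 0 → ∀ i j,
      fderiv ℝ (fun z => ω z i) y (Pi.single j 1) = fderiv ℝ (fun z => ω z j) y (Pi.single i 1))
    (hhom0 : ∀ y, 0 < y 0 →
      y 0 • fderiv ℝ (fun z => ω z 0) y (Pi.single 0 1) + ω y 0 = 0)
    (hhomi : ∀ y, 0 < y 0 → ∀ i : Fin m,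
      y 0 • fderiv ℝ (fun z => ω z i.succ) y (Pi.single 0 1) = 0) :
    ∃ (c : F) (g : (Fin m → ℝ) → F), ContDiff ℝ (k + 1) g ∧
      ∀ y, 0 < y 0 → ω y 0 = (y 0)⁻¹ • c ∧
        ∀ i : Fin m, ω y i.succ = fderiv ℝ g (fun j => y j.succ) (Pi.single i 1) := by
  have hdiff : ∀ y, 0 < y 0 → ∀ i, DifferentiableAt ℝ (fun z => ω z i) y := fun y hy i =>
    ((hω i).differentiableOn (by simpa using hk)).differentiableAt
      ((isOpen_lt continuous_const (continuous_apply 0)).mem_nhds hy)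
  obtain ⟨c, g, hg, hinv, hgω⟩ := exists_eq_inv_smul_add_fderiv_of_closed_of_homogeneous
    (φ := (ContinuousLinearMap.proj 0 : (Fin (m + 1) → ℝ) →L[ℝ] ℝ)) (e := Pi.single 0 1)
    (ω := oneFormOfComponents ω) hk (by simp) (contDiffOn_oneFormOfComponents hω)
    (fun y hy => fderiv_oneFormOfComponents_symmetric (hdiff y hy) (hclosed y hy))
    (fun y hy => lieDerivOneForm_oneFormOfComponents_eq_zero (hdiff y hy) (hhom0 y hy) (hhomi y hy))
  have hgd : Differentiable ℝ g := hg.differentiable (by simp)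
  have hcomp : ∀ y, 0 < y 0 → ∀ i, ω y i =
      (y 0)⁻¹ • (Pi.single i 1 : Fin (m + 1) → ℝ) 0 • c + fderiv ℝ g y (Pi.single i 1) :=
    fun y hy i => by
      rw [← oneFormOfComponents_apply_single (ω := ω), hgω y hy]
      simp [mul_smul]
  refine ⟨c, g ∘ hyperplaneEmbedding m, hg.comp (hyperplaneEmbedding m).contDiff,
    fun y hy => ⟨?_, fun i => ?_⟩⟩
  · simp [hcomp y hy, fderiv_apply_eq_zero_of_add_smul_eq (hgd y) (hinv y)]
  · simp [hcomp y hy, fderiv_comp_hyperplaneEmbedding_apply_single hgd hinv]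

/-- Homogeneous Poincaré lemma, weight-0 case at a non-zero of `∇`: on
`U = (0,∞) × ℝᵐ` (first coordinate `x = y₀`), with `∇ = x ∂ₓ`, every smooth closed 1-form
`ω` homogeneous of weight `0` has components `ω₀ = c/x` and `ωᵢ = ∂g/∂yⁱ(y)` for a
constant `c` and a smooth function `g` of the remaining variables;
equivalently `ω = d(c·log x + g(y))`. -/
theorem stmt_9 (m : ℕ)
    (U : Set (Fin (m + 1) → ℝ)) (hUdef : U = {y | 0 < y 0})
    (ω : (Fin (m + 1) → ℝ) → Fin (m + 1) → ℝ)
    (hω : ∀ i, ContDiffOn ℝ (⊤ : ℕ∞) (fun y => ω y i) U)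
    (hclosed : ∀ y ∈ U, ∀ i j,
      fderiv ℝ (fun z => ω z i) y (Pi.single j 1)
        = fderiv ℝ (fun z => ω z j) y (Pi.single i 1))
    (hhom0 : ∀ y ∈ U,
      y 0 * fderiv ℝ (fun z => ω z 0) y (Pi.single 0 1) + ω y 0 = 0)
    (hhomi : ∀ y ∈ U, ∀ i : Fin m,
      y 0 * fderiv ℝ (fun z => ω z i.succ) y (Pi.single 0 1) = 0) :
    ∃ (c : ℝ) (g : (Fin m → ℝ) → ℝ), ContDiff ℝ (⊤ : ℕ∞) g ∧
      ∀ y ∈ U, ω y 0 = c / y 0 ∧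
        ∀ i : Fin m, ω y i.succ = fderiv ℝ g (fun j => y j.succ) (Pi.single i 1) := by
  subst hUdef
  simpa [div_eq_inv_mul] using stmt_9_general (k := ⊤) (by simp) ω hω hclosed hhom0 hhomi
end

section
/- Darboux theorem for homogeneous symplectic forms (even case): let ∇(x) = (w₁x₁,…,w_{2r}x_{2r}) on ℝ^{2r}, let U ⊆ ℝ^{2r} be open, and let ω be a smooth 2-form on U which is closed, nondegenerate at every point, and homogeneous of weight w ∈ ℝ with respect to ∇. Then for every x₀ ∈ U there exist an open neighbourhood V ⊆ U of x₀, real numbers λ₁,…,λᵣ, μ₁,…,μᵣ, and smooth functions q¹,…,qʳ, p₁,…,pᵣ on V whose differentials are linearly independent at every point of V, satisfying Σⱼ wⱼ xⱼ ∂ⱼqⁱ = λᵢ·qⁱ and Σⱼ wⱼ xⱼ ∂ⱼpᵢ = μᵢ·pᵢ on V, such that ω_x(u, v) = Σᵢ (Dpᵢ(x)(u)·Dqⁱ(x)(v) − Dpᵢ(x)(v)·Dqⁱ(x)(u)) for all x ∈ V and u, v ∈ ℝ^{2r}; that is, ω = Σᵢ dpᵢ ∧ dqⁱ in homogeneous Darboux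 coordinates. -/
/-!
Moser's method, carried out equivariantly for the linear field `∇ = W`. Choose a map `f` near `x₀`
with `W`-homogeneous components whose pullback of the standard form `∑ᵢ dpᵢ ∧ dqⁱ` equals `Ω` at
`x₀`: if `W x₀ = 0`, the linear normal form of `Ω x₀` relative to the weight decomposition gives
one; if `W x₀ ≠ 0`, any linear symplectic coordinates can be prescribed to first order at `x₀` and
transported along the orbits of `W`, with weights of our choice. The difference `θ` of the two
forms is closed and homogeneous, vanishes at `x₀`, and restricts to zero on the orbit of `x₀`.
Contracting linearly onto that orbit, by an equivariant homotopy, yields a homogeneous primitive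
`α` of `θ` vanishing to second order at `x₀`. The field `X` solving `ι_X (Ω + sθ) = -α` then
commutes with `W`, so its flow from `s = 0` to `s = 1` is an equivariant map `φ` with
`φ^*(Ω + θ) = Ω`, and the components of `f ∘ φ` are the required coordinates.
-/

namespace HomogeneousDarboux

open Set Filter Topology
open scoped ContDiff unitInterval

universe u

set_option maxSynthPendingDepth 3

/-! ### Superposition operators on spaces of continuous maps -/

section Superposition

variable {X : Type*} [TopologicalSpace X] [CompactSpace X] {E F : Type u}
  [NormedAddCommGroup E] [NormedSpace ℝ E] [NormedAddCommGroup F] [NormedSpace ℝ F]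

/-- Pointwise application of a family of operators to a family of vectors, as a continuous bilinear
map. It expresses the derivative of a superposition operator. -/
noncomputable def pointwiseApply : C(X, E →L[ℝ] F) →L[ℝ] C(X, E) →L[ℝ] C(X, F) :=
  LinearMap.mkContinuous₂
    (LinearMap.mk₂ ℝ (fun (A : C(X, E →L[ℝ] F)) (h : C(X, E)) =>
        (⟨fun s => A s (h s), by fun_prop⟩ : C(X, F)))
      (by intros; ext; simp) (by intros; ext; simp) (by intros; ext; simp) (by intros; ext; simp))
    1 fun A h => by
      rw [one_mul, ContinuousMap.norm_le _ (by positivity)]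
      exact fun s => (A s).le_of_opNorm_le_of_le (A.norm_coe_le_norm s) (h.norm_coe_le_norm s)

theorem hasFDerivAt_postcomp {f : C(E, F)} {f' : C(E, E →L[ℝ] F)}
    (hf : ∀ x, HasFDerivAt f (f' x) x) (γ : C(X, E)) :
    HasFDerivAt (fun γ : C(X, E) => f.comp γ) (pointwiseApply (f'.comp γ)) γ := by
  rw [hasFDerivAt_iff_isLittleO_nhds_zero, Asymptotics.isLittleO_iff]
  intro ε hε
  obtain ⟨δ, hδ, hf'⟩ :=
    (Metric.continuousAt_iff (f := fun γ : C(X, E) => f'.comp γ) (a := γ)).1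
      (ContinuousMap.continuous_postcomp f').continuousAt ε hε
  filter_upwards [Metric.ball_mem_nhds (0 : C(X, E)) hδ] with h hh
  rw [mem_ball_zero_iff] at hh
  rw [ContinuousMap.norm_le _ (by positivity)]
  intro s
  have hsub : ∀ y ∈ Metric.ball (γ s) δ, ‖f' y - f' (γ s)‖ ≤ ε := by
    intro y hy
    have hdist : dist (γ + ContinuousMap.const X (y - γ s)) γ < δ := by
      rw [dist_eq_norm, add_sub_cancel_left]
      exact ((ContinuousMap.norm_le _ (norm_nonneg (y - γ s))).2 fun _ => le_rfl).trans_lt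
        (mem_ball_iff_norm.1 hy)
    simpa [dist_eq_norm] using (ContinuousMap.dist_apply_le_dist s).trans (hf' hdist).le
  have hmvt := (convex_ball (γ s) δ).norm_image_sub_le_of_norm_hasFDerivWithin_le'
    (fun y _ => (hf y).hasFDerivWithinAt) hsub (Metric.mem_ball_self hδ)
    (y := γ s + h s) (by simpa using (h.norm_coe_le_norm s).trans_lt hh)
  rw [add_sub_cancel_left] at hmvt
  exact hmvt.trans (by gcongr; exact h.norm_coe_le_norm s)

theorem contDiff_postcomp {f : C(E, F)} (hf : ContDiff ℝ ∞ f) :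
    ContDiff ℝ ∞ (fun γ : C(X, E) => f.comp γ) := by
  rw [contDiff_infty]
  intro n
  induction n generalizing F with
  | zero => exact contDiff_zero.2 (ContinuousMap.continuous_postcomp f)
  | succ n ih =>
    let f' : C(E, E →L[ℝ] F) := ⟨fderiv ℝ f, hf.continuous_fderiv (by simp)⟩
    rw [Nat.cast_add, Nat.cast_one, contDiff_succ_iff_hasFDerivAt]
    have hf' : ContDiff ℝ n (fun γ : C(X, E) => f'.comp γ) := ih (contDiff_infty_iff_fderiv.1 hf).2
    exact ⟨fun γ => pointwiseApply (f'.comp γ), by fun_prop,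
      hasFDerivAt_postcomp fun x => (hf.differentiable (by simp) x).hasFDerivAt⟩

/-- The superposition (Nemytskii) operator `γ ↦ (s ↦ f (s, γ s))` on paths over `[0, 1]`. -/
def superposition {E F : Type*} [TopologicalSpace E] [TopologicalSpace F] (f : C(ℝ × E, F))
    (γ : C(I, E)) : C(I, F) :=
  f.comp (ContinuousMap.prodMk ⟨Subtype.val, continuous_subtype_val⟩ γ)

theorem superposition_apply {E F : Type*} [TopologicalSpace E] [TopologicalSpace F]
    (f : C(ℝ × E, F)) (γ : C(I, E)) (s : I) :
    superposition f γ s = f (s, γ s) := rfl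

theorem prodMk_eq_const_add_compLeftContinuous_inr {X : Type*} [TopologicalSpace X]
    (c : C(X, ℝ)) :
    ContinuousMap.prodMk c = fun γ : C(X, E) =>
      c.prodMk 0 + (ContinuousLinearMap.inr ℝ ℝ E).compLeftContinuous ℝ X γ := by
  ext γ s <;> simp

theorem contDiff_superposition {f : C(ℝ × E, F)} (hf : ContDiff ℝ ∞ f) :
    ContDiff ℝ ∞ (superposition f) := by
  refine (contDiff_postcomp hf).comp ?_
  rw [prodMk_eq_const_add_compLeftContinuous_inr]
  exact contDiff_const.add (ContinuousLinearMap.contDiff _)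

theorem hasFDerivAt_superposition {f : C(ℝ × E, F)} (hf : ContDiff ℝ ∞ f)
    (γ : C(I, E)) :
    ∃ T : C(I, E) →L[ℝ] C(I, F), HasFDerivAt (superposition f) T γ ∧
      ∀ h s, T h s = fderiv ℝ f (s, γ s) (0, h s) := by
  have hd : ∀ p, HasFDerivAt f (fderiv ℝ f p) p := fun p =>
    (hf.differentiable (by simp) p).hasFDerivAt
  refine ⟨_, (hasFDerivAt_postcomp (f' := ⟨_, hf.continuous_fderiv (by simp)⟩) hd _).comp γ
    (f' := (ContinuousLinearMap.inr ℝ ℝ E).compLeftContinuous ℝ _) ?_, fun h s => rfl⟩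
  rw [prodMk_eq_const_add_compLeftContinuous_inr]
  exact (ContinuousLinearMap.hasFDerivAt _).const_add _

end Superposition

section Volterra

variable {E : Type*} [NormedAddCommGroup E]

theorem intervalIntegrable_IccExtend (γ : C(I, E)) (a b : ℝ) :
    IntervalIntegrable (IccExtend zero_le_one γ) MeasureTheory.volume a b :=
  (γ.continuous.Icc_extend').intervalIntegrable a b

variable [NormedSpace ℝ E]

/-- The Volterra operator `γ ↦ (t ↦ ∫ s in 0..t, γ s)` on paths over `[0, 1]`. -/
noncomputable def volterra : C(I, E) →L[ℝ] C(I, E) :=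
  LinearMap.mkContinuous
    { toFun γ := ⟨fun t => ∫ s in (0 : ℝ)..t, IccExtend zero_le_one γ s,
        (intervalIntegral.continuous_primitive (intervalIntegrable_IccExtend γ) 0).comp
          continuous_subtype_val⟩
      map_add' γ δ := by
        ext t
        exact intervalIntegral.integral_add (intervalIntegrable_IccExtend γ 0 t)
          (intervalIntegrable_IccExtend δ 0 t)
      map_smul' c γ := by
        ext t
        exact intervalIntegral.integral_smul c (IccExtend zero_le_one γ) }
    1 fun γ => by
      rw [one_mul, ContinuousMap.norm_le _ (norm_nonneg γ)]
      intro t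
      refine (intervalIntegral.norm_integral_le_of_norm_le_const
        fun s _ => γ.norm_coe_le_norm (projIcc 0 1 zero_le_one s)).trans ?_
      rw [sub_zero, abs_of_nonneg t.2.1]
      exact mul_le_of_le_one_right (norm_nonneg γ) t.2.2

theorem volterra_apply_one {γ : C(I, E)} {g : ℝ → E}
    (hγ : ∀ s : I, γ s = g s) : volterra γ 1 = ∫ s in (0 : ℝ)..1, g s := by
  refine intervalIntegral.integral_congr fun s hs => ?_
  rw [Icc.coe_one, uIcc_of_le zero_le_one] at hs
  rw [IccExtend_of_mem _ _ hs, hγ]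

variable [CompleteSpace E]

theorem hasDerivWithinAt_IccExtend_of_eq_const_add_volterra {γ δ : C(I, E)} {x : E}
    (hδ : δ = .const I x + volterra γ) {s : ℝ} (hs : s ∈ I) :
    HasDerivWithinAt (IccExtend zero_le_one δ) (IccExtend zero_le_one γ s) I s := by
  have hprimitive := (γ.continuous.Icc_extend' (h := zero_le_one)).integral_hasStrictDerivAt 0 s
  refine (hprimitive.hasDerivAt.hasDerivWithinAt.const_add x).congr_of_mem (fun t ht => ?_) hs
  rw [IccExtend_of_mem _ _ ht, hδ]
  rfl

end Volterra

section ParametricIntegral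

variable {E F : Type u} [NormedAddCommGroup E] [NormedSpace ℝ E]
  [NormedAddCommGroup F] [NormedSpace ℝ F]

theorem contDiff_integral_zero_one {A : ℝ × E → F} (hA : ContDiff ℝ ∞ A) :
    ContDiff ℝ ∞ (fun x => ∫ s in (0 : ℝ)..1, A (s, x)) := by
  let N := superposition ⟨A, hA.continuous⟩
  have hN : ContDiff ℝ ∞ N := contDiff_superposition hA
  have heq : ∀ x, volterra (N (ContinuousLinearMap.const ℝ _ x)) 1 =
      ∫ s in (0 : ℝ)..1, A (s, x) := fun x => volterra_apply_one fun s => rfl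
  rw [← funext heq]
  exact (ContinuousMap.evalCLM ℝ 1).contDiff.comp
    (volterra.contDiff.comp (hN.comp (ContinuousLinearMap.const ℝ _).contDiff))

theorem fderiv_integral_zero_one {A : ℝ × E → F} (hA : ContDiff ℝ ∞ A) (x u : E) :
    fderiv ℝ (fun x => ∫ s in (0 : ℝ)..1, A (s, x)) x u =
      ∫ s in (0 : ℝ)..1, fderiv ℝ A (s, x) (0, u) := by
  let N := superposition ⟨A, hA.continuous⟩
  let const : E →L[ℝ] C(I, E) := ContinuousLinearMap.const ℝ _
  let eval : C(I, F) →L[ℝ] F := ContinuousMap.evalCLM ℝ 1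
  obtain ⟨T, hT, hT_apply⟩ :=
    hasFDerivAt_superposition (f := ⟨A, hA.continuous⟩) hA (const x)
  have heq : ∀ x, volterra (N (const x)) 1 = ∫ s in (0 : ℝ)..1, A (s, x) :=
    fun x => volterra_apply_one fun s => rfl
  have hderiv := (eval.comp volterra).hasFDerivAt.comp x (hT.comp x const.hasFDerivAt)
  rw [← funext heq]
  exact (DFunLike.congr_fun hderiv.fderiv u).trans (volterra_apply_one fun s => hT_apply _ s)

end ParametricIntegral

/-! ### Flows of time-dependent vector fields -/

theorem exists_contDiffOn_rightInverse {E F : Type*} [NormedAddCommGroup E] [NormedSpace ℝ E]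
    [CompleteSpace E] [NormedAddCommGroup F] [NormedSpace ℝ F] {G : E → F} (hG : ContDiff ℝ ∞ G)
    {a : E} {e : E ≃L[ℝ] F} (ha : HasFDerivAt G (e : E →L[ℝ] F) a) :
    ∃ (O : Set F) (g : F → E), IsOpen O ∧ G a ∈ O ∧ ContDiffOn ℝ ∞ g O ∧ g (G a) = a ∧
      ∀ y ∈ O, G (g y) = y := by
  let h := hG.contDiffAt.toOpenPartialHomeomorph G ha (by simp)
  have ha_source : a ∈ h.source := ContDiffAt.mem_toOpenPartialHomeomorph_source _ ha (by simp)
  have hsymm : h.symm (G a) = a := h.left_inv ha_source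
  let R : Set E := fderiv ℝ G ⁻¹' range ((↑) : (E ≃L[ℝ] F) → E →L[ℝ] F)
  have hR : IsOpen R :=
    ContinuousLinearEquiv.isOpen.preimage (hG.continuous_fderiv (by simp))
  refine ⟨h.target ∩ h.symm ⁻¹' R, h.symm, h.symm.isOpen_inter_preimage hR,
    ⟨h.map_source ha_source, ?_⟩, ?_, hsymm, fun y hy => h.right_inv hy.1⟩
  · rw [mem_preimage, hsymm]
    exact ⟨e, ha.fderiv.symm⟩
  · rintro y ⟨hy, e', he'⟩
    refine (h.contDiffAt_symm hy (f₀' := e') ?_ hG.contDiffAt).contDiffWithinAt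
    rw [he']
    exact (hG.differentiable (by simp) _).hasFDerivAt

section Flow

variable {E : Type u} [NormedAddCommGroup E] [NormedSpace ℝ E]

/-- `φ` is, on the open set `V` and for times in `[0, 1]`, the smooth flow of the time-dependent
vector field `f`; the last field is the variational equation for the space derivative of `φ`. -/
structure IsFlowOn (f : ℝ × E → E) (V : Set E) (φ : ℝ → E → E) : Prop where
  isOpen : IsOpen V
  contDiffOn : ∀ s ∈ I, ContDiffOn ℝ ∞ (φ s) V
  map_zero : ∀ x ∈ V, φ 0 x = x
  hasDerivWithinAt : ∀ x ∈ V, ∀ s ∈ I,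
    HasDerivWithinAt (fun t => φ t x) (f (s, φ s x)) (Icc 0 1) s
  hasDerivWithinAt_fderiv : ∀ x ∈ V, ∀ u, ∀ s ∈ I,
    HasDerivWithinAt (fun t => fderiv ℝ (φ t) x u)
      (fderiv ℝ f (s, φ s x) (0, fderiv ℝ (φ s) x u)) (Icc 0 1) s

variable [CompleteSpace E]

theorem exists_integral_paths {f : C(ℝ × E, E)} (hf : ContDiff ℝ ∞ f) {x₀ : E}
    (hzero : ∀ s ∈ I, f (s, x₀) = 0)
    (hfderiv : ∀ s ∈ I, ∀ u, fderiv ℝ f (s, x₀) (0, u) = 0) :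
    ∃ (V : Set E) (Φ : E → C(I, E)), IsOpen V ∧ x₀ ∈ V ∧ ContDiffOn ℝ ∞ Φ V ∧
      Φ x₀ = .const _ x₀ ∧ ∀ x ∈ V, Φ x = .const _ x + volterra (superposition f (Φ x)) := by
  let const : E →L[ℝ] C(I, E) := ContinuousLinearMap.const ℝ _
  let J : C(I, E) →L[ℝ] C(I, E) := volterra
  let G : C(I, E) → C(I, E) := fun γ => γ - J (superposition f γ)
  have hG : ContDiff ℝ ∞ G := contDiff_id.sub (J.contDiff.comp (contDiff_superposition hf))
  have hG_const : G (const x₀) = const x₀ := by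
    have : superposition f (const x₀) = 0 := by
      ext s
      exact hzero s s.2
    simp only [G, this, map_zero, sub_zero]
  have hG_deriv : HasFDerivAt G (ContinuousLinearEquiv.refl ℝ C(I, E) :
      C(I, E) →L[ℝ] C(I, E)) (const x₀) := by
    obtain ⟨T, hT, hT_apply⟩ := hasFDerivAt_superposition hf (const x₀)
    have hT_zero : T = 0 := by
      ext h s
      exact (hT_apply h s).trans (hfderiv s s.2 _)
    have h := (hasFDerivAt_id (const x₀)).sub (J.hasFDerivAt.comp (const x₀) hT)
    rwa [hT_zero, ContinuousLinearMap.comp_zero, sub_zero] at h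
  obtain ⟨O, g, hO, hmem, hg, hg_const, hright⟩ := exists_contDiffOn_rightInverse hG hG_deriv
  rw [hG_const] at hmem hg_const
  refine ⟨const ⁻¹' O, fun x => g (const x), hO.preimage const.continuous, hmem,
    hg.comp const.contDiff.contDiffOn fun x hx => hx, hg_const, fun x hx => ?_⟩
  exact sub_eq_iff_eq_add.1 (hright _ hx)

theorem isFlowOn_of_integral_paths {f : C(ℝ × E, E)} (hf : ContDiff ℝ ∞ f) {V : Set E}
    {Φ : E → C(I, E)} (hV : IsOpen V) (hΦ : ContDiffOn ℝ ∞ Φ V)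
    (hint : ∀ x ∈ V, Φ x = .const _ x + volterra (superposition f (Φ x))) :
    IsFlowOn f V fun s x => IccExtend zero_le_one (Φ x) s := by
  let const : E →L[ℝ] C(I, E) := ContinuousLinearMap.const ℝ _
  let eval (s : ℝ) : C(I, E) →L[ℝ] E := ContinuousMap.evalCLM ℝ (projIcc 0 1 zero_le_one s)
  let J : C(I, E) →L[ℝ] C(I, E) := volterra
  have hΦ' : ∀ x ∈ V, HasFDerivAt Φ (fderiv ℝ Φ x) x := fun x hx =>
    ((hΦ.contDiffAt (hV.mem_nhds hx)).differentiableAt (by simp)).hasFDerivAt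
  have hfderiv : ∀ x ∈ V, ∀ s u, fderiv ℝ (fun x => IccExtend zero_le_one (Φ x) s) x u =
      IccExtend zero_le_one (fderiv ℝ Φ x u) s := fun x hx s u =>
    DFunLike.congr_fun ((eval s).hasFDerivAt.comp x (hΦ' x hx)).fderiv u
  refine ⟨hV, fun s _ => (eval s).contDiff.comp_contDiffOn hΦ, ?_, ?_, ?_⟩
  · intro x hx
    have hzero : volterra (superposition f (Φ x)) 0 = 0 := intervalIntegral.integral_same
    rw [IccExtend_left, hint x hx]
    exact (congrArg (x + ·) hzero).trans (add_zero x)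
  · intro x hx s hs
    convert hasDerivWithinAt_IccExtend_of_eq_const_add_volterra (hint x hx) hs using 1
    simp only [IccExtend_of_mem _ _ hs, superposition_apply]
  · intro x hx u s hs
    obtain ⟨T, hT, hT_apply⟩ := hasFDerivAt_superposition hf (Φ x)
    have hvar : fderiv ℝ Φ x = const + J.comp (T.comp (fderiv ℝ Φ x)) :=
      (hΦ' x hx).unique ((const.hasFDerivAt.add (J.hasFDerivAt.comp x (hT.comp x (hΦ' x hx))))
        |>.congr_of_eventuallyEq (eventually_of_mem (hV.mem_nhds hx) hint))
    simp_rw [hfderiv x hx]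
    convert hasDerivWithinAt_IccExtend_of_eq_const_add_volterra
      (DFunLike.congr_fun hvar u) hs using 1
    simp only [IccExtend_of_mem _ _ hs]
    exact (hT_apply (fderiv ℝ Φ x u) ⟨s, hs⟩).symm

theorem exists_isFlowOn {f : ℝ × E → E} (hf : ContDiff ℝ ∞ f) {x₀ : E}
    (hzero : ∀ s ∈ I, f (s, x₀) = 0) (hfderiv : ∀ s ∈ I, ∀ u, fderiv ℝ f (s, x₀) (0, u) = 0)
    {N : Set E} (hN : N ∈ 𝓝 x₀) :
    ∃ (V : Set E) (φ : ℝ → E → E), x₀ ∈ V ∧ IsFlowOn f V φ ∧ ∀ x ∈ V, ∀ s ∈ I, φ s x ∈ N := by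
  obtain ⟨N', hN'N, hN', hx₀N'⟩ := mem_nhds_iff.1 hN
  obtain ⟨V, Φ, hV, hx₀, hΦ, hΦx₀, hint⟩ :=
    exists_integral_paths (f := ⟨f, hf.continuous⟩) hf hzero hfderiv
  let V' := V ∩ Φ ⁻¹' {γ | MapsTo γ univ N'}
  have hV' : IsOpen V' := hΦ.continuousOn.isOpen_inter_preimage hV
    (ContinuousMap.isOpen_setOfPred_mapsTo isCompact_univ hN')
  have hx₀' : x₀ ∈ V' := ⟨hx₀, by
    rw [mem_preimage, hΦx₀]
    exact fun _ _ => hx₀N'⟩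
  exact ⟨V', fun s x => IccExtend zero_le_one (Φ x) s, hx₀',
    isFlowOn_of_integral_paths (f := ⟨f, hf.continuous⟩) hf hV' (hΦ.mono inter_subset_left)
      fun x hx => hint x hx.1, fun x hx s _ => hN'N (hx.2 (mem_univ _))⟩

end Flow

theorem hasDerivWithinAt_Ici_of_Icc {E : Type*} [NormedAddCommGroup E] [NormedSpace ℝ E]
    {y : ℝ → E} {y' : E} {a b s : ℝ} (hs : s ∈ Ico a b) (hy : HasDerivWithinAt y y' (Icc a b) s) :
    HasDerivWithinAt y y' (Ici s) s :=
  hy.mono_of_mem_nhdsWithin (Icc_mem_nhdsGE_of_mem hs)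

theorem eq_zero_of_hasDerivWithinAt_clm_apply {E : Type*} [NormedAddCommGroup E] [NormedSpace ℝ E]
    {A : ℝ → E →L[ℝ] E} {y : ℝ → E} {a b : ℝ} (hA : ContinuousOn A (Icc a b))
    (hy : ∀ s ∈ Icc a b, HasDerivWithinAt y (A s (y s)) (Icc a b) s) (ha : y a = 0) :
    ∀ s ∈ Icc a b, y s = 0 := by
  obtain ⟨K, hK⟩ := isCompact_Icc.exists_bound_of_continuousOn hA
  refine eq_zero_of_abs_deriv_le_mul_abs_self_of_eq_zero_right (K := K)
    (fun s hs => (hy s hs).continuousWithinAt)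
    (fun s hs => hasDerivWithinAt_Ici_of_Icc hs (hy s (Ico_subset_Icc_self hs))) ha
    fun s hs => ?_
  exact (A s).le_of_opNorm_le (hK s (Ico_subset_Icc_self hs)) _

namespace IsFlowOn

variable {E : Type u} [NormedAddCommGroup E] [NormedSpace ℝ E] {f : ℝ × E → E} {V : Set E}
  {φ : ℝ → E → E}

theorem fderiv_zero (h : IsFlowOn f V φ) {x : E} (hx : x ∈ V) (u : E) :
    fderiv ℝ (φ 0) x u = u := by
  have hid : φ 0 =ᶠ[𝓝 x] id := eventually_of_mem (h.isOpen.mem_nhds hx) h.map_zero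
  rw [hid.fderiv_eq, fderiv_id, ContinuousLinearMap.id_apply]

theorem fderiv_apply_linear_eq (h : IsFlowOn f V φ) (hf : ContDiff ℝ ∞ f) {W : E →L[ℝ] E} {x : E}
    (hx : x ∈ V) (hW : ∀ s ∈ I, fderiv ℝ f (s, φ s x) (0, W (φ s x)) = W (f (s, φ s x))) :
    fderiv ℝ (φ 1) x (W x) = W (φ 1 x) := by
  let A s := (fderiv ℝ f (s, φ s x)).comp (ContinuousLinearMap.inr ℝ ℝ E)
  have hφ : ContinuousOn (fun s => φ s x) I := fun s hs =>
    (h.hasDerivWithinAt x hx s hs).continuousWithinAt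
  have hA : ContinuousOn A I :=
    ((hf.continuous_fderiv (by simp)).comp_continuousOn (continuousOn_id.prodMk hφ)).clm_comp
      continuousOn_const
  have hzero := eq_zero_of_hasDerivWithinAt_clm_apply hA
    (y := fun s => fderiv ℝ (φ s) x (W x) - W (φ s x)) (fun s hs => ?_) ?_ 1 (by simp)
  · exact sub_eq_zero.1 hzero
  · refine ((h.hasDerivWithinAt_fderiv x hx (W x) s hs).sub
      (W.hasFDerivAt.comp_hasDerivWithinAt s (h.hasDerivWithinAt x hx s hs))).congr_deriv ?_
    rw [← hW s hs, ← map_sub, Prod.mk_sub_mk, sub_zero]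
    rfl
  · rw [h.fderiv_zero hx, h.map_zero x hx, sub_self]

theorem apply_fderiv_one_eq (h : IsFlowOn f V φ) {M : ℝ × E → E →L[ℝ] E →L[ℝ] ℝ} {x : E}
    (hx : x ∈ V) (hM : ∀ s ∈ I, DifferentiableAt ℝ M (s, φ s x))
    (hinv : ∀ s ∈ I, ∀ a b, fderiv ℝ M (s, φ s x) (1, f (s, φ s x)) a b
      + M (s, φ s x) (fderiv ℝ f (s, φ s x) (0, a)) b
      + M (s, φ s x) a (fderiv ℝ f (s, φ s x) (0, b)) = 0) (u v : E) :
    M (1, φ 1 x) (fderiv ℝ (φ 1) x u) (fderiv ℝ (φ 1) x v) = M (0, x) u v := by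
  let g s := M (s, φ s x) (fderiv ℝ (φ s) x u) (fderiv ℝ (φ s) x v)
  have hg : ∀ s ∈ I, HasDerivWithinAt g 0 I s := by
    intro s hs
    have hM' : HasDerivWithinAt (fun t => M (t, φ t x))
        (fderiv ℝ M (s, φ s x) (1, f (s, φ s x))) I s :=
      HasFDerivAt.comp_hasDerivWithinAt (l := M) (f := fun t => (t, φ t x)) s (hM s hs).hasFDerivAt
        ((hasDerivWithinAt_id s I).prodMk (h.hasDerivWithinAt x hx s hs))
    refine ((hM'.clm_apply (h.hasDerivWithinAt_fderiv x hx u s hs)).clm_apply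
      (h.hasDerivWithinAt_fderiv x hx v s hs)).congr_deriv ?_
    exact hinv s hs _ _
  have hconst := constant_of_has_deriv_right_zero (fun s hs => (hg s hs).continuousWithinAt)
    (fun s hs => hasDerivWithinAt_Ici_of_Icc hs (hg s (Ico_subset_Icc_self hs))) 1 (by simp)
  simpa only [g, h.fderiv_zero hx, h.map_zero x hx] using hconst

end IsFlowOn

/-! ### Extension of smooth maps -/

section Extension

variable {E F : Type*} [NormedAddCommGroup E] [NormedSpace ℝ E] [FiniteDimensional ℝ E]
  [NormedAddCommGroup F] [NormedSpace ℝ F]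

open scoped Manifold in
theorem exists_contDiff_eventually_nhdsSet_eq {f : E → F} {O K : Set E} (hO : IsOpen O)
    (hf : ContDiffOn ℝ ∞ f O) (hK : IsClosed K) (hKO : K ⊆ O) :
    ∃ g : E → F, ContDiff ℝ ∞ g ∧ ∀ᶠ x in 𝓝ˢ K, g x = f x := by
  obtain ⟨χ, hχ_zero, hχ_one, -⟩ := exists_contMDiffMap_zero_one_nhds_of_isClosed (n := ⊤)
    𝓘(ℝ, E) hO.isClosed_compl hK (disjoint_compl_left_iff_subset.2 hKO)
  have hχ : ContDiff ℝ ∞ χ := χ.contMDiff.contDiff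
  refine ⟨fun x => χ x • f x, contDiff_iff_contDiffAt.2 fun x => ?_, ?_⟩
  · by_cases hx : x ∈ O
    · exact hχ.contDiffAt.smul (hf.contDiffAt (hO.mem_nhds hx))
    · refine (contDiffAt_const (c := (0 : F))).congr_of_eventuallyEq ?_
      filter_upwards [eventually_nhdsSet_iff_forall.1 hχ_zero x hx] with y hy
      rw [hy, zero_smul]
  · filter_upwards [hχ_one] with x hx
    rw [hx, one_smul]

theorem exists_contDiff_eventuallyEq {f : E → F} {O : Set E} {x : E} (hO : IsOpen O)
    (hf : ContDiffOn ℝ ∞ f O) (hx : x ∈ O) : ∃ g : E → F, ContDiff ℝ ∞ g ∧ g =ᶠ[𝓝 x] f := by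
  obtain ⟨g, hg, hgf⟩ := exists_contDiff_eventually_nhdsSet_eq hO hf isClosed_singleton
    (singleton_subset_iff.2 hx)
  exact ⟨g, hg, by rwa [nhdsSet_singleton] at hgf⟩

end Extension

/-! ### Closed homogeneous 2-forms -/

section Forms

variable {E F : Type*} [NormedAddCommGroup E] [NormedSpace ℝ E]
  [NormedAddCommGroup F] [NormedSpace ℝ F]

/-- `η` is, at the point `x`, an alternating 2-form with `dη = 0` and `L_∇ η = wt • η` for the
linear vector field `∇ x = W x`. -/
structure IsClosedHomogeneousAt (W : E →L[ℝ] E) (wt : ℝ) (η : E → E →L[ℝ] E →L[ℝ] ℝ) (x : E) :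
    Prop where
  alt : ∀ u v, η x u v = -η x v u
  closed : ∀ u v z, fderiv ℝ η x u v z + fderiv ℝ η x v z u + fderiv ℝ η x z u v = 0
  homogeneous : ∀ u v, fderiv ℝ η x (W x) u v + η x (W u) v + η x u (W v) = wt * η x u v

/-- The pullback `f^* η` of a 2-form. -/
noncomputable def pullback (η : F → F →L[ℝ] F →L[ℝ] ℝ) (f : E → F) (x : E) :
    E →L[ℝ] E →L[ℝ] ℝ :=
  (η (f x)).bilinearComp (fderiv ℝ f x) (fderiv ℝ f x)

theorem pullback_apply (η : F → F →L[ℝ] F →L[ℝ] ℝ) (f : E → F) (x u v : E) :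
    pullback η f x u v = η (f x) (fderiv ℝ f x u) (fderiv ℝ f x v) := rfl

theorem fderiv_apply_apply {η : E → F →L[ℝ] F →L[ℝ] ℝ} {x : E} (hη : DifferentiableAt ℝ η x)
    (h : E) (u v : F) : fderiv ℝ η x h u v = fderiv ℝ (fun y => η y u v) x h := by
  rw [fderiv_clm_apply (by fun_prop) (by fun_prop), fderiv_clm_apply (by fun_prop) (by fun_prop)]
  simp

theorem fderiv_apply_swap {η : E → F →L[ℝ] F →L[ℝ] ℝ} {x : E} (hη : DifferentiableAt ℝ η x)
    (halt : ∀ᶠ y in 𝓝 x, ∀ u v, η y u v = -η y v u) (h : E) (u v : F) :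
    fderiv ℝ η x h u v = -fderiv ℝ η x h v u := by
  have heq : (fun y => η y u v) =ᶠ[𝓝 x] fun y => -η y v u := halt.mono fun y hy => hy u v
  rw [fderiv_apply_apply hη, fderiv_apply_apply hη, heq.fderiv_eq, fderiv_fun_neg]
  rfl

theorem contDiff_pullback {η : F → F →L[ℝ] F →L[ℝ] ℝ} {f : E → F} (hη : ContDiff ℝ ∞ η)
    (hf : ContDiff ℝ ∞ f) : ContDiff ℝ ∞ (pullback η f) := by
  have hf' := (contDiff_infty_iff_fderiv.1 hf).2
  have heq : pullback η f = fun x => ((ContinuousLinearMap.compL ℝ E F ℝ).flip (fderiv ℝ f x)).comp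
      ((η (f x)).comp (fderiv ℝ f x)) := rfl
  rw [heq]
  exact (contDiff_const.clm_apply hf').clm_comp ((hη.comp hf).clm_comp hf')

theorem fderiv_pullback {η : F → F →L[ℝ] F →L[ℝ] ℝ} {f : E → F} (hη : ContDiff ℝ ∞ η)
    (hf : ContDiff ℝ ∞ f) (x h u v : E) :
    fderiv ℝ (pullback η f) x h u v =
      fderiv ℝ η (f x) (fderiv ℝ f x h) (fderiv ℝ f x u) (fderiv ℝ f x v)
        + η (f x) (fderiv ℝ (fderiv ℝ f) x h u) (fderiv ℝ f x v)
        + η (f x) (fderiv ℝ f x u) (fderiv ℝ (fderiv ℝ f) x h v) := by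
  have hf' : HasFDerivAt f (fderiv ℝ f x) x := (hf.differentiable (by simp) x).hasFDerivAt
  have hf'' : HasFDerivAt (fderiv ℝ f) (fderiv ℝ (fderiv ℝ f) x) x :=
    ((contDiff_infty_iff_fderiv.1 hf).2.differentiable (by simp) x).hasFDerivAt
  have hη' := (hη.differentiable (by simp) (f x)).hasFDerivAt.comp x hf'
  have happly : ∀ z, HasFDerivAt (fun y => fderiv ℝ f y z) _ x := fun z =>
    hf''.clm_apply (hasFDerivAt_const z x)
  rw [fderiv_apply_apply ((contDiff_pullback hη hf).differentiable (by simp) x)]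
  refine (DFunLike.congr_fun ((hη'.clm_apply (happly u)).clm_apply (happly v)).fderiv h).trans ?_
  simp only [Function.comp_apply, ContinuousLinearMap.comp_zero, zero_add,
    ContinuousLinearMap.flip_add, add_apply, ContinuousLinearMap.comp_apply,
    ContinuousLinearMap.flip_apply]
  ring

theorem isSymmSndFDerivAt_of_contDiff {f : E → F} (hf : ContDiff ℝ ∞ f) (x : E) :
    IsSymmSndFDerivAt ℝ f x := by
  refine hf.contDiffAt.isSymmSndFDerivAt ?_
  rw [minSmoothness_of_isRCLikeNormedField]
  exact WithTop.coe_le_coe.2 (le_top (a := (2 : ℕ∞)))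

theorem fderiv_fderiv_apply_linear {f : E → F} (hf : ContDiff ℝ ∞ f) {W : E →L[ℝ] E}
    {W' : F →L[ℝ] F} {x : E} (hW : ∀ᶠ y in 𝓝 x, fderiv ℝ f y (W y) = W' (f y)) (u : E) :
    fderiv ℝ (fderiv ℝ f) x (W x) u + fderiv ℝ f x (W u) = W' (fderiv ℝ f x u) := by
  have hf' : HasFDerivAt f (fderiv ℝ f x) x := (hf.differentiable (by simp) x).hasFDerivAt
  have hf'' : HasFDerivAt (fderiv ℝ f) (fderiv ℝ (fderiv ℝ f) x) x :=
    ((contDiff_infty_iff_fderiv.1 hf).2.differentiable (by simp) x).hasFDerivAt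
  have hsymm := isSymmSndFDerivAt_of_contDiff hf x
  have hunique := (hf''.clm_apply W.hasFDerivAt).unique
    ((W'.hasFDerivAt.comp x hf').congr_of_eventuallyEq hW)
  rw [hsymm, add_comm]
  simpa using DFunLike.congr_fun hunique u

namespace IsClosedHomogeneousAt

variable {W : E →L[ℝ] E} {W' : F →L[ℝ] F} {wt : ℝ} {x : E}

theorem pullback {η : F → F →L[ℝ] F →L[ℝ] ℝ} {f : E → F} (hη : ContDiff ℝ ∞ η)
    (hf : ContDiff ℝ ∞ f) (hW : ∀ᶠ y in 𝓝 x, fderiv ℝ f y (W y) = W' (f y))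
    (h : IsClosedHomogeneousAt W' wt η (f x)) :
    IsClosedHomogeneousAt W wt (pullback η f) x where
  alt u v := h.alt _ _
  closed u v z := by
    have hsymm := isSymmSndFDerivAt_of_contDiff hf x
    have hclosed := h.closed (fderiv ℝ f x u) (fderiv ℝ f x v) (fderiv ℝ f x z)
    simp only [fderiv_pullback hη hf]
    rw [hsymm.eq v u, hsymm.eq z u, hsymm.eq z v]
    linear_combination hclosed + h.alt (fderiv ℝ (fderiv ℝ f) x u v) (fderiv ℝ f x z)
      + h.alt (fderiv ℝ (fderiv ℝ f) x v z) (fderiv ℝ f x u)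
      + h.alt (fderiv ℝ f x v) (fderiv ℝ (fderiv ℝ f) x u z)
  homogeneous u v := by
    have hhom := h.homogeneous (fderiv ℝ f x u) (fderiv ℝ f x v)
    rw [← fderiv_fderiv_apply_linear hf hW, ← fderiv_fderiv_apply_linear hf hW, map_add, map_add,
      add_apply, ← hW.self_of_nhds] at hhom
    rw [fderiv_pullback hη hf]
    simp only [pullback_apply]
    linarith

theorem add_smul {η θ : E → E →L[ℝ] E →L[ℝ] ℝ} (hη : DifferentiableAt ℝ η x)
    (hθ : DifferentiableAt ℝ θ x) (h : IsClosedHomogeneousAt W wt η x)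
    (h' : IsClosedHomogeneousAt W wt θ x) (s : ℝ) :
    IsClosedHomogeneousAt W wt (fun y => η y + s • θ y) x := by
  have hderiv : fderiv ℝ (fun y => η y + s • θ y) x = fderiv ℝ η x + s • fderiv ℝ θ x := by
    rw [fderiv_fun_add (𝕜 := ℝ) (f := η) (g := fun y => s • θ y) hη (by fun_prop),
      fderiv_fun_const_smul (𝕜 := ℝ) (f := θ) hθ]
  refine ⟨fun u v => ?_, fun u v z => ?_, fun u v => ?_⟩ <;>
    simp only [hderiv, add_apply, smul_apply, smul_eq_mul]
  · linear_combination h.alt u v + s * h'.alt u v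
  · linear_combination h.closed u v z + s * h'.closed u v z
  · linear_combination h.homogeneous u v + s * h'.homogeneous u v

theorem congr_of_eventuallyEq {η θ : E → E →L[ℝ] E →L[ℝ] ℝ} (h : IsClosedHomogeneousAt W wt η x)
    (hθ : θ =ᶠ[𝓝 x] η) : IsClosedHomogeneousAt W wt θ x := by
  constructor <;> simp only [hθ.eq_of_nhds, hθ.fderiv_eq]
  exacts [h.alt, h.closed, h.homogeneous]

end IsClosedHomogeneousAt

end Forms

/-! ### The relative Poincaré lemma -/

section Poincare

variable {E : Type u} [NormedAddCommGroup E] [NormedSpace ℝ E]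

/-- The integral over `[0, 1]` of the contraction `ι_{∂/∂s} τ` of a 2-form `τ` on the cylinder
`ℝ × E`, as a 1-form on `E`. -/
noncomputable def fiberIntegral (τ : ℝ × E → ℝ × E →L[ℝ] ℝ × E →L[ℝ] ℝ) (x : E) : E →L[ℝ] ℝ :=
  ∫ s in (0 : ℝ)..1, (τ (s, x) (1, 0)).comp (ContinuousLinearMap.inr ℝ ℝ E)

variable {τ : ℝ × E → ℝ × E →L[ℝ] ℝ × E →L[ℝ] ℝ} {W : E →L[ℝ] E} {wt : ℝ} {x : E}

theorem contDiff_contract (hτ : ContDiff ℝ ∞ τ) :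
    ContDiff ℝ ∞ fun y => (τ y (1, 0)).comp (ContinuousLinearMap.inr ℝ ℝ E) :=
  (hτ.clm_apply contDiff_const).clm_comp contDiff_const

theorem contDiff_fiberIntegral (hτ : ContDiff ℝ ∞ τ) : ContDiff ℝ ∞ (fiberIntegral τ) :=
  contDiff_integral_zero_one (contDiff_contract hτ)

theorem fiberIntegral_apply (hτ : Continuous τ) (x v : E) :
    fiberIntegral τ x v = ∫ s in (0 : ℝ)..1, τ (s, x) (1, 0) (0, v) := by
  refine ContinuousLinearMap.intervalIntegral_apply (Continuous.intervalIntegrable ?_ _ _) v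
  fun_prop

theorem fderiv_fiberIntegral (hτ : ContDiff ℝ ∞ τ) (x u v : E) :
    fderiv ℝ (fiberIntegral τ) x u v =
      ∫ s in (0 : ℝ)..1, fderiv ℝ τ (s, x) (0, u) (1, 0) (0, v) := by
  have hτ' : ContDiff ℝ ∞ (fderiv ℝ τ) := (contDiff_infty_iff_fderiv.1 hτ).2
  have hderiv : ∀ y h, fderiv ℝ (fun y => (τ y (1, 0)).comp (ContinuousLinearMap.inr ℝ ℝ E)) y h =
      (fderiv ℝ τ y h (1, 0)).comp (ContinuousLinearMap.inr ℝ ℝ E) := by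
    intro y h
    have hτy := (hτ.differentiable (by simp) y).hasFDerivAt
    refine (DFunLike.congr_fun ((hτy.clm_apply (hasFDerivAt_const _ y)).clm_comp
      (hasFDerivAt_const _ y)).fderiv h).trans ?_
    ext v
    simp
  unfold fiberIntegral
  rw [fderiv_integral_zero_one (contDiff_contract hτ)]
  simp only [hderiv]
  refine ContinuousLinearMap.intervalIntegral_apply (Continuous.intervalIntegrable ?_ _ _) v
  fun_prop

theorem integral_fderiv_fst_eq_sub (hτ : ContDiff ℝ ∞ τ) (x : E) (a b : ℝ × E) :
    ∫ s in (0 : ℝ)..1, fderiv ℝ τ (s, x) (1, 0) a b = τ (1, x) a b - τ (0, x) a b := by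
  have hτ' : Continuous (fderiv ℝ τ) := hτ.continuous_fderiv (by simp)
  refine intervalIntegral.integral_eq_sub_of_hasDerivAt (f := fun s => τ (s, x) a b)
    (fun s _ => ?_) (Continuous.intervalIntegrable (by fun_prop) _ _)
  have hcurve : HasDerivAt (fun s => τ (s, x)) (fderiv ℝ τ (s, x) (1, 0)) s :=
    HasFDerivAt.comp_hasDerivAt (l := τ) (f := fun s => (s, x)) s
      (hτ.differentiable (by simp) _).hasFDerivAt
      ((hasDerivAt_id s).prodMk (hasDerivAt_const s x))
  simpa using (hcurve.clm_apply (hasDerivAt_const s a)).clm_apply (hasDerivAt_const s b)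

theorem fderiv_fiberIntegral_sub_swap (hτ : ContDiff ℝ ∞ τ)
    (h : ∀ s ∈ I, ∀ᶠ y in 𝓝 (s, x), IsClosedHomogeneousAt (.prodMap 0 W) wt τ y) (u v : E) :
    fderiv ℝ (fiberIntegral τ) x u v - fderiv ℝ (fiberIntegral τ) x v u =
      τ (1, x) (0, u) (0, v) - τ (0, x) (0, u) (0, v) := by
  have hτ' : Continuous (fderiv ℝ τ) := hτ.continuous_fderiv (by simp)
  rw [fderiv_fiberIntegral hτ, fderiv_fiberIntegral hτ, ← integral_fderiv_fst_eq_sub hτ,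
    ← intervalIntegral.integral_sub (Continuous.intervalIntegrable (by fun_prop) _ _)
      (Continuous.intervalIntegrable (by fun_prop) _ _)]
  refine intervalIntegral.integral_congr fun s hs => ?_
  rw [uIcc_of_le zero_le_one] at hs
  have hswap := fderiv_apply_swap (hτ.differentiable (by simp) (s, x))
    ((h s hs).mono fun y hy => hy.alt)
  linear_combination (h s hs).self_of_nhds.closed (0, u) (1, 0) (0, v)
    - hswap (0, v) (1, 0) (0, u) - hswap (1, 0) (0, u) (0, v)

theorem fderiv_fiberIntegral_apply_linear (hτ : ContDiff ℝ ∞ τ)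
    (h : ∀ s ∈ I, IsClosedHomogeneousAt (.prodMap 0 W) wt τ (s, x)) (v : E) :
    fderiv ℝ (fiberIntegral τ) x (W x) v + fiberIntegral τ x (W v) = wt * fiberIntegral τ x v := by
  have hτ' : Continuous (fderiv ℝ τ) := hτ.continuous_fderiv (by simp)
  have hτc : Continuous τ := hτ.continuous
  rw [fderiv_fiberIntegral hτ, fiberIntegral_apply hτ.continuous, fiberIntegral_apply hτ.continuous,
    ← intervalIntegral.integral_add (Continuous.intervalIntegrable (by fun_prop) _ _)
      (Continuous.intervalIntegrable (by fun_prop) _ _), ← intervalIntegral.integral_const_mul]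
  refine intervalIntegral.integral_congr fun s hs => ?_
  rw [uIcc_of_le zero_le_one] at hs
  simpa [Prod.mk_zero_zero] using (h s hs).homogeneous (1, 0) (0, v)

/-- The straight-line homotopy from `c` (at time `0`) to the identity (at time `1`). -/
def lineHomotopy (c : E → E) (y : ℝ × E) : E := y.1 • y.2 + (1 - y.1) • c y.2

variable {c : E → E}

theorem contDiff_lineHomotopy (hc : ContDiff ℝ ∞ c) : ContDiff ℝ ∞ (lineHomotopy c) :=
  (contDiff_fst.smul contDiff_snd).add
    ((contDiff_const.sub contDiff_fst).smul (hc.comp contDiff_snd))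

theorem fderiv_lineHomotopy (hc : ContDiff ℝ ∞ c) (s : ℝ) (x : E) (a : ℝ) (u : E) :
    fderiv ℝ (lineHomotopy c) (s, x) (a, u) =
      a • (x - c x) + s • u + (1 - s) • fderiv ℝ c x u := by
  have hfst : HasFDerivAt Prod.fst (ContinuousLinearMap.fst ℝ ℝ E) (s, x) := hasFDerivAt_fst
  have hsnd : HasFDerivAt Prod.snd (ContinuousLinearMap.snd ℝ ℝ E) (s, x) := hasFDerivAt_snd
  have hcx : HasFDerivAt c (fderiv ℝ c x) x := (hc.differentiable (by simp) x).hasFDerivAt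
  have h := (hfst.smul hsnd).add ((hfst.const_sub 1).smul (hcx.comp (s, x) hsnd))
  refine (DFunLike.congr_fun h.fderiv (a, u)).trans ?_
  simp only [Function.comp_apply, add_apply, smul_apply, ContinuousLinearMap.smulRight_apply,
    ContinuousLinearMap.coe_snd', ContinuousLinearMap.coe_fst', ContinuousLinearMap.comp_apply,
    neg_apply]
  module

theorem fderiv_lineHomotopy_apply_linear (hc : ContDiff ℝ ∞ c) {y : ℝ × E}
    (hW : fderiv ℝ c y.2 (W y.2) = W (c y.2)) :
    fderiv ℝ (lineHomotopy c) y (ContinuousLinearMap.prodMap 0 W y) = W (lineHomotopy c y) := by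
  refine (fderiv_lineHomotopy hc y.1 y.2 0 (W y.2)).trans ?_
  simp [lineHomotopy, hW]

theorem eventually_isClosedHomogeneousAt_pullback_lineHomotopy {θ : E → E →L[ℝ] E →L[ℝ] ℝ}
    {x₀ : E} (hθ : ContDiff ℝ ∞ θ) (hc : ContDiff ℝ ∞ c) (hx₀ : c x₀ = x₀)
    (h : ∀ᶠ x in 𝓝 x₀, IsClosedHomogeneousAt W wt θ x)
    (hW : ∀ᶠ x in 𝓝 x₀, fderiv ℝ c x (W x) = W (c x)) :
    ∀ᶠ x in 𝓝 x₀, ∀ s ∈ I, ∀ᶠ y in 𝓝 (s, x),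
      IsClosedHomogeneousAt (.prodMap 0 W) wt (pullback θ (lineHomotopy c)) y := by
  refine isCompact_Icc.eventually_forall_of_forall_eventually fun s _ => ?_
  have hΓ : Tendsto (lineHomotopy c) (𝓝 (s, x₀)) (𝓝 x₀) := by
    convert (contDiff_lineHomotopy hc).continuous.tendsto (s, x₀) using 2
    simp [lineHomotopy, hx₀, ← add_smul]
  have hW' : ∀ᶠ y : ℝ × E in 𝓝 (s, x₀), fderiv ℝ c y.2 (W y.2) = W (c y.2) :=
    (continuous_snd.tendsto (s, x₀)).eventually hW
  have hτ : ∀ᶠ y in 𝓝 (s, x₀),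
      IsClosedHomogeneousAt (.prodMap 0 W) wt (pullback θ (lineHomotopy c)) y := by
    filter_upwards [hΓ.eventually h, hW'.eventually_nhds] with y hy hWy
    exact hy.pullback hθ (contDiff_lineHomotopy hc)
      (hWy.mono fun z => fderiv_lineHomotopy_apply_linear hc)
  exact (continuous_swap.tendsto (x₀, s)).eventually hτ.eventually_nhds

theorem exists_homogeneous_primitive {θ : E → E →L[ℝ] E →L[ℝ] ℝ}
    {x₀ : E} (hθ : ContDiff ℝ ∞ θ) (hc : ContDiff ℝ ∞ c) (hx₀ : c x₀ = x₀) (hθx₀ : θ x₀ = 0)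
    (h : ∀ᶠ x in 𝓝 x₀, IsClosedHomogeneousAt W wt θ x)
    (hW : ∀ᶠ x in 𝓝 x₀, fderiv ℝ c x (W x) = W (c x))
    (hθc : ∀ᶠ x in 𝓝 x₀, pullback θ c x = 0) :
    ∃ α : E → E →L[ℝ] ℝ, ContDiff ℝ ∞ α ∧ α x₀ = 0 ∧ fderiv ℝ α x₀ = 0 ∧
      ∀ᶠ x in 𝓝 x₀, (∀ u v, fderiv ℝ α x u v - fderiv ℝ α x v u = θ x u v) ∧
        ∀ v, fderiv ℝ α x (W x) v + α x (W v) = wt * α x v := by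
  have hΓ := contDiff_lineHomotopy hc
  have hτ := contDiff_pullback hθ hΓ
  have hΓx₀ : ∀ s, lineHomotopy c (s, x₀) = x₀ := fun s => by
    simp [lineHomotopy, hx₀, ← add_smul]
  have hΓ_fst : ∀ s, fderiv ℝ (lineHomotopy c) (s, x₀) (1, 0) = 0 := fun s => by
    simp [fderiv_lineHomotopy hc, hx₀]
  refine ⟨fiberIntegral (pullback θ (lineHomotopy c)), contDiff_fiberIntegral hτ, ?_, ?_, ?_⟩
  · ext v
    simp [fiberIntegral_apply hτ.continuous, pullback_apply, hΓ_fst]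
  · ext u v
    simp [fderiv_fiberIntegral hτ, fderiv_pullback hθ hΓ, hΓx₀, hθx₀, hΓ_fst]
  · filter_upwards [hθc, eventually_isClosedHomogeneousAt_pullback_lineHomotopy hθ hc hx₀ h hW]
      with x hθcx hx
    refine ⟨fun u v => ?_,
      fderiv_fiberIntegral_apply_linear hτ fun s hs => (hx s hs).self_of_nhds⟩
    have hzero : θ (c x) (fderiv ℝ c x u) (fderiv ℝ c x v) = 0 := by
      rw [← pullback_apply, hθcx]
      rfl
    rw [fderiv_fiberIntegral_sub_swap hτ hx]
    simp [pullback_apply, fderiv_lineHomotopy hc, lineHomotopy, hzero]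

end Poincare

/-! ### Moser's method -/

section Moser

section Contraction

variable {E : Type*} [NormedAddCommGroup E] [NormedSpace ℝ E] {η : E → E →L[ℝ] E →L[ℝ] ℝ}
  {X : E → E} {α : E → E →L[ℝ] ℝ} {W : E →L[ℝ] E} {wt : ℝ} {y : E}

theorem fderiv_apply_of_eventually_eq_neg (hη : DifferentiableAt ℝ η y)
    (hX : DifferentiableAt ℝ X y) (h : ∀ᶠ z in 𝓝 y, η z (X z) = -α z) (u : E) :
    fderiv ℝ η y u (X y) + η y (fderiv ℝ X y u) = -fderiv ℝ α y u := by
  have heq : (fun z => η z (X z)) =ᶠ[𝓝 y] fun z => -α z := h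
  have hderiv := heq.fderiv_eq (𝕜 := ℝ)
  rw [fderiv_clm_apply hη hX, fderiv_fun_neg] at hderiv
  rw [add_comm]
  exact DFunLike.congr_fun hderiv u

/-- Cartan's formula `L_X η = d(ι_X η)` for a closed form `η` with `ι_X η = -α`. -/
theorem IsClosedHomogeneousAt.fderiv_apply_add_add_eq_of_contraction
    (h : ∀ᶠ z in 𝓝 y, IsClosedHomogeneousAt W wt η z) (hη : DifferentiableAt ℝ η y)
    (hX : DifferentiableAt ℝ X y) (hα : ∀ᶠ z in 𝓝 y, η z (X z) = -α z) (a b : E) :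
    fderiv ℝ η y (X y) a b + η y (fderiv ℝ X y a) b + η y a (fderiv ℝ X y b) =
      -(fderiv ℝ α y a b - fderiv ℝ α y b a) := by
  have hderiv : ∀ u v, fderiv ℝ η y u (X y) v + η y (fderiv ℝ X y u) v = -fderiv ℝ α y u v :=
    fun u v => DFunLike.congr_fun (fderiv_apply_of_eventually_eq_neg hη hX hα u) v
  have hswap := fderiv_apply_swap hη (h.mono fun z hz => hz.alt)
  linear_combination hderiv a b - hderiv b a + h.self_of_nhds.closed (X y) a b
    - hswap a b (X y) + h.self_of_nhds.alt a (fderiv ℝ X y b)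

theorem IsClosedHomogeneousAt.fderiv_apply_linear_of_contraction
    (h : IsClosedHomogeneousAt W wt η y) (hη : DifferentiableAt ℝ η y)
    (hinj : Function.Injective (η y)) (hX : DifferentiableAt ℝ X y)
    (hα : ∀ᶠ z in 𝓝 y, η z (X z) = -α z)
    (hαW : ∀ v, fderiv ℝ α y (W y) v + α y (W v) = wt * α y v) :
    fderiv ℝ X y (W y) = W (X y) := by
  refine hinj (ContinuousLinearMap.ext fun v => ?_)
  have hderiv := DFunLike.congr_fun (fderiv_apply_of_eventually_eq_neg hη hX hα (W y)) v
  have hcontr : ∀ v, η y (X y) v = -α y v := DFunLike.congr_fun hα.self_of_nhds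
  simp only [add_apply, neg_apply] at hderiv
  linear_combination hderiv - h.homogeneous (X y) v + hcontr (W v) - wt * hcontr v - hαW v

theorem eq_zero_and_fderiv_eq_zero_of_contraction (hη : DifferentiableAt ℝ η y)
    (hinj : Function.Injective (η y)) (hX : DifferentiableAt ℝ X y)
    (h : ∀ᶠ z in 𝓝 y, η z (X z) = -α z) (hα : α y = 0) (hα' : fderiv ℝ α y = 0) :
    X y = 0 ∧ fderiv ℝ X y = 0 := by
  have hXy : X y = 0 := hinj <| by rw [h.self_of_nhds, hα, neg_zero, map_zero]
  refine ⟨hXy, ContinuousLinearMap.ext fun u => hinj ?_⟩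
  simpa [hXy, hα'] using fderiv_apply_of_eventually_eq_neg hη hX h u

theorem fderiv_add_smul_prod {θ : E → E →L[ℝ] E →L[ℝ] ℝ} (hη : ContDiff ℝ ∞ η)
    (hθ : ContDiff ℝ ∞ θ) (s : ℝ) (y : E) (a : ℝ) (u : E) :
    fderiv ℝ (fun z : ℝ × E => η z.2 + z.1 • θ z.2) (s, y) (a, u) =
      fderiv ℝ (fun z => η z + s • θ z) y u + a • θ y := by
  have hfst : HasFDerivAt Prod.fst (ContinuousLinearMap.fst ℝ ℝ E) (s, y) := hasFDerivAt_fst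
  have hsnd : HasFDerivAt Prod.snd (ContinuousLinearMap.snd ℝ ℝ E) (s, y) := hasFDerivAt_snd
  have hη' := (hη.differentiable (by simp) y).hasFDerivAt
  have hθ' := (hθ.differentiable (by simp) y).hasFDerivAt
  have hprod := (hη'.comp (s, y) hsnd).add (hfst.smul (hθ'.comp (s, y) hsnd))
  have hslice := hη'.add (hθ'.const_smul s)
  refine (DFunLike.congr_fun hprod.fderiv (a, u)).trans ?_
  refine Eq.trans ?_ (congrArg (· + a • θ y) (DFunLike.congr_fun hslice.fderiv u).symm)
  exact (add_assoc _ _ _).symm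

end Contraction

theorem isInvertible_of_injective {E : Type*} [NormedAddCommGroup E] [NormedSpace ℝ E]
    [FiniteDimensional ℝ E] {B : E →L[ℝ] E →L[ℝ] ℝ} (hB : Function.Injective B) :
    B.IsInvertible := by
  have hfinrank : Module.finrank ℝ E = Module.finrank ℝ (E →L[ℝ] ℝ) := by
    rw [← (LinearMap.toContinuousLinearMap (𝕜 := ℝ) (E := E) (F' := ℝ)).finrank_eq]
    exact Subspace.dual_finrank_eq.symm
  exact ⟨(LinearEquiv.ofInjectiveOfFinrankEq (B : E →ₗ[ℝ] E →L[ℝ] ℝ) hB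
    hfinrank).toContinuousLinearEquiv, rfl⟩

theorem fderiv_apply_zero_prodMk {E F G : Type*} [NormedAddCommGroup E] [NormedSpace ℝ E]
    [NormedAddCommGroup F] [NormedSpace ℝ F] [NormedAddCommGroup G] [NormedSpace ℝ G]
    {f : E × F → G} {y : E × F} (hf : DifferentiableAt ℝ f y) (u : F) :
    fderiv ℝ f y (0, u) = fderiv ℝ (fun z => f (y.1, z)) y.2 u :=
  (DFunLike.congr_fun (hf.hasFDerivAt.comp (f := fun z => (y.1, z)) y.2
    (hasFDerivAt_prodMk_right y.1 y.2)).fderiv u).symm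

variable {E : Type u} [NormedAddCommGroup E] [NormedSpace ℝ E] [FiniteDimensional ℝ E]
  {W : E →L[ℝ] E} {wt : ℝ} {x₀ : E} {η θ : E → E →L[ℝ] E →L[ℝ] ℝ}

theorem exists_contDiff_contraction_eq_neg {M : ℝ × E → E →L[ℝ] E →L[ℝ] ℝ} {α : E → E →L[ℝ] ℝ}
    (hM : ContDiff ℝ ∞ M) (hα : ContDiff ℝ ∞ α)
    (hinj : ∀ s ∈ I, Function.Injective (M (s, x₀))) :
    ∃ f : ℝ × E → E, ContDiff ℝ ∞ f ∧ ∀ᶠ x in 𝓝 x₀, ∀ s ∈ I,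
      Function.Injective (M (s, x)) ∧ M (s, x) (f (s, x)) = -α x := by
  let O : Set (ℝ × E) := {y | (M y).IsInvertible}
  have hO : IsOpen O := (ContinuousLinearEquiv.isOpen (𝕜 := ℝ) (E := E)
    (F := E →L[ℝ] ℝ)).preimage hM.continuous
  have hKO : I ×ˢ {x₀} ⊆ O := by
    rintro ⟨s, x⟩ ⟨hs, rfl⟩
    exact isInvertible_of_injective (hinj s hs)
  have hsmooth : ContDiffOn ℝ ∞ (fun y => -(M y).inverse (α y.2)) O := fun y hy =>
    (((ContinuousLinearMap.IsInvertible.contDiffAt_map_inverse hy).comp y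
      hM.contDiffAt).clm_apply (hα.comp contDiff_snd).contDiffAt).neg.contDiffWithinAt
  obtain ⟨f, hf, hf_eq⟩ := exists_contDiff_eventually_nhdsSet_eq hO hsmooth
    (isClosed_Icc.prod isClosed_singleton) hKO
  have hev : ∀ᶠ y in 𝓝ˢ (I ×ˢ {x₀}), Function.Injective (M y) ∧ M y (f y) = -α y.2 := by
    filter_upwards [hf_eq, hO.mem_nhdsSet.2 hKO] with y hy ⟨e, he⟩
    rw [hy, ← he, ContinuousLinearMap.inverse_equiv]
    exact ⟨e.injective, by simp⟩
  refine ⟨f, hf, isCompact_Icc.eventually_forall_of_forall_eventually fun s hs => ?_⟩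
  exact (continuous_swap.tendsto (x₀, s)).eventually
    (eventually_nhdsSet_iff_forall.1 hev (s, x₀) ⟨hs, rfl⟩)

theorem exists_moser_field {α : E → E →L[ℝ] ℝ} (hη : ContDiff ℝ ∞ η) (hθ : ContDiff ℝ ∞ θ)
    (hα : ContDiff ℝ ∞ α) (hinj : Function.Injective (η x₀)) (hθx₀ : θ x₀ = 0) (hαx₀ : α x₀ = 0)
    (hα'x₀ : fderiv ℝ α x₀ = 0) (hη_hom : ∀ᶠ x in 𝓝 x₀, IsClosedHomogeneousAt W wt η x)
    (hθ_hom : ∀ᶠ x in 𝓝 x₀, IsClosedHomogeneousAt W wt θ x)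
    (hdα : ∀ᶠ x in 𝓝 x₀, (∀ u v, fderiv ℝ α x u v - fderiv ℝ α x v u = θ x u v) ∧
      ∀ v, fderiv ℝ α x (W x) v + α x (W v) = wt * α x v) :
    ∃ f : ℝ × E → E, ContDiff ℝ ∞ f ∧ (∀ s ∈ I, f (s, x₀) = 0) ∧
      (∀ s ∈ I, ∀ u, fderiv ℝ f (s, x₀) (0, u) = 0) ∧
      ∀ᶠ x in 𝓝 x₀, ∀ s ∈ I, fderiv ℝ f (s, x) (0, W x) = W (f (s, x)) ∧
        ∀ a b, fderiv ℝ (fun y : ℝ × E => η y.2 + y.1 • θ y.2) (s, x) (1, f (s, x)) a b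
          + (η x + s • θ x) (fderiv ℝ f (s, x) (0, a)) b
          + (η x + s • θ x) a (fderiv ℝ f (s, x) (0, b)) = 0 := by
  let M (y : ℝ × E) : E →L[ℝ] E →L[ℝ] ℝ := η y.2 + y.1 • θ y.2
  have hM : ContDiff ℝ ∞ M := by fun_prop
  have hM_slice : ∀ s, Differentiable ℝ fun x => M (s, x) := fun s =>
    (hM.comp (contDiff_prodMk_right s)).differentiable (by simp)
  obtain ⟨f, hf, hf_contr⟩ := exists_contDiff_contraction_eq_neg (x₀ := x₀) hM hα fun s _ => by
    simpa [M, hθx₀] using hinj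
  have hf_slice : ∀ s, Differentiable ℝ fun x => f (s, x) := fun s =>
    (hf.comp (contDiff_prodMk_right s)).differentiable (by simp)
  have hf' : ∀ s x u, fderiv ℝ f (s, x) (0, u) = fderiv ℝ (fun z => f (s, z)) x u := fun s x =>
    fderiv_apply_zero_prodMk (hf.differentiable (by simp) (s, x))
  have hfx₀ : ∀ s ∈ I, f (s, x₀) = 0 ∧ fderiv ℝ (fun z => f (s, z)) x₀ = 0 := fun s hs =>
    eq_zero_and_fderiv_eq_zero_of_contraction (hM_slice s x₀) (hf_contr.self_of_nhds s hs).1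
      (hf_slice s x₀) (hf_contr.mono fun x hx => (hx s hs).2) hαx₀ hα'x₀
  refine ⟨f, hf, fun s hs => (hfx₀ s hs).1, fun s hs u => by rw [hf', (hfx₀ s hs).2]; rfl, ?_⟩
  filter_upwards [hη_hom.eventually_nhds, hθ_hom.eventually_nhds, hdα, hf_contr.eventually_nhds]
    with x hηx hθx ⟨hdαx, hαW⟩ hfx s hs
  have hM_hom : ∀ᶠ z in 𝓝 x, IsClosedHomogeneousAt W wt (fun z => M (s, z)) z := by
    filter_upwards [hηx, hθx] with z hηz hθz
    exact hηz.add_smul (hη.differentiable (by simp) z) (hθ.differentiable (by simp) z) hθz s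
  have hcontr : ∀ᶠ z in 𝓝 x, M (s, z) (f (s, z)) = -α z := hfx.mono fun z hz => (hz s hs).2
  simp only [hf', fderiv_add_smul_prod hη hθ]
  refine ⟨hM_hom.self_of_nhds.fderiv_apply_linear_of_contraction (hM_slice s x)
    (hfx.self_of_nhds s hs).1 (hf_slice s x) hcontr hαW, fun a b => ?_⟩
  have hcartan := IsClosedHomogeneousAt.fderiv_apply_add_add_eq_of_contraction hM_hom
    (hM_slice s x) (hf_slice s x) hcontr a b
  rw [hdαx] at hcartan
  simp only [M, one_smul, add_apply] at hcartan ⊢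
  linear_combination hcartan

theorem exists_equivariant_moser_map {c : E → E} (hη : ContDiff ℝ ∞ η) (hθ : ContDiff ℝ ∞ θ)
    (hinj : Function.Injective (η x₀)) (hθx₀ : θ x₀ = 0)
    (hη_hom : ∀ᶠ x in 𝓝 x₀, IsClosedHomogeneousAt W wt η x)
    (hθ_hom : ∀ᶠ x in 𝓝 x₀, IsClosedHomogeneousAt W wt θ x)
    (hc : ContDiff ℝ ∞ c) (hcx₀ : c x₀ = x₀) (hcW : ∀ᶠ x in 𝓝 x₀, fderiv ℝ c x (W x) = W (c x))
    (hcθ : ∀ᶠ x in 𝓝 x₀, pullback θ c x = 0) {N : Set E} (hN : N ∈ 𝓝 x₀) :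
    ∃ (V : Set E) (φ : E → E), IsOpen V ∧ x₀ ∈ V ∧ ContDiffOn ℝ ∞ φ V ∧
      ∀ x ∈ V, φ x ∈ N ∧ fderiv ℝ φ x (W x) = W (φ x) ∧
        pullback (fun y => η y + θ y) φ x = η x := by
  obtain ⟨α, hα, hαx₀, hα'x₀, hdα⟩ :=
    exists_homogeneous_primitive hθ hc hcx₀ hθx₀ hθ_hom hcW hcθ
  obtain ⟨f, hf, hfx₀, hf'x₀, hf_moser⟩ :=
    exists_moser_field hη hθ hα hinj hθx₀ hαx₀ hα'x₀ hη_hom hθ_hom hdα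
  obtain ⟨V, φ, hx₀, hφ, hφN⟩ := exists_isFlowOn hf hfx₀ hf'x₀ (hf_moser.and hN)
  have hone : (1 : ℝ) ∈ I := right_mem_Icc.2 zero_le_one
  refine ⟨V, φ 1, hφ.isOpen, hx₀, hφ.contDiffOn 1 hone, fun x hx => ⟨(hφN x hx 1 hone).2,
    hφ.fderiv_apply_linear_eq hf hx fun s hs => ((hφN x hx s hs).1 s hs).1, ?_⟩⟩
  have hM : ContDiff ℝ ∞ fun y : ℝ × E => η y.2 + y.1 • θ y.2 := by fun_prop
  ext u v
  simpa [pullback_apply] using hφ.apply_fderiv_one_eq hx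
    (fun s _ => hM.differentiable (by simp) (s, φ s x))
    (fun s hs => ((hφN x hx s hs).1 s hs).2) u v

end Moser

/-! ### Linear normal form -/

section Linear

variable {E : Type*} [NormedAddCommGroup E] [NormedSpace ℝ E]

/-- The exterior product `p ∧ q` of two covectors. -/
noncomputable def wedge (p q : E →L[ℝ] ℝ) : E →L[ℝ] E →L[ℝ] ℝ := p.smulRight q - q.smulRight p

theorem wedge_apply (p q : E →L[ℝ] ℝ) (u v : E) : wedge p q u v = p u * q v - p v * q u := by
  simp only [wedge, sub_apply, ContinuousLinearMap.smulRight_apply, smul_apply, smul_eq_mul]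
  ring

/-- The diagonal operator `(xⱼ) ↦ (wⱼ xⱼ)`. -/
def diag {ι : Type*} (w : ι → ℝ) : (ι → ℝ) →L[ℝ] ι → ℝ :=
  .pi fun j => w j • .proj j

theorem diag_apply {ι : Type*} (w x : ι → ℝ) (j : ι) : diag w x j = w j * x j := rfl

theorem diag_basisFun {ι : Type*} [Finite ι] (w : ι → ℝ) (j : ι) :
    diag w (Pi.basisFun ℝ ι j) = w j • Pi.basisFun ℝ ι j := by
  classical
  ext k
  rcases eq_or_ne k j with rfl | hkj
  · simp [diag_apply]
  · simp [diag_apply, hkj]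

/-- The standard symplectic form `∑ᵢ dpᵢ ∧ dqⁱ`, the coordinate `qⁱ` being indexed by `inl i`
and `pᵢ` by `inr i`. -/
noncomputable def stdForm (r : ℕ) : (Fin r ⊕ Fin r → ℝ) →L[ℝ] (Fin r ⊕ Fin r → ℝ) →L[ℝ] ℝ :=
  ∑ i, wedge (.proj (.inr i)) (.proj (.inl i))

theorem stdForm_apply {r : ℕ} (x y : Fin r ⊕ Fin r → ℝ) :
    stdForm r x y = ∑ i, (x (.inr i) * y (.inl i) - y (.inr i) * x (.inl i)) := by
  simp [stdForm, wedge_apply]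

theorem stdForm_diag_add {r : ℕ} {lam mu : Fin r → ℝ} {wt : ℝ} (h : ∀ i, mu i + lam i = wt)
    (x y : Fin r ⊕ Fin r → ℝ) :
    stdForm r (diag (Sum.elim lam mu) x) y + stdForm r x (diag (Sum.elim lam mu) y) =
      wt * stdForm r x y := by
  simp only [stdForm_apply, diag_apply, Sum.elim_inl, Sum.elim_inr, ← Finset.sum_add_distrib,
    Finset.mul_sum]
  refine Finset.sum_congr rfl fun i _ => ?_
  rw [← h i]
  ring

theorem isClosedHomogeneousAt_stdForm {r : ℕ} {lam mu : Fin r → ℝ} {wt : ℝ}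
    (h : ∀ i, mu i + lam i = wt) (x : Fin r ⊕ Fin r → ℝ) :
    IsClosedHomogeneousAt (diag (Sum.elim lam mu)) wt (fun _ => stdForm r) x where
  alt u v := by
    simp only [stdForm_apply, ← Finset.sum_neg_distrib, neg_sub]
  closed u v z := by simp
  homogeneous u v := by simpa using stdForm_diag_add h u v

variable {W : E →L[ℝ] E} {wt : ℝ} {B : E →L[ℝ] E →L[ℝ] ℝ}

theorem exists_wedge_of_eigenvectors (halt : ∀ u v, B u v = -B v u)
    (hW : ∀ u v, B (W u) v + B u (W v) = wt * B u v) {e f : E} {a b : ℝ} (he : W e = a • e)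
    (hf : W f = b • f) (hef : B e f ≠ 0) :
    ∃ q p : E →L[ℝ] ℝ, b + a = wt ∧ (∀ u, q (W u) = a * q u) ∧ (∀ u, p (W u) = b * p u) ∧
      (B - wedge p q) e = 0 ∧ (B - wedge p q) f = 0 ∧ ∀ z, B z = 0 → (B - wedge p q) z = 0 := by
  have hself : ∀ u, B u u = 0 := fun u => self_eq_neg.1 (halt u u)
  have hBe : ∀ u, a * B e u + B e (W u) = wt * B e u := by simpa [he] using hW e
  have hBf : ∀ u, b * B f u + B f (W u) = wt * B f u := by simpa [hf] using hW f
  have hab : b + a = wt := by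
    have hef' := hBe f
    simp only [hf, map_smul, smul_eq_mul] at hef'
    exact mul_right_cancel₀ hef (by linear_combination hef')
  refine ⟨B f, (B e f)⁻¹ • B e, hab, fun u => ?_, fun u => ?_, ?_, ?_, fun z hz => ?_⟩
  · linear_combination hBf u - B f u * hab
  · simp only [smul_apply, smul_eq_mul]
    linear_combination (B e f)⁻¹ * (hBe u - B e u * hab)
  · ext v
    simp only [sub_apply, wedge_apply, smul_apply, smul_eq_mul, hself, halt f e]
    field_simp
    simp
  · ext v
    simp [wedge_apply, hself, hef]
  · ext v
    simp [wedge_apply, hz, halt _ z]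

variable {ι : Type*} (b : Module.Basis ι ℝ E) {w : ι → ℝ}

theorem exists_apply_basis_ne_zero {S : Finset ι} (halt : ∀ u v, B u v = -B v u)
    (hS : ∀ j ∉ S, B (b j) = 0) (hB : B ≠ 0) : ∃ j ∈ S, ∃ k ∈ S, B (b j) (b k) ≠ 0 := by
  by_contra! hcon
  have hzero : ∀ j k, B (b j) (b k) = 0 := fun j k => by
    by_cases hj : j ∈ S
    · by_cases hk : k ∈ S
      · exact hcon j hj k hk
      · simp [halt (b j), hS k hk]
    · simp [hS j hj]
  refine hB (ContinuousLinearMap.coe_injective (b.ext fun j => ?_))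
  exact ContinuousLinearMap.coe_injective (b.ext fun k => hzero j k)

theorem exists_eq_sum_wedge_of_support (hb : ∀ j, W (b j) = w j • b j) {r : ℕ} {S : Finset ι}
    (hcard : S.card ≤ 2 * r) (halt : ∀ u v, B u v = -B v u)
    (hW : ∀ u v, B (W u) v + B u (W v) = wt * B u v) (hS : ∀ j ∉ S, B (b j) = 0) :
    ∃ (lam mu : Fin r → ℝ) (q p : Fin r → E →L[ℝ] ℝ), (∀ i, mu i + lam i = wt) ∧
      (∀ i u, q i (W u) = lam i * q i u) ∧ (∀ i u, p i (W u) = mu i * p i u) ∧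
      B = ∑ i, wedge (p i) (q i) := by
  classical
  induction r generalizing S B with
  | zero =>
    have hB : B = 0 := by
      by_contra hB
      obtain ⟨j, hj, -⟩ := exists_apply_basis_ne_zero b halt hS hB
      simp [Finset.card_eq_zero.1 (Nat.le_zero.1 hcard)] at hj
    exact ⟨0, 0, 0, 0, by simp, by simp, by simp, by simp [hB]⟩
  | succ r ih =>
    rcases eq_or_ne B 0 with rfl | hB
    · refine ⟨0, fun _ => wt, 0, 0, by simp, by simp, by simp, ?_⟩
      ext u v
      simp [wedge]
    obtain ⟨j, hj, k, hk, hjk⟩ := exists_apply_basis_ne_zero b halt hS hB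
    obtain ⟨q₀, p₀, hsum, hq₀, hp₀, hBj, hBk, hker⟩ :=
      exists_wedge_of_eigenvectors halt hW (hb j) (hb k) hjk
    have hne : j ≠ k := by
      rintro rfl
      exact hjk (self_eq_neg.1 (halt _ _))
    have hcard' : ((S.erase j).erase k).card ≤ 2 * r := by
      rw [Finset.card_erase_of_mem (Finset.mem_erase.2 ⟨hne.symm, hk⟩), Finset.card_erase_of_mem hj]
      lia
    have halt' : ∀ u v, (B - wedge p₀ q₀) u v = -(B - wedge p₀ q₀) v u := fun u v => by
      simp only [sub_apply, wedge_apply, halt u v]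
      ring
    have hW' : ∀ u v, (B - wedge p₀ q₀) (W u) v + (B - wedge p₀ q₀) u (W v) =
        wt * (B - wedge p₀ q₀) u v := fun u v => by
      simp only [sub_apply, wedge_apply, hq₀, hp₀]
      linear_combination hW u v - (p₀ u * q₀ v - p₀ v * q₀ u) * hsum
    have hS' : ∀ i ∉ (S.erase j).erase k, (B - wedge p₀ q₀) (b i) = 0 := by
      intro i hi
      by_cases hiS : i ∈ S
      · obtain rfl | rfl : i = j ∨ i = k := by grind
        exacts [hBj, hBk]
      · exact hker _ (hS i hiS)
    obtain ⟨lam, mu, q, p, hsum', hq, hp, hB'⟩ := ih hcard' halt' hW' hS'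
    refine ⟨Fin.cons (w j) lam, Fin.cons (w k) mu, Fin.cons q₀ q, Fin.cons p₀ p,
      Fin.cons hsum hsum', Fin.cons hq₀ hq, Fin.cons hp₀ hp, ?_⟩
    rw [Fin.sum_univ_succ]
    exact sub_eq_iff_eq_add'.1 hB'

theorem exists_linear_normal_form [Fintype ι] {r : ℕ} (hcard : Fintype.card ι = 2 * r)
    (hb : ∀ j, W (b j) = w j • b j) (halt : ∀ u v, B u v = -B v u)
    (hW : ∀ u v, B (W u) v + B u (W v) = wt * B u v) :
    ∃ (lam mu : Fin r → ℝ) (L : E →L[ℝ] Fin r ⊕ Fin r → ℝ), (∀ i, mu i + lam i = wt) ∧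
      (∀ u, L (W u) = diag (Sum.elim lam mu) (L u)) ∧ ∀ u v, stdForm r (L u) (L v) = B u v := by
  obtain ⟨lam, mu, q, p, hsum, hq, hp, hB⟩ := exists_eq_sum_wedge_of_support b hb
    (S := Finset.univ) hcard.le halt hW (by simp)
  refine ⟨lam, mu, .pi (Sum.elim q p), hsum, fun u => ?_, fun u v => ?_⟩
  · ext (i | i)
    exacts [hq i u, hp i u]
  · simp [stdForm_apply, hB, wedge_apply]

theorem linearIndependent_of_surjective_pi {ι : Type*} [Finite ι] {f : ι → E →L[ℝ] ℝ}
    (hf : Function.Surjective fun u i => f i u) : LinearIndependent ℝ f := by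
  classical
  have := Fintype.ofFinite ι
  refine Fintype.linearIndependent_iff.2 fun g hg i => ?_
  obtain ⟨u, hu⟩ := hf (Pi.single i 1)
  have hfu : ∀ k, f k u = (Pi.single i 1 : ι → ℝ) k := congrFun hu
  simpa [hfu, Pi.single_apply] using DFunLike.congr_fun hg u

end Linear

/-! ### Equivariant maps with prescribed differential -/

section Model

variable {E F : Type*} [NormedAddCommGroup E] [NormedSpace ℝ E] [NormedAddCommGroup F]
  [NormedSpace ℝ F]

theorem contDiff_exp_smul_apply [CompleteSpace F] (A : F →L[ℝ] F) {t : E → ℝ} {g : E → F}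
    (ht : ContDiff ℝ ∞ t) (hg : ContDiff ℝ ∞ g) :
    ContDiff ℝ ∞ fun x => NormedSpace.exp (t x • A) (g x) := by
  have hexp : ContDiff ℝ ∞ (NormedSpace.exp : (F →L[ℝ] F) → F →L[ℝ] F) :=
    contDiff_iff_contDiffAt.2 fun B => (NormedSpace.exp_analytic (𝕂 := ℝ) B).contDiffAt
  exact (hexp.comp (ht.smul contDiff_const)).clm_apply hg

theorem fderiv_exp_smul_apply [CompleteSpace F] (A : F →L[ℝ] F) {t : E → ℝ} {g : E → F} {x : E}
    (ht : DifferentiableAt ℝ t x) (hg : DifferentiableAt ℝ g x) (u : E) :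
    fderiv ℝ (fun y => NormedSpace.exp (t y • A) (g y)) x u =
      fderiv ℝ t x u • A (NormedSpace.exp (t x • A) (g x))
        + NormedSpace.exp (t x • A) (fderiv ℝ g x u) := by
  have hexp : HasFDerivAt (fun y => NormedSpace.exp (t y • A)) _ x :=
    (hasDerivAt_exp_smul_const' A (t x)).hasFDerivAt.comp x ht.hasFDerivAt
  rw [(hexp.clm_apply hg.hasFDerivAt).fderiv]
  simp [add_comm]

variable {W : E →L[ℝ] E} {x₀ : E}

theorem exists_fderiv_apply_linear_eq_one [FiniteDimensional ℝ E] {ℓ : E →L[ℝ] ℝ} {a : ℝ}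
    (hℓ : ∀ x, ℓ (W x) = a * ℓ x) (hx₀ : a * ℓ x₀ ≠ 0) :
    ∃ t : E → ℝ, ContDiff ℝ ∞ t ∧ t x₀ = 0 ∧ ∀ᶠ x in 𝓝 x₀, fderiv ℝ t x (W x) = 1 := by
  have hopen : IsOpen {x | ℓ x ≠ 0} := isOpen_ne_fun ℓ.continuous continuous_const
  have hx₀_mem : x₀ ∈ {x | ℓ x ≠ 0} := right_ne_zero_of_mul hx₀
  have hlog : ContDiffOn ℝ ∞ (fun x => a⁻¹ * (Real.log (ℓ x) - Real.log (ℓ x₀))) {x | ℓ x ≠ 0} :=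
    contDiffOn_const.mul ((ℓ.contDiff.contDiffOn.log fun _ hx => hx).sub contDiffOn_const)
  obtain ⟨t, ht, heq⟩ := exists_contDiff_eventuallyEq hopen hlog hx₀_mem
  refine ⟨t, ht, by simp [heq.eq_of_nhds], ?_⟩
  filter_upwards [heq.fderiv (𝕜 := ℝ), hopen.mem_nhds hx₀_mem] with x hx hℓx
  rw [hx, (((ℓ.hasFDerivAt.log hℓx).sub_const _).const_mul a⁻¹).fderiv]
  simp only [smul_apply, smul_eq_mul, hℓ]
  have ha := left_ne_zero_of_mul hx₀
  have hℓx' : ℓ x ≠ 0 := hℓx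
  field_simp

variable {t : E → ℝ}

theorem exists_equivariant_map_of_fderiv_eq [CompleteSpace E] [CompleteSpace F]
    (ht : ContDiff ℝ ∞ t) (htx₀ : t x₀ = 0) (htW : ∀ᶠ x in 𝓝 x₀, fderiv ℝ t x (W x) = 1)
    {A : F →L[ℝ] F} {L : E →L[ℝ] F} {z : F} (hz : A z = L (W x₀)) :
    ∃ f : E → F, ContDiff ℝ ∞ f ∧ fderiv ℝ f x₀ = L ∧
      ∀ᶠ x in 𝓝 x₀, fderiv ℝ f x (W x) = A (f x) := by
  -- The flow of `W` carries `x` to the slice `t = 0` in time `-t x`; `f` is prescribed there and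
  -- then transported by the flow of `A`.
  let y : E → E := fun x => NormedSpace.exp (-t x • W) x
  have hy : ContDiff ℝ ∞ y := contDiff_exp_smul_apply W ht.neg contDiff_id
  have hy' : ∀ x u, fderiv ℝ y x u = NormedSpace.exp (-t x • W) u - fderiv ℝ t x u • W (y x) :=
    fun x u => by
      have h := fderiv_exp_smul_apply W (t := fun x => -t x) (g := id)
        (ht.neg.differentiable (by simp) x) differentiableAt_id u
      simpa [fderiv_fun_neg, y, neg_add_eq_sub] using h
  let g : E → F := fun x => z - L x₀ + L (y x)
  have hg : ContDiff ℝ ∞ g := contDiff_const.add (L.contDiff.comp hy)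
  have hg' : ∀ x u, fderiv ℝ g x u = L (fderiv ℝ y x u) := fun x u => by
    have h := L.hasFDerivAt.comp x (hy.differentiable (by simp) x).hasFDerivAt
    exact DFunLike.congr_fun (h.const_add (z - L x₀)).fderiv u
  have hf' := fun x => fderiv_exp_smul_apply A (ht.differentiable (by simp) x)
    (hg.differentiable (by simp) x)
  refine ⟨_, contDiff_exp_smul_apply A ht hg, ?_, ?_⟩
  · ext u
    rw [hf', hg', hy']
    simp [htx₀, g, y, hz]
  · filter_upwards [htW] with x hx
    have hcomm : NormedSpace.exp (-t x • W) (W x) = W (y x) :=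
      DFunLike.congr_fun ((Commute.refl W).smul_left (-t x)).exp_left x
    rw [hf', hg', hy', hx, hcomm]
    simp

theorem exists_equivariant_curve [CompleteSpace E] (ht : ContDiff ℝ ∞ t) (htx₀ : t x₀ = 0)
    (htW : ∀ᶠ x in 𝓝 x₀, fderiv ℝ t x (W x) = 1) :
    ∃ c : E → E, ContDiff ℝ ∞ c ∧ c x₀ = x₀ ∧
      (∀ᶠ x in 𝓝 x₀, fderiv ℝ c x (W x) = W (c x)) ∧
      ∀ x, ∃ (l : E → ℝ) (z : E), ∀ u, fderiv ℝ c x u = l u • z := by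
  have hc' : ∀ x u, fderiv ℝ (fun x => NormedSpace.exp (t x • W) x₀) x u =
      fderiv ℝ t x u • W (NormedSpace.exp (t x • W) x₀) := fun x u => by
    simpa using fderiv_exp_smul_apply W (g := fun _ => x₀) (ht.differentiable (by simp) x)
      (differentiableAt_const x₀) u
  refine ⟨_, contDiff_exp_smul_apply W ht contDiff_const, by simp [htx₀], ?_,
    fun x => ⟨_, _, hc' x⟩⟩
  filter_upwards [htW] with x hx
  rw [hc', hx, one_smul]

theorem coord_apply_of_forall_apply_basis {ι : Type*} (b : Module.Basis ι ℝ E) {w : ι → ℝ}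
    (hb : ∀ j, W (b j) = w j • b j) (k : ι) (x : E) : b.coord k (W x) = w k * b.coord k x := by
  have h : b.coord k ∘ₗ (W : E →ₗ[ℝ] E) = w k • b.coord k := b.ext fun j => by
    rcases eq_or_ne j k with rfl | hjk
    · simp [hb]
    · simp [hb, hjk]
  exact DFunLike.congr_fun h x

variable {ι : Type*} [Fintype ι] {r : ℕ} {w : ι → ℝ} {wt : ℝ} {B : E →L[ℝ] E →L[ℝ] ℝ}

theorem exists_equivariant_symplectic_map (b : Module.Basis ι ℝ E)
    (hcard : Fintype.card ι = 2 * r) (hb : ∀ j, W (b j) = w j • b j)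
    (halt : ∀ u v, B u v = -B v u)
    (hhom : W x₀ = 0 → ∀ u v, B (W u) v + B u (W v) = wt * B u v) :
    ∃ (lam mu : Fin r → ℝ) (f : E → Fin r ⊕ Fin r → ℝ) (c : E → E),
      (∀ i, mu i + lam i = wt) ∧ ContDiff ℝ ∞ f ∧ pullback (fun _ => stdForm r) f x₀ = B ∧
      (∀ᶠ x in 𝓝 x₀, fderiv ℝ f x (W x) = diag (Sum.elim lam mu) (f x)) ∧
      ContDiff ℝ ∞ c ∧ c x₀ = x₀ ∧ (∀ᶠ x in 𝓝 x₀, fderiv ℝ c x (W x) = W (c x)) ∧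
      ∀ x, ∃ (l : E → ℝ) (z : E), ∀ u, fderiv ℝ c x u = l u • z := by
  have : FiniteDimensional ℝ E := b.finiteDimensional_of_finite
  by_cases hWx₀ : W x₀ = 0
  · obtain ⟨lam, mu, L, hsum, hL, hLB⟩ := exists_linear_normal_form b hcard hb halt (hhom hWx₀)
    refine ⟨lam, mu, L, fun _ => x₀, hsum, L.contDiff, ?_, by simp [hL], contDiff_const, rfl,
      by simp [hWx₀], fun x => ⟨0, 0, by simp⟩⟩
    ext u v
    simp [pullback_apply, hLB]
  · have hcoord := coord_apply_of_forall_apply_basis b hb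
    obtain ⟨k, hk⟩ : ∃ k, w k * b.coord k x₀ ≠ 0 := by
      by_contra! hzero
      exact hWx₀ (b.ext_elem fun k => by simpa using (hcoord k x₀).trans (hzero k))
    obtain ⟨t, ht, htx₀, htW⟩ := exists_fderiv_apply_linear_eq_one (W := W) (x₀ := x₀)
      (ℓ := (b.coord k).toContinuousLinearMap) (a := w k) (hcoord k) hk
    -- With zero weights the linear normal form asks nothing of `B`: away from the zeros of `W`
    -- the weights of the coordinates are at our disposal.
    obtain ⟨-, -, L, -, -, hLB⟩ := exists_linear_normal_form b (W := 0) (w := 0) (wt := 0) hcard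
      (by simp) halt (by simp)
    obtain ⟨ν, hν, hwν⟩ : ∃ ν : ℝ, ν ≠ 0 ∧ wt - ν ≠ 0 := by
      obtain ⟨ν, hν⟩ := (Set.toFinite {0, wt}).infinite_compl.nonempty
      exact ⟨ν, by grind⟩
    let z : Fin r ⊕ Fin r → ℝ := Sum.elim (fun i => ν⁻¹ * L (W x₀) (.inl i))
      (fun i => (wt - ν)⁻¹ * L (W x₀) (.inr i))
    have hz : diag (Sum.elim (fun _ => ν) fun _ => wt - ν) z = L (W x₀) := by
      ext (i | i) <;> simp [diag_apply, z, hν, hwν]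
    obtain ⟨f, hf, hfx₀, hfW⟩ := exists_equivariant_map_of_fderiv_eq ht htx₀ htW hz
    obtain ⟨c, hc, hcx₀, hcW, hrank⟩ := exists_equivariant_curve ht htx₀ htW
    refine ⟨_, _, f, c, fun _ => sub_add_cancel wt ν, hf, ?_, hfW, hc, hcx₀, hcW, hrank⟩
    ext u v
    simp [pullback_apply, hfx₀, hLB]

end Model

/-! ### Homogeneous Darboux coordinates -/

section Darboux

section Pullback

variable {E F : Type*} [NormedAddCommGroup E] [NormedSpace ℝ E] [NormedAddCommGroup F]
  [NormedSpace ℝ F]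

theorem pullback_eq_zero_of_rank_le_one {θ : F → F →L[ℝ] F →L[ℝ] ℝ} {c : E → F} {x : E}
    (halt : ∀ u v, θ (c x) u v = -θ (c x) v u)
    (hc : ∃ (l : E → ℝ) (z : F), ∀ u, fderiv ℝ c x u = l u • z) : pullback θ c x = 0 := by
  obtain ⟨l, z, hlz⟩ := hc
  ext u v
  simp [pullback_apply, hlz, self_eq_neg.1 (halt z z)]

theorem injective_of_injective_pullback {η : F → F →L[ℝ] F →L[ℝ] ℝ} {f : E → F} {x : E}
    (h : Function.Injective (pullback η f x)) : Function.Injective (fderiv ℝ f x) := by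
  refine fun u v huv => h ?_
  ext z
  simp only [pullback_apply, huv]

end Pullback

variable {ι : Type*} [Fintype ι] {E : Type u} [NormedAddCommGroup E] [NormedSpace ℝ E]
  {r : ℕ} {W : E →L[ℝ] E} {wt : ℝ} {U : Set E}
  {Ω : E → E →L[ℝ] E →L[ℝ] ℝ} {w : ι → ℝ} {x₀ : E}

theorem exists_equivariant_darboux_map_of_contDiff (b : Module.Basis ι ℝ E)
    (hcard : Fintype.card ι = 2 * r) (hb : ∀ j, W (b j) = w j • b j) (hΩ : ContDiff ℝ ∞ Ω)
    (hΩ_hom : ∀ᶠ x in 𝓝 x₀, IsClosedHomogeneousAt W wt Ω x) (hinj : Function.Injective (Ω x₀)) :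
    ∃ (V : Set E) (lam mu : Fin r → ℝ) (f : E → Fin r ⊕ Fin r → ℝ), IsOpen V ∧ x₀ ∈ V ∧
      ContDiffOn ℝ ∞ f V ∧ ∀ x ∈ V, fderiv ℝ f x (W x) = diag (Sum.elim lam mu) (f x) ∧
        pullback (fun _ => stdForm r) f x = Ω x := by
  have : FiniteDimensional ℝ E := b.finiteDimensional_of_finite
  have hx₀_hom := hΩ_hom.self_of_nhds
  obtain ⟨lam, mu, f, c, hsum, hf, hfx₀, hfW, hc, hcx₀, hcW, hrank⟩ :=
    exists_equivariant_symplectic_map (x₀ := x₀) (wt := wt) (B := Ω x₀) b hcard hb hx₀_hom.alt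
      fun hWx₀ u v => by
        simpa [hWx₀] using hx₀_hom.homogeneous u v
  let η : E → E →L[ℝ] E →L[ℝ] ℝ := pullback (fun _ => stdForm r) f
  let θ : E → E →L[ℝ] E →L[ℝ] ℝ := fun x => η x + (-1 : ℝ) • Ω x
  have hη : ContDiff ℝ ∞ η := contDiff_pullback contDiff_const hf
  have hθ : ContDiff ℝ ∞ θ := hη.add (hΩ.const_smul (-1 : ℝ))
  have hθ_hom : ∀ᶠ x in 𝓝 x₀, IsClosedHomogeneousAt W wt θ x := by
    filter_upwards [hΩ_hom, hfW.eventually_nhds] with x hΩx hfx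
    exact .add_smul (hη.differentiable (by simp) x) (hΩ.differentiable (by simp) x)
      (.pullback contDiff_const hf hfx (isClosedHomogeneousAt_stdForm hsum _)) hΩx _
  have hcθ : ∀ᶠ x in 𝓝 x₀, pullback θ c x = 0 := by
    have hc_tendsto : Tendsto c (𝓝 x₀) (𝓝 x₀) := hc.continuous.tendsto' _ _ hcx₀
    filter_upwards [hc_tendsto.eventually hθ_hom] with x hx
    exact pullback_eq_zero_of_rank_le_one hx.alt (hrank x)
  have hθx₀ : θ x₀ = 0 := by simp [θ, η, hfx₀]
  obtain ⟨V, φ, hV, hx₀V, hφ, hV_prop⟩ := exists_equivariant_moser_map hΩ hθ hinj hθx₀ hΩ_hom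
    hθ_hom hc hcx₀ hcW hcθ hfW
  refine ⟨V, lam, mu, f ∘ φ, hV, hx₀V, hf.comp_contDiffOn hφ, fun x hx => ?_⟩
  obtain ⟨hfφ, hφW, hφΩ⟩ := hV_prop x hx
  have hcomp : fderiv ℝ (f ∘ φ) x = (fderiv ℝ f (φ x)).comp (fderiv ℝ φ x) :=
    fderiv_comp x (hf.differentiable (by simp) _)
      ((hφ.contDiffAt (hV.mem_nhds hx)).differentiableAt (by simp))
  refine ⟨?_, ?_⟩
  · rw [hcomp, ContinuousLinearMap.comp_apply, hφW]
    exact hfφ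
  · rw [← hφΩ]
    ext u v
    simp [pullback_apply, hcomp, θ, η]

theorem exists_equivariant_darboux_map (b : Module.Basis ι ℝ E)
    (hcard : Fintype.card ι = 2 * r) (hb : ∀ j, W (b j) = w j • b j) (hU : IsOpen U)
    (hΩ : ContDiffOn ℝ ∞ Ω U) (hΩ_hom : ∀ x ∈ U, IsClosedHomogeneousAt W wt Ω x) (hx₀ : x₀ ∈ U)
    (hinj : Function.Injective (Ω x₀)) :
    ∃ (V : Set E) (lam mu : Fin r → ℝ) (f : E → Fin r ⊕ Fin r → ℝ), IsOpen V ∧ x₀ ∈ V ∧ V ⊆ U ∧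
      ContDiffOn ℝ ∞ f V ∧ ∀ x ∈ V, Function.Injective (Ω x) ∧
        fderiv ℝ f x (W x) = diag (Sum.elim lam mu) (f x) ∧
        pullback (fun _ => stdForm r) f x = Ω x := by
  have : FiniteDimensional ℝ E := b.finiteDimensional_of_finite
  obtain ⟨Ω', hΩ', heq⟩ := exists_contDiff_eventuallyEq hU hΩ hx₀
  have hΩ'_hom : ∀ᶠ x in 𝓝 x₀, IsClosedHomogeneousAt W wt Ω' x := by
    filter_upwards [hU.mem_nhds hx₀, heq.eventuallyEq_nhds] with x hx heqx
    exact (hΩ_hom x hx).congr_of_eventuallyEq heqx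
  have hinj' : ∀ᶠ x in 𝓝 x₀, Function.Injective (Ω x) :=
    (hΩ.continuousOn.continuousAt (hU.mem_nhds hx₀)).eventually
      (ContinuousLinearMap.isOpen_injective.mem_nhds hinj)
  obtain ⟨V, lam, mu, f, hV, hx₀V, hf, hfV⟩ := exists_equivariant_darboux_map_of_contDiff b hcard hb
    hΩ' hΩ'_hom (heq.eq_of_nhds ▸ hinj)
  obtain ⟨N, hN, hN_open, hx₀N⟩ := eventually_nhds_iff.1
    ((hU.eventually_mem hx₀).and (heq.and hinj'))
  refine ⟨V ∩ N, lam, mu, f, hV.inter hN_open, ⟨hx₀V, hx₀N⟩, fun x hx => (hN x hx.2).1,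
    hf.mono inter_subset_left, fun x hx => ?_⟩
  obtain ⟨-, heqx, hinjx⟩ := hN x hx.2
  exact ⟨hinjx, heqx ▸ hfV x hx.1⟩

end Darboux

end HomogeneousDarboux

open HomogeneousDarboux in
theorem stmt_10_general {ι : Type*} [Fintype ι] {E : Type*} [NormedAddCommGroup E]
    [NormedSpace ℝ E] {r : ℕ} {W : E →L[ℝ] E} {w : ι → ℝ} {wt : ℝ}
    {U : Set E} {Ω : E → E →L[ℝ] E →L[ℝ] ℝ} {x₀ : E} (b : Module.Basis ι ℝ E)
    (hcard : Fintype.card ι = 2 * r) (hb : ∀ j, W (b j) = w j • b j) (hU : IsOpen U)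
    (hΩ : ContDiffOn ℝ (⊤ : ℕ∞) Ω U) (hΩ_hom : ∀ x ∈ U, IsClosedHomogeneousAt W wt Ω x)
    (hx₀ : x₀ ∈ U) (hinj : Function.Injective (Ω x₀)) :
    ∃ (V : Set E) (lam mu : Fin r → ℝ) (q p : Fin r → E → ℝ), IsOpen V ∧ x₀ ∈ V ∧ V ⊆ U ∧
      (∀ i, ContDiffOn ℝ (⊤ : ℕ∞) (q i) V) ∧ (∀ i, ContDiffOn ℝ (⊤ : ℕ∞) (p i) V) ∧
      (∀ y ∈ V, LinearIndependent ℝ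
        (Sum.elim (fun i => fderiv ℝ (q i) y) (fun i => fderiv ℝ (p i) y))) ∧
      (∀ i, ∀ y ∈ V, fderiv ℝ (q i) y (W y) = lam i * q i y) ∧
      (∀ i, ∀ y ∈ V, fderiv ℝ (p i) y (W y) = mu i * p i y) ∧
      ∀ y ∈ V, ∀ u v, Ω y u v =
        ∑ i, (fderiv ℝ (p i) y u * fderiv ℝ (q i) y v
          - fderiv ℝ (p i) y v * fderiv ℝ (q i) y u) := by
  have : FiniteDimensional ℝ E := b.finiteDimensional_of_finite
  obtain ⟨V, lam, mu, f, hV, hx₀V, hVU, hf, hfV⟩ :=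
    exists_equivariant_darboux_map b hcard hb hU hΩ hΩ_hom hx₀ hinj
  have hcoord : ∀ k, ContDiffOn ℝ (⊤ : ℕ∞) (fun x => f x k) V :=
    contDiffOn_pi.1 hf
  have hfderiv : ∀ y ∈ V, ∀ k u, fderiv ℝ (fun x => f x k) y u = fderiv ℝ f y u k :=
    fun y hy k u => by
      rw [fderiv_apply ((hf.contDiffAt (hV.mem_nhds hy)).differentiableAt (by simp))]
      rfl
  refine ⟨V, lam, mu, fun i x => f x (.inl i), fun i x => f x (.inr i), hV, hx₀V, hVU,
    fun i => hcoord _, fun i => hcoord _, fun y hy => ?_, fun i y hy => ?_, fun i y hy => ?_,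
    fun y hy u v => ?_⟩
  · obtain ⟨hinjy, -, hpull⟩ := hfV y hy
    have hfinrank : Module.finrank ℝ E = Module.finrank ℝ (Fin r ⊕ Fin r → ℝ) := by
      simp [Module.finrank_eq_card_basis b, hcard, two_mul]
    have hsurj : Function.Surjective (fderiv ℝ f y) :=
      (LinearMap.injective_iff_surjective_of_finrank_eq_finrank hfinrank).1
        (injective_of_injective_pullback (hpull ▸ hinjy))
    refine linearIndependent_of_surjective_pi ?_
    convert hsurj using 2 with u
    ext (i | i) <;> simp [hfderiv y hy]
  · rw [hfderiv y hy, (hfV y hy).2.1, diag_apply, Sum.elim_inl]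
  · rw [hfderiv y hy, (hfV y hy).2.1, diag_apply, Sum.elim_inr]
  · simp only [hfderiv y hy, ← (hfV y hy).2.2, pullback_apply, stdForm_apply]

/-- Darboux theorem for homogeneous symplectic forms (even case): a closed,
pointwise nondegenerate, `∇`-homogeneous 2-form `ω` on an open subset of `ℝ^{2r}` is
`Σᵢ dpᵢ ∧ dqⁱ` in a system of homogeneous Darboux coordinates around any point. -/
theorem stmt_10 (r : ℕ) (w : Fin (2 * r) → ℝ) (wt : ℝ)
    (U : Set (Fin (2 * r) → ℝ)) (hU : IsOpen U)
    (ω : (Fin (2 * r) → ℝ) → (Fin (2 * r) → ℝ) →L[ℝ] (Fin (2 * r) → ℝ) →L[ℝ] ℝ)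
    (hsm : ContDiffOn ℝ (⊤ : ℕ∞) ω U)
    (halt : ∀ x ∈ U, ∀ u v, ω x u v = - ω x v u)
    (hclosed : ∀ x ∈ U, ∀ u v z,
      fderiv ℝ ω x u v z + fderiv ℝ ω x v z u + fderiv ℝ ω x z u v = 0)
    (hnd : ∀ x ∈ U, ∀ v, (∀ u, ω x v u = 0) → v = 0)
    (hhom : ∀ x ∈ U, ∀ u v,
      fderiv ℝ ω x (fun j => w j * x j) u v
        + ω x (fun j => w j * u j) v + ω x u (fun j => w j * v j) = wt * ω x u v)
    (x₀ : Fin (2 * r) → ℝ) (hx₀ : x₀ ∈ U) :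
    ∃ (V : Set (Fin (2 * r) → ℝ)) (lam mu : Fin r → ℝ)
      (q p : Fin r → (Fin (2 * r) → ℝ) → ℝ),
      IsOpen V ∧ x₀ ∈ V ∧ V ⊆ U ∧
      (∀ i, ContDiffOn ℝ (⊤ : ℕ∞) (q i) V) ∧ (∀ i, ContDiffOn ℝ (⊤ : ℕ∞) (p i) V) ∧
      (∀ y ∈ V, LinearIndependent ℝ
        (Sum.elim (fun i => fderiv ℝ (q i) y) (fun i => fderiv ℝ (p i) y) :
          Fin r ⊕ Fin r → (Fin (2 * r) → ℝ) →L[ℝ] ℝ)) ∧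
      (∀ i, ∀ y ∈ V, fderiv ℝ (q i) y (fun j => w j * y j) = lam i * q i y) ∧
      (∀ i, ∀ y ∈ V, fderiv ℝ (p i) y (fun j => w j * y j) = mu i * p i y) ∧
      (∀ y ∈ V, ∀ u v, ω y u v =
        ∑ i, (fderiv ℝ (p i) y u * fderiv ℝ (q i) y v
          - fderiv ℝ (p i) y v * fderiv ℝ (q i) y u)) :=
  stmt_10_general (W := HomogeneousDarboux.diag w) (Pi.basisFun ℝ _) (Fintype.card_fin _)
    (HomogeneousDarboux.diag_basisFun w) hU hsm
    (fun x hx => ⟨halt x hx, hclosed x hx, hhom x hx⟩) hx₀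
    ((injective_iff_map_eq_zero (ω x₀)).2 fun v hv => hnd x₀ hx₀ v (DFunLike.congr_fun hv))
end
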